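/- arXiv:1909.00150 — 2 statements merged into one kernel-verified Lean document; each statement's English description precedes it below -/
import Mathlib

section
/- For every fixed integer δ ≥ 2 there exists a constant C such that for every graph G of minimum degree δ and maximum degree Δ, the inclusion chromatic index of G satisfies χ'_⊂(G) ≤ (1 + 4/(δ−1))·Δ + C. -/
/-!
Fix `δ` and call a vertex *low* if its degree is at most `D = 1680 δ`, and *high* otherwise. The
colours are split into disjoint groups, each with its own task:

* `Y` colours the edges between two low vertices, so that the colours of edges close to each other
  are distinct (`exists_low_colouring`; a number of colours depending on `D` only);
* `Q` puts marks on edges between high vertices which distinguish every high vertex with at least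
  `D` high neighbours from all of its neighbours (`exists_big_marks`; at most
  `Δ / δ + 4 √Δ + O(1)` colours);
* `R` puts one mark on an edge from each other high vertex to a low vertex, to the same effect
  (`exists_small_marks`; a number of colours depending on `D` only);
* all remaining edges receive a *slot*, which is either a single colour or a pair of colours
  `(i, false)`, `(i, true)`.

A high vertex `u` with a low neighbour `v` has a colour missing at `v` because its degree is larger,
and two adjacent high vertices are distinguished by `Q` and `R`. A low vertex `u` with a low
neighbour is handled by the `Y` edges and by the separation of nearby slots. There remain the
*isolated* low vertices `u`, all of whose neighbours are high. Such a `u` has two selected edges,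
which carry both colours of one paired slot `i`. A neighbour `v` sees the slot `i` at most once,
hence misses one of the two colours.

The number of paired slots decides the leading constant. Each isolated low vertex `u` selects a pair
of neighbours, that is, an edge of an auxiliary multigraph on the high vertices, and each edge
between high vertices joins this multigraph with weight `2 / δ`. The uniform fractional choice has
degrees at most `2Δ/δ` and multiplicities at most `2Δ/(δ(δ-1)) + 1`; a Beck–Fiala type rounding
argument (`rounding`) turns it into an honest choice with bounded error (`exists_selection`).
Vizing's theorem for multigraphs (`vizing`) then needs
`2Δ/δ + 2Δ/(δ(δ-1)) + O(1) = 2Δ/(δ-1) + O(1)` paired slots, each costing two colours. The remaining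
edges between high vertices form a graph of maximum degree at most `(1 - 2/δ)Δ + O(1)`, which needs
as many single slots, and all other edges are coloured greedily (`exists_slots`). The total is
`(1 - 2/δ)Δ + 4Δ/(δ-1)` plus the size of `Q` plus `O(1)`, and the gain `2Δ/δ` pays for `Q`
(`index_le`).
-/

/-- The palette of a vertex `v` under an edge colouring `c` of `G`:
the set of colours appearing on edges incident with `v`. -/
def palette {V : Type*} (G : SimpleGraph V) (c : Sym2 V → ℕ) (v : V) : Set ℕ :=
  {n : ℕ | ∃ u : V, G.Adj v u ∧ c s(v, u) = n}

/-- `c` is a proper edge colouring of `G`: adjacent edges receive distinct colours. -/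
def IsProperEdgeColoring {V : Type*} (G : SimpleGraph V) (c : Sym2 V → ℕ) : Prop :=
  ∀ u v w : V, G.Adj u v → G.Adj u w → v ≠ w → c s(u, v) ≠ c s(u, w)

/-- `c` is an inclusion-free colouring of `G`: a proper edge colouring such that
for every edge `uv`, the palette of `u` is not contained in the palette of `v`. -/
def IsInclusionFree {V : Type*} (G : SimpleGraph V) (c : Sym2 V → ℕ) : Prop :=
  IsProperEdgeColoring G c ∧ ∀ u v : V, G.Adj u v → ¬ palette G c u ⊆ palette G c v

/-- The inclusion chromatic index: the least number of colours admitting an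
inclusion-free colouring of `G`. -/
noncomputable def inclusionChromaticIndex {V : Type*} (G : SimpleGraph V) : ℕ :=
  sInf {k : ℕ | ∃ c : Sym2 V → ℕ, IsInclusionFree G c ∧ ∀ e ∈ G.edgeSet, c e < k}

section InclusionColouring
open Finset
open scoped Classical

/-! ### Vizing's theorem for multigraphs -/

/-- In a graph of maximum degree at most two, a component contains at most two vertices of degree
at most one: a connected graph has at least as many edges as vertices, minus one. -/
theorem not_reachable_three_ends {V : Type*} [Fintype V] (H : SimpleGraph V)
    (h2 : ∀ v, H.degree v ≤ 2) {x y z : V} (hxy : x ≠ y) (hxz : x ≠ z) (hyz : y ≠ z)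
    (hx : H.degree x ≤ 1) (hy : H.degree y ≤ 1) (hz : H.degree z ≤ 1)
    (rxy : H.Reachable x y) (rxz : H.Reachable x z) : False := by
  let C := H.connectedComponentMk x
  have hC := C.connected_toSimpleGraph.card_vert_le_card_edgeSet_add_one
  have hsum := C.toSimpleGraph.sum_degrees_eq_twice_card_edges
  have hcard : Nat.card C.toSimpleGraph.edgeSet = C.toSimpleGraph.edgeFinset.card := by
    rw [Nat.card_eq_fintype_card, SimpleGraph.edgeFinset_card]
  rw [hcard, Nat.card_eq_fintype_card] at hC
  let x' : C := ⟨x, rfl⟩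
  let y' : C := ⟨y, SimpleGraph.ConnectedComponent.sound rxy.symm⟩
  let z' : C := ⟨z, SimpleGraph.ConnectedComponent.sound rxz.symm⟩
  have hdeg : ∀ v : C, C.toSimpleGraph.degree v ≤ H.degree v := by
    intro v
    rw [← SimpleGraph.card_neighborFinset_eq_degree, ← SimpleGraph.card_neighborFinset_eq_degree]
    refine Finset.card_le_card_of_injOn (fun w => (w : V)) ?_ (fun a _ b _ h => Subtype.ext h)
    intro w hw
    simp only [SimpleGraph.coe_neighborFinset, SimpleGraph.mem_neighborSet] at hw ⊢
    exact hw
  have key : ∀ v : C, C.toSimpleGraph.degree v + (if v ∈ ({x', y', z'} : Finset C) then 1 else 0) ≤ 2 := by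
    intro v
    have h1 := hdeg v
    have h3 := h2 v
    split_ifs with hv
    · simp only [Finset.mem_insert, Finset.mem_singleton] at hv
      rcases hv with rfl | rfl | rfl
      · have : H.degree (x' : V) ≤ 1 := hx
        omega
      · have : H.degree (y' : V) ≤ 1 := hy
        omega
      · have : H.degree (z' : V) ≤ 1 := hz
        omega
    · omega
  have hs := Finset.sum_le_sum (fun v (_ : v ∈ Finset.univ) => key v)
  rw [Finset.sum_add_distrib, hsum] at hs
  have h3 : ({x', y', z'} : Finset C).card = 3 := by
    rw [Finset.card_eq_three]
    exact ⟨x', y', z', fun h => hxy (congrArg Subtype.val h), fun h => hxz (congrArg Subtype.val h),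
      fun h => hyz (congrArg Subtype.val h), rfl⟩
  simp only [Finset.sum_ite_mem, Finset.univ_inter, Finset.sum_const, h3, Finset.card_univ,
    smul_eq_mul] at hs
  omega

section Vizing
variable {V E κ : Type*}

/-- `c` is a proper edge colouring of the multigraph with edge set `S`. The edges of a multigraph
are elements of an index type `E`, and `ends e` is the pair of ends of `e`. -/
def ProperOn (ends : E → Sym2 V) (S : Finset E) (c : E → κ) : Prop :=
  ∀ e ∈ S, ∀ f ∈ S, e ≠ f → ∀ v, v ∈ ends e → v ∈ ends f → c e ≠ c f

/-- The colour `a` is missing at `v`: no edge of `S` at `v` is coloured `a`. -/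
def Miss (ends : E → Sym2 V) (S : Finset E) (c : E → κ) (v : V) (a : κ) : Prop :=
  ∀ e ∈ S, v ∈ ends e → c e ≠ a

/-- The edge `h` may follow `g` in a Vizing fan at `x`: the colour of `h` is missing at the end
`oth g` of `g` other than `x`. Here `c` colours the edges of `T` except `e₀`. -/
def FanStep (ends : E → Sym2 V) (T : Finset E) (x : V) (oth : E → V) (e₀ : E) (c : E → κ)
    (g h : E) : Prop :=
  h ∈ T ∧ h ≠ e₀ ∧ x ∈ ends h ∧ Miss ends (T.erase e₀) c (oth g) (c h)

/-- Shifting the colours along a fan `e₀ :: l` at `x`, whose last leaf misses a colour `β` that is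
also missing at `x`, frees a colour for `e₀` and gives a proper colouring of `T`. -/
theorem fan_shift (ends : E → Sym2 V) (T : Finset E) (x : V) (oth : E → V)
    (hoth : ∀ e ∈ T, x ∈ ends e → ends e = s(x, oth e)) (β : κ) (n : ℕ) :
    ∀ (l : List E) (e₀ : E) (c : E → κ), l.length ≤ n → e₀ ∈ T → x ∈ ends e₀ →
      ProperOn ends (T.erase e₀) c →
      List.IsChain (FanStep ends T x oth e₀ c) (e₀ :: l) →
      Miss ends (T.erase e₀) c x β →
      Miss ends (T.erase e₀) c (oth ((e₀ :: l).getLast (by simp))) β →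
      ∃ c' : E → κ, ProperOn ends T c' := by
  induction n with
  | zero =>
    intro l e₀ c hl he₀ hx hc hch hβx hβ
    have : l = [] := List.length_eq_zero_iff.mp (by omega)
    subst this
    simp only [List.getLast_singleton] at hβ
    have main : ∀ f ∈ T, f ≠ e₀ → ∀ v, v ∈ ends e₀ → v ∈ ends f → c f ≠ β := by
      intro f hf hfe v hv hvf
      rw [hoth e₀ he₀ hx, Sym2.mem_iff] at hv
      rcases hv with rfl | rfl
      · exact hβx f (Finset.mem_erase.2 ⟨hfe, hf⟩) hvf
      · exact hβ f (Finset.mem_erase.2 ⟨hfe, hf⟩) hvf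
    refine ⟨Function.update c e₀ β, ?_⟩
    intro e he f hf hef v hve hvf
    by_cases h1 : e = e₀
    · subst h1
      rw [Function.update_self, Function.update_of_ne hef.symm]
      exact (main f hf hef.symm v hve hvf).symm
    · rw [Function.update_of_ne h1]
      by_cases h2 : f = e₀
      · subst h2
        rw [Function.update_self]
        exact main e he h1 v hvf hve
      · rw [Function.update_of_ne h2]
        exact hc e (Finset.mem_erase.2 ⟨h1, he⟩) f (Finset.mem_erase.2 ⟨h2, hf⟩) hef v hve hvf
  | succ n ih =>
    intro l e₀ c hl he₀ hx hc hch hβx hβ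
    cases l with
    | nil => exact ih [] e₀ c (by simp) he₀ hx hc hch hβx hβ
    | cons e₁ l =>
      by_cases hmem : e₁ ∈ l
      · obtain ⟨l₁, l₂, rfl⟩ := List.append_of_mem hmem
        refine ih (e₁ :: l₂) e₀ c (by simp at hl ⊢; omega) he₀ hx hc ?_ hβx ?_
        · rw [List.isChain_cons_cons] at hch ⊢
          refine ⟨hch.1, ?_⟩
          have := hch.2
          rw [← List.cons_append] at this
          exact (List.isChain_append.1 this).2.1
        · convert hβ using 2
          simp
      · rw [List.isChain_cons_cons] at hch
        obtain ⟨⟨he₁T, he₁e₀, hxe₁, hm₁⟩, hch⟩ := hch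
        have hxx : ∀ f ∈ T, f ≠ e₀ → f ≠ e₁ → x ∈ ends f → c f ≠ c e₁ := fun f hf h0 h1 hxf =>
          hc f (Finset.mem_erase.2 ⟨h0, hf⟩) e₁ (Finset.mem_erase.2 ⟨he₁e₀, he₁T⟩) h1 x hxf hxe₁
        have main : ∀ f ∈ T, f ≠ e₀ → f ≠ e₁ → ∀ v, v ∈ ends e₀ → v ∈ ends f → c f ≠ c e₁ := by
          intro f hf h0 h1 v hv hvf
          rw [hoth e₀ he₀ hx, Sym2.mem_iff] at hv
          rcases hv with rfl | rfl
          · exact hxx f hf h0 h1 hvf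
          · exact hm₁ f (Finset.mem_erase.2 ⟨h0, hf⟩) hvf
        -- shifted colours are still missing
        have miss' : ∀ v a, a ≠ c e₁ → Miss ends (T.erase e₀) c v a →
            Miss ends (T.erase e₁) (Function.update c e₀ (c e₁)) v a := by
          intro v a ha hm f hf hvf
          by_cases h0 : f = e₀
          · subst h0
            rw [Function.update_self]
            exact ha.symm
          · rw [Function.update_of_ne h0]
            exact hm f (Finset.mem_erase.2 ⟨h0, (Finset.mem_erase.1 hf).2⟩) hvf
        have hβ1 : β ≠ c e₁ := (hβx e₁ (Finset.mem_erase.2 ⟨he₁e₀, he₁T⟩) hxe₁).symm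
        refine ih l e₁ (Function.update c e₀ (c e₁)) (by simp at hl; omega) he₁T hxe₁ ?_ ?_
          (miss' _ _ hβ1 hβx) (miss' _ _ hβ1 ?_)
        · intro e he f hf hef v hve hvf
          obtain ⟨he1, heT⟩ := Finset.mem_erase.1 he
          obtain ⟨hf1, hfT⟩ := Finset.mem_erase.1 hf
          by_cases h1 : e = e₀
          · subst h1
            rw [Function.update_self, Function.update_of_ne hef.symm]
            exact (main f hfT hef.symm hf1 v hve hvf).symm
          · rw [Function.update_of_ne h1]
            by_cases h2 : f = e₀
            · subst h2
              rw [Function.update_self]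
              exact main e heT h1 he1 v hvf hve
            · rw [Function.update_of_ne h2]
              exact hc e (Finset.mem_erase.2 ⟨h1, heT⟩) f (Finset.mem_erase.2 ⟨h2, hfT⟩) hef v hve hvf
        · refine List.IsChain.imp_of_mem_tail_imp ?_ hch
          intro g h hg hh ⟨hhT, hh0, hxh, hmh⟩
          have hh1 : h ≠ e₁ := by
            rintro rfl
            exact hmem hh
          refine ⟨hhT, hh1, hxh, ?_⟩
          rw [Function.update_of_ne hh0]
          exact miss' _ _ (hxx h hhT hh0 hh1 hxh) hmh
        · simpa using hβ

/-- The graph formed by the edges in `S` with colour `α` or `β`. -/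
def kempeGraph (ends : E → Sym2 V) (S : Finset E) (c : E → κ) (α β : κ) : SimpleGraph V where
  Adj u v := u ≠ v ∧ ∃ e ∈ S, ends e = s(u, v) ∧ (c e = α ∨ c e = β)
  symm := ⟨fun u v ⟨h, e, he, hs, hab⟩ => ⟨h.symm, e, he, by rw [hs, Sym2.eq_swap], hab⟩⟩
  loopless := ⟨fun u h => h.1 rfl⟩

theorem kempeGraph_degree_le [Fintype V] (ends : E → Sym2 V) (S : Finset E) (c : E → κ)
    (hc : ProperOn ends S c) (α β : κ) (v : V) (A : Finset κ)
    (hA : ∀ e ∈ S, v ∈ ends e → (c e = α ∨ c e = β) → c e ∈ A) :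
    (kempeGraph ends S c α β).degree v ≤ A.card := by
  have hex : ∀ w, (kempeGraph ends S c α β).Adj v w →
      ∃ e ∈ S, ends e = s(v, w) ∧ (c e = α ∨ c e = β) :=
    fun w hw => hw.2
  rw [← SimpleGraph.card_neighborFinset_eq_degree]
  rcases ((kempeGraph ends S c α β).neighborFinset v).eq_empty_or_nonempty with h | ⟨w, hw⟩
  · rw [h]
    simp
  have hw' : (kempeGraph ends S c α β).Adj v w := by simpa using hw
  have : Nonempty E := ⟨(hex w hw').choose⟩
  choose! ed hed using hex
  refine Finset.card_le_card_of_injOn (fun w => c (ed w)) ?_ ?_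
  · intro w hw
    have hw' : (kempeGraph ends S c α β).Adj v w := by simpa using hw
    obtain ⟨h1, h2, h3⟩ := hed w hw'
    exact hA _ h1 (by rw [h2]; simp) h3
  · intro w hw w' hw' heq
    have hw : (kempeGraph ends S c α β).Adj v w := by simpa using hw
    have hw' : (kempeGraph ends S c α β).Adj v w' := by simpa using hw'
    obtain ⟨h1, h2, h3⟩ := hed w hw
    obtain ⟨h1', h2', h3'⟩ := hed w' hw'
    by_contra hne
    refine hc _ h1 _ h1' ?_ v (by rw [h2]; simp) (by rw [h2']; simp) heq
    intro h
    rw [h, h2'] at h2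
    exact hne (Sym2.congr_right.1 h2).symm

/-- Kempe changes. Here `R` is the relation of lying in the same component of the graph of edges
coloured `α` or `β`; such a component contains at most two vertices missing one of the two colours,
and swapping `α` and `β` on it keeps the colouring proper. -/
theorem kempe_exists [Fintype V] (ends : E → Sym2 V) (S : Finset E) (c : E → κ)
    (hc : ProperOn ends S c) (α β : κ) :
    ∃ R : V → V → Prop, Equivalence R ∧
      (∀ x y z, x ≠ y → x ≠ z → y ≠ z → (Miss ends S c x α ∨ Miss ends S c x β) →
        (Miss ends S c y α ∨ Miss ends S c y β) → (Miss ends S c z α ∨ Miss ends S c z β) →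
        R x y → R x z → False) ∧
      ∀ z, ∃ c' : E → κ, ProperOn ends S c' ∧
        (∀ v, R z v → ∀ e ∈ S, v ∈ ends e → c' e = Equiv.swap α β (c e)) ∧
        (∀ v, ¬ R z v → ∀ e ∈ S, v ∈ ends e → c' e = c e) := by
  set H := kempeGraph ends S c α β
  have hdeg := kempeGraph_degree_le ends S c hc α β
  have hdeg2 : ∀ v, H.degree v ≤ 2 := fun v =>
    (hdeg v {α, β} (by intro e _ _ h; simpa using h)).trans Finset.card_le_two
  have hdeg1 : ∀ v, (Miss ends S c v α ∨ Miss ends S c v β) → H.degree v ≤ 1 := by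
    rintro v (h | h)
    · exact hdeg v {β} (fun e he hv hab => by simpa using hab.resolve_left (h e he hv))
    · exact hdeg v {α} (fun e he hv hab => by simpa using hab.resolve_right (h e he hv))
  refine ⟨H.Reachable, ⟨fun x => SimpleGraph.Reachable.refl x, fun h => h.symm,
    fun h h' => h.trans h'⟩, ?_, ?_⟩
  · intro x y z hxy hxz hyz hx hy hz rxy rxz
    exact not_reachable_three_ends H hdeg2 hxy hxz hyz (hdeg1 x hx) (hdeg1 y hy) (hdeg1 z hz) rxy rxz
  · intro z
    have hK : ∀ e ∈ S, (c e = α ∨ c e = β) → ∀ v ∈ ends e, ∀ w ∈ ends e,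
        H.Reachable z v → H.Reachable z w := by
      intro e he hab v hv w hw hz
      by_cases hvw : v = w
      · exact hvw ▸ hz
      · exact hz.trans (SimpleGraph.Adj.reachable
          ⟨hvw, e, he, ((Sym2.mem_and_mem_iff hvw).1 ⟨hv, hw⟩), hab⟩)
    let c' : E → κ := fun e => if ∃ v ∈ ends e, H.Reachable z v then Equiv.swap α β (c e) else c e
    have h1 : ∀ v, H.Reachable z v → ∀ e ∈ S, v ∈ ends e → c' e = Equiv.swap α β (c e) :=
      fun v hv e he hve => if_pos ⟨v, hve, hv⟩
    have h2 : ∀ v, ¬ H.Reachable z v → ∀ e ∈ S, v ∈ ends e → c' e = c e := by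
      intro v hv e he hve
      by_cases h : ∃ v ∈ ends e, H.Reachable z v
      · obtain ⟨w, hw, hwz⟩ := h
        rw [h1 w hwz e he hw]
        have : ¬ (c e = α ∨ c e = β) := fun hab => hv (hK e he hab w hw v hve hwz)
        push Not at this
        exact Equiv.swap_apply_of_ne_of_ne this.1 this.2
      · exact if_neg h
    refine ⟨c', ?_, h1, h2⟩
    intro e he f hf hef v hve hvf
    by_cases hv : H.Reachable z v
    · rw [h1 v hv e he hve, h1 v hv f hf hvf]
      exact fun h => hc e he f hf hef v hve hvf ((Equiv.swap α β).injective h)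
    · rw [h2 v hv e he hve, h2 v hv f hf hvf]
      exact hc e he f hf hef v hve hvf

/-- A path which reaches `Q` has a first vertex in `Q`. -/
theorem reach_first {A : Type*} {r : A → A → Prop} (Q : A → Prop) {a b : A}
    (h : Relation.ReflTransGen r a b) (hb : Q b) :
    ∃ b', Q b' ∧ Relation.ReflTransGen (fun g h => r g h ∧ ¬ Q g) a b' := by
  induction h using Relation.ReflTransGen.head_induction_on with
  | refl => exact ⟨b, hb, .refl⟩
  | head hab hbc ih =>
    rename_i u w
    by_cases hu : Q u
    · exact ⟨u, hu, .refl⟩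
    · obtain ⟨b', hb', hr⟩ := ih
      exact ⟨b', hb', .head ⟨hab, hu⟩ hr⟩

/-- If `T` has no proper colouring, then no leaf of the fan shares a missing colour with its
centre `x`. -/
theorem fan_no_common (ends : E → Sym2 V) (T : Finset E) (x : V) (oth : E → V)
    (hoth : ∀ e ∈ T, x ∈ ends e → ends e = s(x, oth e)) (e₀ : E) (he₀ : e₀ ∈ T)
    (hx₀ : x ∈ ends e₀) (hno : ¬ ∃ c' : E → κ, ProperOn ends T c') (c : E → κ)
    (hc : ProperOn ends (T.erase e₀) c) {g : E}
    (hg : Relation.ReflTransGen (FanStep ends T x oth e₀ c) e₀ g) {β : κ}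
    (h1 : Miss ends (T.erase e₀) c x β) (h2 : Miss ends (T.erase e₀) c (oth g) β) : False := by
  obtain ⟨l, hl, hlast⟩ := List.exists_isChain_cons_of_relationReflTransGen hg
  exact hno (fan_shift ends T x oth hoth β l.length l e₀ c le_rfl he₀ hx₀ hc hl h1
    (by rw [hlast]; exact h2))

/-- If `T` has no proper colouring, then distinct leaves of the fan have disjoint sets of missing
colours. If both leaves missed `α`, a Kempe change at one that is not in the `αβ`-component of `x`
would make it miss the colour `β` missing at `x`, contradicting `fan_no_common`. The leaves have to
be taken as the first ones along the fan, so that the change does not destroy the fan before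
them. -/
theorem fan_disjoint [Fintype V] (ends : E → Sym2 V) (T : Finset E)
    (hnd : ∀ e ∈ T, ¬ (ends e).IsDiag) (x : V) (oth : E → V)
    (hoth : ∀ e ∈ T, x ∈ ends e → ends e = s(x, oth e)) (e₀ : E) (he₀ : e₀ ∈ T)
    (hx₀ : x ∈ ends e₀) (hno : ¬ ∃ c' : E → κ, ProperOn ends T c') (c : E → κ)
    (hc : ProperOn ends (T.erase e₀) c) {g g' : E}
    (hg : Relation.ReflTransGen (FanStep ends T x oth e₀ c) e₀ g)
    (hg' : Relation.ReflTransGen (FanStep ends T x oth e₀ c) e₀ g') {α β : κ}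
    (hβ : Miss ends (T.erase e₀) c x β) (h1 : Miss ends (T.erase e₀) c (oth g) α)
    (h2 : Miss ends (T.erase e₀) c (oth g') α) (hne : oth g ≠ oth g') : False := by
  obtain ⟨R, hR, h3, hsw⟩ := kempe_exists ends (T.erase e₀) c hc α β
  have hFmem : ∀ g, Relation.ReflTransGen (FanStep ends T x oth e₀ c) e₀ g → g ∈ T ∧ x ∈ ends g := by
    intro g hg
    rcases hg.cases_tail with h | ⟨b, _, hb⟩
    · exact h ▸ ⟨he₀, hx₀⟩
    · exact ⟨hb.1, hb.2.2.1⟩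
  have hxne : ∀ g, Relation.ReflTransGen (FanStep ends T x oth e₀ c) e₀ g → x ≠ oth g := by
    intro g hg h
    obtain ⟨hgT, hxg⟩ := hFmem g hg
    have := hnd g hgT
    rw [hoth g hgT hxg] at this
    exact this (by simpa using h)
  have key : ∀ (Q : E → Prop) (f : E),
      Relation.ReflTransGen (fun g h => FanStep ends T x oth e₀ c g h ∧ ¬ Q g) e₀ f →
      Miss ends (T.erase e₀) c (oth f) α → ¬ R (oth f) x →
      (∀ h, ¬ Q h → Miss ends (T.erase e₀) c (oth h) α → ¬ R (oth f) (oth h)) → False := by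
    intro Q f hf hm hRx hQ
    obtain ⟨c', hc', hin, hout⟩ := hsw (oth f)
    refine fan_no_common ends T x oth hoth e₀ he₀ hx₀ hno c' hc' (g := f) (β := β)
      (Relation.ReflTransGen.mono ?_ _ _ hf) ?_ ?_
    · rintro g h ⟨⟨hhT, hh0, hxh, hmh⟩, hQg⟩
      have hhS : h ∈ T.erase e₀ := Finset.mem_erase.2 ⟨hh0, hhT⟩
      refine ⟨hhT, hh0, hxh, ?_⟩
      rw [hout x hRx h hhS hxh]
      intro e he hge
      by_cases hRg : R (oth f) (oth g)
      · rw [hin _ hRg e he hge]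
        intro heq
        have hα : c h ≠ α := by
          intro h'
          rw [h'] at hmh
          exact hQ g hQg hmh hRg
        have hβ' : c h ≠ β := hβ h hhS hxh
        have : c e = c h := by
          apply (Equiv.swap α β).injective
          rw [heq, Equiv.swap_apply_of_ne_of_ne hα hβ']
        exact hmh e he hge this
      · rw [hout _ hRg e he hge]
        exact hmh e he hge
    · intro e he hxe
      rw [hout x hRx e he hxe]
      exact hβ e he hxe
    · intro e he hfe
      rw [hin _ (hR.refl _) e he hfe]
      intro heq
      refine hm e he hfe ?_
      apply (Equiv.swap α β).injective
      rw [heq, Equiv.swap_apply_left]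
  obtain ⟨f, hfα, hf⟩ := reach_first (fun h => Miss ends (T.erase e₀) c (oth h) α) hg h1
  have hf' := Relation.ReflTransGen.mono (p := FanStep ends T x oth e₀ c) (fun _ _ h => h.1) _ _ hf
  have hRfx : R (oth f) x := by
    by_contra hR'
    exact key _ f hf hfα hR' (fun h hQ hm => absurd hm hQ)
  obtain ⟨f₂, ⟨hf₂α, hf₂ne⟩, hf₂⟩ : ∃ b', (Miss ends (T.erase e₀) c (oth b') α ∧ oth b' ≠ oth f) ∧
      Relation.ReflTransGen (fun g h => FanStep ends T x oth e₀ c g h ∧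
        ¬ (Miss ends (T.erase e₀) c (oth g) α ∧ oth g ≠ oth f)) e₀ b' := by
    by_cases hgf : oth g = oth f
    · exact reach_first (fun h => Miss ends (T.erase e₀) c (oth h) α ∧ oth h ≠ oth f) hg'
        ⟨h2, fun h => hne (hgf.trans h.symm)⟩
    · exact reach_first (fun h => Miss ends (T.erase e₀) c (oth h) α ∧ oth h ≠ oth f) hg
        ⟨h1, hgf⟩
  have hf₂' := Relation.ReflTransGen.mono (p := FanStep ends T x oth e₀ c) (fun _ _ h => h.1) _ _ hf₂
  have hRx2 : ¬ R (oth f₂) x := fun h =>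
    h3 x (oth f) (oth f₂) (hxne f hf') (hxne f₂ hf₂') hf₂ne.symm (.inr hβ) (.inl hfα) (.inl hf₂α)
      (hR.symm hRfx) (hR.symm h)
  refine key _ f₂ hf₂ hf₂α hRx2 ?_
  intro h hQ hm hRh
  have : oth h = oth f := by
    by_contra hne'
    exact hQ ⟨hm, hne'⟩
  rw [this] at hRh
  exact hRx2 (hR.trans hRh hRfx)

/-- Vizing's theorem for multigraphs: maximum degree `d` and multiplicity at most `μ` imply that
`d + μ` colours suffice. If the edge `e₀` cannot be coloured, the leaves of the maximal fan at an
end of `e₀` have disjoint sets of at least `μ` missing colours, all of which occur on fan edges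
other than `e₀`; this gives too many fan edges. -/
theorem vizing [Fintype V] [Fintype κ] [Nonempty κ] (ends : E → Sym2 V) (d μ : ℕ) (hκ : d + μ ≤ Fintype.card κ)
    (T : Finset E) (hnd : ∀ e ∈ T, ¬ (ends e).IsDiag)
    (hd : ∀ v, (T.filter fun e => v ∈ ends e).card ≤ d)
    (hμ : ∀ p, (T.filter fun e => ends e = p).card ≤ μ) :
    ∃ c : E → κ, ProperOn ends T c := by
  induction T using Finset.induction_on with
  | empty =>
    exact ⟨fun _ => Classical.arbitrary κ, by simp [ProperOn]⟩
  | insert e₀ S he₀ ih =>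
    obtain ⟨c, hc⟩ := ih (fun e he => hnd e (mem_insert_of_mem he))
      (fun v => (card_le_card (filter_subset_filter _ (subset_insert _ _))).trans (hd v))
      (fun v => (card_le_card (filter_subset_filter _ (subset_insert _ _))).trans (hμ v))
    by_contra hno
    set T := insert e₀ S with hT
    have hTe : T.erase e₀ = S := erase_insert he₀
    have heT : e₀ ∈ T := mem_insert_self _ _
    obtain ⟨x, hx₀⟩ : ∃ x, x ∈ ends e₀ := by
      induction ends e₀ with | _ a b => exact ⟨a, by simp⟩
    have : Nonempty V := ⟨x⟩
    have hex : ∀ e, x ∈ ends e → ∃ y, ends e = s(x, y) := fun e h => h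
    choose! oth hoth using hex
    have hoth' : ∀ e ∈ T, x ∈ ends e → ends e = s(x, oth e) := fun e _ => hoth e
    rw [← hTe] at hc
    let M : V → Finset κ := fun v => univ.filter fun a => Miss ends (T.erase e₀) c v a
    have hM : ∀ v, μ ≤ (M v).card := by
      intro v
      have h1 : (univ \ M v) ⊆ (T.filter fun e => v ∈ ends e).image c := by
        intro a ha
        have ha' : ¬ Miss ends (T.erase e₀) c v a := fun h =>
          (mem_sdiff.1 ha).2 (mem_filter.2 ⟨mem_univ _, h⟩)
        simp only [Miss, not_forall, not_not] at ha'
        obtain ⟨e, he, hv, rfl⟩ := ha'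
        exact mem_image_of_mem _ (mem_filter.2 ⟨(mem_erase.1 he).2, hv⟩)
      have h2 := (card_le_card h1).trans (card_image_le.trans (hd v))
      have h3 := card_sdiff_add_card_eq_card (subset_univ (M v))
      rw [card_univ] at h3
      omega
    have hμ1 : 1 ≤ μ := by
      refine le_trans ?_ (hμ (ends e₀))
      exact card_pos.2 ⟨e₀, mem_filter.2 ⟨heT, rfl⟩⟩
    obtain ⟨β, hβ⟩ := card_pos.1 (lt_of_lt_of_le hμ1 (hM x))
    have hβ : Miss ends (T.erase e₀) c x β := (mem_filter.1 hβ).2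
    let F := T.filter fun g => Relation.ReflTransGen (FanStep ends T x oth e₀ c) e₀ g
    let Y := F.image oth
    have heF : e₀ ∈ F := mem_filter.2 ⟨heT, .refl⟩
    have hFx : ∀ g ∈ F, x ∈ ends g := by
      intro g hg
      rcases (mem_filter.1 hg).2.cases_tail with h | ⟨b, _, hb⟩
      · exact h ▸ hx₀
      · exact hb.2.2.1
    have hdisj : (Y : Set V).PairwiseDisjoint M := by
      intro y hy y' hy' hne
      rw [Function.onFun, Finset.disjoint_left]
      intro a ha ha'
      obtain ⟨g, hg, rfl⟩ := mem_image.1 hy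
      obtain ⟨g', hg', rfl⟩ := mem_image.1 hy'
      exact fan_disjoint ends T hnd x oth hoth' e₀ heT hx₀ hno c hc (mem_filter.1 hg).2
        (mem_filter.1 hg').2 hβ (mem_filter.1 ha).2 (mem_filter.1 ha').2 hne
    have hsub : Y.biUnion M ⊆ (F.erase e₀).image c := by
      intro a ha
      obtain ⟨y, hy, ha⟩ := mem_biUnion.1 ha
      obtain ⟨g, hg, rfl⟩ := mem_image.1 hy
      have ha := (mem_filter.1 ha).2
      have : ¬ Miss ends (T.erase e₀) c x a := fun h =>
        fan_no_common ends T x oth hoth' e₀ heT hx₀ hno c hc (mem_filter.1 hg).2 h ha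
      simp only [Miss, not_forall, not_not] at this
      obtain ⟨h, hh, hxh, rfl⟩ := this
      obtain ⟨hh0, hhT⟩ := mem_erase.1 hh
      exact mem_image_of_mem _ (mem_erase.2 ⟨hh0, mem_filter.2 ⟨hhT,
        (mem_filter.1 hg).2.tail ⟨hhT, hh0, hxh, ha⟩⟩⟩)
    have h1 : Y.card * μ ≤ (Y.biUnion M).card := by
      rw [card_biUnion hdisj]
      exact card_nsmul_le_sum Y _ μ (fun y _ => hM y)
    have h2 : (Y.biUnion M).card ≤ F.card - 1 := by
      rw [← card_erase_of_mem heF]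
      exact (card_le_card hsub).trans card_image_le
    have h3 : F.card ≤ μ * Y.card := by
      refine card_le_mul_card_image F μ ?_
      intro y _
      refine le_trans (card_le_card ?_) (hμ s(x, y))
      intro g hg
      obtain ⟨hgF, rfl⟩ := mem_filter.1 hg
      exact mem_filter.2 ⟨(mem_filter.1 hgF).1, hoth g (hFx g hgF)⟩
    have h4 : 0 < F.card := card_pos.2 ⟨e₀, heF⟩
    rw [mul_comm] at h3
    omega
end Vizing

/-! ### Rounding fractional choices -/

section Rounding
variable {I Ω K : Type*} [Fintype I] [Fintype Ω] [Fintype K]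

/-- A homogeneous linear system with more variables than equations has a nonzero solution. -/
theorem exists_kernel_direction {P J : Type*} [Fintype P] [Fintype J] (M : J → P → Prop)
    (h : Fintype.card J < Fintype.card P) :
    ∃ z : P → ℝ, z ≠ 0 ∧ ∀ j, ∑ p, (if M j p then z p else 0) = 0 := by
  let N : Matrix J P ℝ := fun j p => if M j p then 1 else 0
  have hk : LinearMap.ker N.mulVecLin ≠ ⊥ := by
    apply LinearMap.ker_ne_bot_of_finrank_lt
    simpa using h
  obtain ⟨z, hz, hz0⟩ := Submodule.exists_mem_ne_zero_of_ne_bot hk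
  refine ⟨z, hz0, fun j => ?_⟩
  have := congrFun (LinearMap.mem_ker.1 hz) j
  rw [Matrix.mulVecLin_apply] at this
  simpa [N, Matrix.mulVec, dotProduct] using this

/-- The pairs (agent, option) whose weight is strictly between `0` and `1`. -/
noncomputable def fracSet (y : I × Ω → ℝ) : Finset (I × Ω) := univ.filter fun p => 0 < y p ∧ y p < 1

/-- A direction of movement for the fractional weights which keeps the total of each agent and the
weight of every constraint set containing more than `2 * r` fractional pairs. An agent with a
fractional weight has at least two of them, so that fewer equations than variables are imposed. -/
theorem rounding_direction (y : I × Ω → ℝ) (h0 : ∀ p, 0 ≤ y p) (h1 : ∀ i, ∑ o, y (i, o) = 1)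
    (A : K → I × Ω → Prop) (r : ℕ)
    (hr : ∀ p, (univ.filter fun k => A k p).card ≤ r) (hne : (fracSet y).Nonempty) :
    ∃ z : I × Ω → ℝ, z ≠ 0 ∧ (∀ p, p ∉ fracSet y → z p = 0) ∧ (∀ i, ∑ o, z (i, o) = 0) ∧
      ∀ k, 2 * r < ((fracSet y).filter fun p => A k p).card →
        ∑ p, (if A k p then z p else 0) = 0 := by
  set F := fracSet y with hF
  let Ag : Finset I := F.image Prod.fst
  let Lv : Finset K := univ.filter fun k => 2 * r < (F.filter fun p => A k p).card
  have hle1 : ∀ p, y p ≤ 1 := fun p => by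
    rw [← h1 p.1]
    exact single_le_sum (f := fun o => y (p.1, o)) (fun o _ => h0 _) (mem_univ p.2)
  have hAg : Ag.card * 2 ≤ F.card := by
    have hm : (F : Set (I × Ω)).MapsTo Prod.fst (Ag : Set I) := fun p hp =>
      mem_coe.2 (mem_image_of_mem _ (mem_coe.1 hp))
    rw [card_eq_sum_card_fiberwise hm]
    refine card_nsmul_le_sum Ag _ 2 (fun i hi => ?_)
    obtain ⟨⟨i', o⟩, hp, rfl⟩ := mem_image.1 hi
    simp only [hF, fracSet, mem_filter, mem_univ, true_and] at hp
    have hs : ∑ o' ∈ univ.erase o, y (i', o') = 1 - y (i', o) := by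
      rw [← h1 i', ← add_sum_erase univ _ (mem_univ o)]
      ring
    obtain ⟨o', ho', hpos⟩ : ∃ o' ∈ univ.erase o, 0 < y (i', o') := by
      apply exists_lt_of_sum_lt (f := fun _ => (0 : ℝ))
      rw [hs]
      simp only [sum_const_zero]
      linarith
    have hoo : o' ≠ o := (mem_erase.1 ho').1
    have hlt : y (i', o') < 1 := by
      have : y (i', o') ≤ ∑ o' ∈ univ.erase o, y (i', o') :=
        single_le_sum (f := fun o' => y (i', o')) (fun _ _ => h0 _) ho'
      linarith
    have hsub : ({(i', o), (i', o')} : Finset (I × Ω)) ⊆ F.filter fun p => p.1 = i' := by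
      intro p hp
      simp only [mem_insert, mem_singleton] at hp
      rcases hp with rfl | rfl <;> simp [hF, fracSet, hp, hpos, hlt]
    refine le_trans ?_ (card_le_card hsub)
    rw [card_pair]
    intro h
    exact hoo (congrArg Prod.snd h).symm
  have hLv : Lv.card * (2 * r + 1) ≤ F.card * r := by
    calc Lv.card * (2 * r + 1) ≤ ∑ k ∈ Lv, (F.filter fun p => A k p).card :=
          card_nsmul_le_sum Lv (fun k => (F.filter fun p => A k p).card) (2 * r + 1)
            (fun k hk => (mem_filter.1 hk).2)
      _ ≤ ∑ k, (F.filter fun p => A k p).card :=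
          sum_le_sum_of_subset (subset_univ _)
      _ = ∑ p ∈ F, (univ.filter fun k => A k p).card :=
          (sum_card_bipartiteAbove_eq_sum_card_bipartiteBelow (fun k p => A k p))
      _ ≤ F.card * r := sum_le_card_nsmul F _ r (fun p _ => hr p)
  have hFpos : 0 < F.card := card_pos.2 hne
  have hcard : Fintype.card (Ag ⊕ Lv) < Fintype.card F := by
    simp only [Fintype.card_sum, Fintype.card_coe]
    have : 2 * Lv.card < F.card := by nlinarith
    omega
  obtain ⟨z, hz0, hz⟩ := exists_kernel_direction (P := F)
    (fun j p => Sum.elim (fun i : Ag => p.1.1 = i) (fun k : Lv => A k p.1) j) hcard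
  let Z : I × Ω → ℝ := fun p => if h : p ∈ F then z ⟨p, h⟩ else 0
  have hZ : ∀ p : F, Z p = z p := fun p => by simp [Z]
  have hZ0 : ∀ p, p ∉ F → Z p = 0 := fun p hp => by simp [Z, hp]
  have hsumZ : ∀ B : I × Ω → Prop, ∑ p, (if B p then Z p else 0) =
      ∑ p : F, (if B p.1 then z p else 0) := by
    intro B
    rw [← sum_subset (subset_univ F) (fun p _ hp => by simp [hZ0 p hp]), ← sum_coe_sort F]
    exact sum_congr rfl (fun p _ => by rw [hZ])
  refine ⟨Z, ?_, hZ0, ?_, ?_⟩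
  · intro h
    apply hz0
    funext p
    rw [← hZ, h]
    rfl
  · intro i
    have hi : ∑ o, Z (i, o) = ∑ p, (if p.1 = i then Z p else 0) := by
      rw [Fintype.sum_prod_type, sum_eq_single i]
      · simp
      · intro b _ hb
        simp [hb]
      · simp
    by_cases hiA : i ∈ Ag
    · rw [hi, hsumZ]
      exact hz (.inl ⟨i, hiA⟩)
    · refine sum_eq_zero (fun o _ => hZ0 _ (fun h => hiA ?_))
      exact mem_image_of_mem Prod.fst h
  · intro k hk
    rw [hsumZ]
    exact hz (.inr ⟨k, mem_filter.2 ⟨mem_univ _, hk⟩⟩)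

/-- The rounding statement, by induction on the number of fractional weights: moving along
`rounding_direction` until a weight becomes `0` makes one more weight integral, and a constraint
set which has at most `2 * r` fractional pairs is never off by more than `2 * r`. -/
theorem rounding_aux (A : K → I × Ω → Prop) (r : ℕ)
    (hr : ∀ p, (univ.filter fun k => A k p).card ≤ r) (n : ℕ) :
    ∀ y : I × Ω → ℝ, (∀ p, 0 ≤ y p) → (∀ i, ∑ o, y (i, o) = 1) → (fracSet y).card = n →
    ∃ f : I → Ω, (∀ i, 0 < y (i, f i)) ∧ ∀ k,
      ((univ.filter fun i => A k (i, f i)).card : ℝ) ≤ ∑ p, (if A k p then y p else 0) + 2 * r := by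
  induction n using Nat.strong_induction_on with
  | _ n ih =>
  intro y h0 h1 hn
  -- a set with few fractional coordinates causes a small error whatever the outcome is
  have dead : ∀ f : I → Ω, (∀ i, 0 < y (i, f i)) → ∀ k,
      ((fracSet y).filter fun p => A k p).card ≤ 2 * r →
      ((univ.filter fun i => A k (i, f i)).card : ℝ) ≤
        ∑ p, (if A k p then y p else 0) + 2 * r := by
    intro f hf k hk
    have hle : ∀ p, (if A k p ∧ 0 < y p then (1 : ℝ) else 0) ≤
        (if A k p then y p else 0) + (if A k p ∧ p ∈ fracSet y then 1 else 0) := by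
      intro p
      by_cases ha : A k p
      · by_cases hp : 0 < y p
        · by_cases hp1 : y p < 1
          · have : p ∈ fracSet y := by simp [fracSet, hp, hp1]
            simp [ha, hp, this, hp.le]
          · simp only [ha, hp, true_and, and_self, if_true]
            push Not at hp1
            split_ifs <;> linarith
        · simp only [ha, hp, and_false, if_false, if_true, true_and]
          have := h0 p
          split_ifs <;> linarith
      · simp [ha]
    have hs := sum_le_sum (fun p (_ : p ∈ (univ : Finset (I × Ω))) => hle p)
    rw [sum_add_distrib] at hs
    simp only [sum_boole] at hs
    have e1 : (univ.filter fun i => A k (i, f i)).card ≤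
        (univ.filter fun p : I × Ω => A k p ∧ 0 < y p).card := by
      refine card_le_card_of_injOn (fun i => (i, f i)) ?_ ?_
      · intro i hi
        have := (mem_filter.1 (mem_coe.1 hi)).2
        simp [this, hf i]
      · intro i _ j _ h
        exact congrArg Prod.fst h
    have e2 : (univ.filter fun p : I × Ω => A k p ∧ p ∈ fracSet y).card ≤ 2 * r := by
      refine le_trans (card_le_card ?_) hk
      intro p hp
      have := (mem_filter.1 hp).2
      exact mem_filter.2 ⟨this.2, this.1⟩
    have e1' : ((univ.filter fun i => A k (i, f i)).card : ℝ) ≤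
        (univ.filter fun p : I × Ω => A k p ∧ 0 < y p).card := by exact_mod_cast e1
    have e2' : ((univ.filter fun p : I × Ω => A k p ∧ p ∈ fracSet y).card : ℝ) ≤ 2 * r := by
      exact_mod_cast e2
    linarith
  by_cases hne : (fracSet y).Nonempty
  · obtain ⟨z, hz0, hzF, hzs, hzA⟩ := rounding_direction y h0 h1 A r hr hne
    have hle1 : ∀ p, y p ≤ 1 := fun p => by
      rw [← h1 p.1]
      exact single_le_sum (f := fun o => y (p.1, o)) (fun o _ => h0 _) (mem_univ p.2)
    have hneg : (univ.filter fun p => z p < 0).Nonempty := by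
      by_contra hcon
      have hpos : ∀ p, 0 ≤ z p := by
        intro p
        by_contra hp
        exact hcon ⟨p, by simpa using hp⟩
      apply hz0
      funext ⟨i, o⟩
      exact (sum_eq_zero_iff_of_nonneg (fun o _ => hpos (i, o))).1 (hzs i) o (mem_univ _)
    obtain ⟨q, hq, hmin⟩ := exists_min_image _ (fun p => y p / (-z p)) hneg
    have hq : z q < 0 := (mem_filter.1 hq).2
    set t := y q / (-z q) with ht
    have ht0 : 0 ≤ t := div_nonneg (h0 q) (by linarith)
    let y' : I × Ω → ℝ := fun p => y p + t * z p
    have hy'0 : ∀ p, 0 ≤ y' p := by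
      intro p
      by_cases hp : z p < 0
      · have := hmin p (by simpa using hp)
        rw [le_div_iff₀ (by linarith)] at this
        change 0 ≤ y p + t * z p
        linarith
      · push Not at hp
        have := h0 p
        change 0 ≤ y p + t * z p
        positivity
    have hy's : ∀ i, ∑ o, y' (i, o) = 1 := by
      intro i
      simp only [y', sum_add_distrib, ← mul_sum, hzs, h1]
      simp
    have hsame : ∀ p, p ∉ fracSet y → y' p = y p := by
      intro p hp
      simp [y', hzF p hp]
    have hq' : y' q = 0 := by
      change y q + t * z q = 0
      have hq0 : z q ≠ 0 := hq.ne
      rw [ht, div_neg, neg_mul, div_mul_cancel₀ _ hq0]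
      ring
    have hss : fracSet y' ⊂ fracSet y := by
      rw [ssubset_iff_of_subset]
      · refine ⟨q, ?_, ?_⟩
        · by_contra h
          rw [hzF q h] at hq
          exact lt_irrefl _ hq
        · simp [fracSet, hq']
      · intro p hp
        by_contra h
        have h' := hsame p h
        simp only [fracSet, mem_filter, mem_univ, true_and] at hp h
        rw [h'] at hp
        exact h hp
    obtain ⟨f, hf, hfk⟩ := ih _ (hn ▸ card_lt_card hss) y' hy'0 hy's rfl
    have hf' : ∀ i, 0 < y (i, f i) := by
      intro i
      rcases (h0 (i, f i)).lt_or_eq with h | h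
      · exact h
      · have := hsame (i, f i) (by simp [fracSet, ← h])
        have h3 := hf i
        rw [this, ← h] at h3
        exact absurd h3 (lt_irrefl _)
    refine ⟨f, hf', fun k => ?_⟩
    by_cases hk : 2 * r < ((fracSet y).filter fun p => A k p).card
    · have hsum : ∑ p, (if A k p then y' p else 0) = ∑ p, (if A k p then y p else 0) := by
        have e : ∀ p, (if A k p then y' p else 0) =
            (if A k p then y p else 0) + t * (if A k p then z p else 0) := by
          intro p
          split_ifs <;> simp [y']
        simp only [e, sum_add_distrib, ← mul_sum, hzA k hk]
        simp
      rw [← hsum]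
      exact hfk k
    · exact dead f hf' k (not_lt.1 hk)
  · have hex : ∀ i, ∃ o, 0 < y (i, o) := by
      intro i
      obtain ⟨o, _, ho⟩ : ∃ o ∈ (univ : Finset Ω), 0 < y (i, o) := by
        apply exists_lt_of_sum_lt (f := fun _ => (0 : ℝ))
        rw [h1]
        simp
      exact ⟨o, ho⟩
    choose f hf using hex
    refine ⟨f, hf, fun k => dead f hf k ?_⟩
    rw [not_nonempty_iff_eq_empty.1 hne]
    simp

/-- Rounding of fractional choices, by an argument of Beck–Fiala type. Each agent `i` has a
probability vector `y i` on the options, and picks one option in its support. If each pair of an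
agent and an option lies in at most `r` constraint sets, then the number of agents whose choice
lies in a constraint set exceeds its expectation by at most `2 * r`. -/
theorem rounding (A : K → I → Ω → Prop) (r : ℕ)
    (hr : ∀ i o, ∃ S : Finset K, (∀ k, A k i o → k ∈ S) ∧ S.card ≤ r) (y : I → Ω → ℝ)
    (h0 : ∀ i o, 0 ≤ y i o) (h1 : ∀ i, ∑ o, y i o = 1) (B : K → ℝ)
    (hB : ∀ k, ∑ i, ∑ o, (if A k i o then y i o else 0) ≤ B k) :
    ∃ f : I → Ω, (∀ i, 0 < y i (f i)) ∧
      ∀ k (S : Finset I), (∀ i ∈ S, A k i (f i)) → (S.card : ℝ) ≤ B k + 2 * r := by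
  obtain ⟨f, hf, hk⟩ := rounding_aux (fun k p => A k p.1 p.2) r (fun p => by
      obtain ⟨S, hS, hcard⟩ := hr p.1 p.2
      exact (card_le_card fun k hk => hS k (mem_filter.1 hk).2).trans hcard) _
    (fun p => y p.1 p.2) (fun p => h0 _ _) h1 rfl
  refine ⟨f, hf, fun k S hS => ?_⟩
  have h2 := hk k
  rw [Fintype.sum_prod_type] at h2
  have h3 : S.card ≤ (univ.filter fun i => A k i (f i)).card :=
    card_le_card fun i hi => mem_filter.2 ⟨mem_univ _, hS i hi⟩
  have h4 : (S.card : ℝ) ≤ ((univ.filter fun i => A k i (f i)).card : ℝ) := by exact_mod_cast h3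
  exact h4.trans (h2.trans (by linarith [hB k]))
end Rounding

/-! ### Greedy colourings and arbitrary colour sets -/

section Greedy
variable {E X : Type*}

/-- Greedy extension of a partial assignment: if every element outside `A` has, whatever the values
elsewhere are, a value compatible with them, then the values on `A` extend to all of `E`. -/
theorem greedy_extension [Fintype E] (P : E → E → X → X → Prop)
    (hsymm : ∀ e f x y, P e f x y → P f e y x) (A : Set E) (σ₀ : E → X)
    (h : ∀ e ∉ A, ∀ g : E → X, ∃ x, ∀ f ≠ e, P e f x (g f)) :
    ∃ g : E → X, (∀ e ∈ A, g e = σ₀ e) ∧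
      ∀ e f, e ≠ f → (e ∉ A ∨ f ∉ A) → P e f (g e) (g f) := by
  have main : ∀ S : Finset E, ∃ g : E → X, (∀ e ∈ A, g e = σ₀ e) ∧
      ∀ e ∈ S, e ∉ A → ∀ f, (f ∈ S ∨ f ∈ A) → e ≠ f → P e f (g e) (g f) := by
    intro S
    induction S using Finset.induction_on with
    | empty => exact ⟨σ₀, fun _ _ => rfl, by simp⟩
    | insert a S ha ih =>
      obtain ⟨g, hg, hP⟩ := ih
      by_cases haA : a ∈ A
      · refine ⟨g, hg, fun e he heA f hf hef => hP e ?_ heA f ?_ hef⟩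
        · exact (mem_insert.1 he).resolve_left (fun h => heA (h ▸ haA))
        · rcases hf with hf | hf
          · rcases mem_insert.1 hf with rfl | hf
            · exact .inr haA
            · exact .inl hf
          · exact .inr hf
      · obtain ⟨x, hx⟩ := h a haA g
        refine ⟨Function.update g a x, ?_, ?_⟩
        · intro e he
          rw [Function.update_of_ne (by rintro rfl; exact haA he), hg e he]
        · intro e he heA f hf hef
          by_cases hea : e = a
          · subst hea
            rw [Function.update_self, Function.update_of_ne hef.symm]
            exact hx f hef.symm
          · have heS : e ∈ S := (mem_insert.1 he).resolve_left hea
            rw [Function.update_of_ne hea]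
            by_cases hfa : f = a
            · subst hfa
              rw [Function.update_self]
              exact hsymm _ _ _ _ (hx e hea)
            · rw [Function.update_of_ne hfa]
              refine hP e heS heA f ?_ hef
              rcases hf with hf | hf
              · exact .inl ((mem_insert.1 hf).resolve_left hfa)
              · exact .inr hf
  obtain ⟨g, hg, hP⟩ := main univ
  refine ⟨g, hg, fun e f hef h => ?_⟩
  rcases h with h | h
  · exact hP e (mem_univ _) h f (.inl (mem_univ _)) hef
  · exact hsymm _ _ _ _ (hP f (mem_univ _) h e (.inl (mem_univ _)) hef.symm)

/-- Greedy extension of a colouring: each uncoloured element has fewer conflicts than there are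
colours. -/
theorem greedy_colouring [Fintype E] [Fintype X] (conf : E → E → Prop)
    (hsymm : ∀ e f, conf e f → conf f e) (A : Set E) (σ₀ : E → X)
    (h : ∀ e ∉ A, ∃ S : Finset E, (∀ f, conf e f → f ∈ S) ∧ S.card < Fintype.card X) :
    ∃ g : E → X, (∀ e ∈ A, g e = σ₀ e) ∧
      ∀ e f, e ≠ f → conf e f → (e ∉ A ∨ f ∉ A) → g e ≠ g f := by
  obtain ⟨g, h1, h2⟩ := greedy_extension (fun e f (x y : X) => conf e f → x ≠ y)
    (fun e f x y hp hc => (hp (hsymm _ _ hc)).symm) A σ₀ (fun e he g => by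
      obtain ⟨S, hS, hcard⟩ := h e he
      have hlt : (S.image g).card < Fintype.card X := card_image_le.trans_lt hcard
      obtain ⟨x, hx⟩ : ∃ x, x ∉ S.image g := by
        by_contra hcon
        push Not at hcon
        rw [eq_univ_iff_forall.2 hcon, card_univ] at hlt
        exact lt_irrefl _ hlt
      refine ⟨x, fun f _ hc hxf => hx (mem_image.2 ⟨f, hS f hc, hxf.symm⟩)⟩)
  exact ⟨g, h1, fun e f hef hc hA => h2 e f hef hA hc⟩

/-- A digraph of maximum out-degree `k` has a proper colouring with `2 * k + 1` colours: every
induced subgraph has a vertex of in-degree at most `k`. -/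
theorem digraph_colouring [Fintype E] [Fintype X] (r : E → E → Prop) (k : ℕ)
    (hk : ∀ z, ∃ S : Finset E, (∀ z', r z z' → z' ∈ S) ∧ S.card ≤ k) (hX : 2 * k + 1 ≤ Fintype.card X) :
    ∃ ρ : E → X, ∀ z z', z ≠ z' → r z z' → ρ z ≠ ρ z' := by
  replace hk : ∀ z, (univ.filter fun z' => r z z').card ≤ k := by
    intro z
    obtain ⟨S, hS, hcard⟩ := hk z
    exact (card_le_card fun z' hz' => hS z' (mem_filter.1 hz').2).trans hcard
  have hX' : Nonempty X := Fintype.card_pos_iff.1 (by omega)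
  have main : ∀ n, ∀ S : Finset E, S.card = n →
      ∃ ρ : E → X, ∀ z ∈ S, ∀ z' ∈ S, z ≠ z' → r z z' → ρ z ≠ ρ z' := by
    intro n
    induction n with
    | zero =>
      intro S hS
      rw [card_eq_zero] at hS
      subst hS
      exact ⟨fun _ => Classical.arbitrary X, by simp⟩
    | succ n ih =>
      intro S hS
      obtain ⟨a, ha, hin⟩ : ∃ a ∈ S, (S.filter fun z => r z a).card ≤ k := by
        refine exists_le_of_sum_le (card_pos.1 (by omega)) ?_
        have e : ∑ a ∈ S, (S.filter fun z => r z a).card =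
            ∑ z ∈ S, (S.filter fun a => r z a).card :=
          (sum_card_bipartiteAbove_eq_sum_card_bipartiteBelow (fun z a => r z a)).symm
        rw [e]
        exact sum_le_sum fun z _ =>
          (card_le_card (filter_subset_filter _ (subset_univ _))).trans (hk z)
      obtain ⟨ρ, hρ⟩ := ih (S.erase a) (by rw [card_erase_of_mem ha]; omega)
      let B : Finset E := (S.filter fun z => r z a) ∪ univ.filter fun z => r a z
      have hB : (B.image ρ).card < Fintype.card X := by
        have h1 := (card_image_le (s := B) (f := ρ)).trans (card_union_le _ _)
        have h2 := hk a
        omega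
      obtain ⟨x, hx⟩ : ∃ x, x ∉ B.image ρ := by
        by_contra hcon
        push Not at hcon
        rw [eq_univ_iff_forall.2 hcon, card_univ] at hB
        exact lt_irrefl _ hB
      refine ⟨Function.update ρ a x, ?_⟩
      intro z hz z' hz' hne hr
      by_cases h1 : z = a
      · subst h1
        rw [Function.update_self, Function.update_of_ne hne.symm]
        intro h
        exact hx (mem_image.2 ⟨z', mem_union_right _ (by simpa using hr), h.symm⟩)
      · rw [Function.update_of_ne h1]
        by_cases h2 : z' = a
        · subst h2
          rw [Function.update_self]
          intro h
          exact hx (mem_image.2 ⟨z, mem_union_left _ (mem_filter.2 ⟨hz, hr⟩), h⟩)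
        · rw [Function.update_of_ne h2]
          exact hρ z (mem_erase.2 ⟨h1, hz⟩) z' (mem_erase.2 ⟨h2, hz'⟩) hne hr
  obtain ⟨ρ, hρ⟩ := main _ univ rfl
  exact ⟨ρ, fun z z' => hρ z (mem_univ _) z' (mem_univ _)⟩

end Greedy

section Transfer
variable {V κ : Type*}

/-- An inclusion-free colouring with colours in an arbitrary finite type bounds the index. -/
theorem inclusionChromaticIndex_le_card [Fintype κ] (G : SimpleGraph V) (c : Sym2 V → κ)
    (hp : ∀ u v w, G.Adj u v → G.Adj u w → v ≠ w → c s(u, v) ≠ c s(u, w))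
    (hi : ∀ u v, G.Adj u v → ∃ w, G.Adj u w ∧ ∀ x, G.Adj v x → c s(v, x) ≠ c s(u, w)) :
    inclusionChromaticIndex G ≤ Fintype.card κ := by
  let φ := Fintype.equivFin κ
  refine Nat.sInf_le ⟨fun e => (φ (c e)).1, ⟨?_, ?_⟩, fun e _ => (φ (c e)).2⟩
  · intro u v w huv huw hne h
    exact hp u v w huv huw hne (φ.injective (Fin.ext h))
  · intro u v huv hsub
    obtain ⟨w, hw, hx⟩ := hi u v huv
    obtain ⟨x, hvx, hxe⟩ := hsub ⟨w, hw, rfl⟩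
    exact hx x hvx (φ.injective (Fin.ext hxe))

theorem exists_new_colour_of_degree_lt [Fintype V] (G : SimpleGraph V) (c : Sym2 V → κ)
    (hp : ∀ u v w, G.Adj u v → G.Adj u w → v ≠ w → c s(u, v) ≠ c s(u, w)) {u v : V}
    (h : G.degree v < G.degree u) :
    ∃ w, G.Adj u w ∧ ∀ x, G.Adj v x → c s(v, x) ≠ c s(u, w) := by
  by_contra hcon
  push Not at hcon
  have hsub : (G.neighborFinset u).image (fun w => c s(u, w)) ⊆
      (G.neighborFinset v).image (fun x => c s(v, x)) := by
    intro a ha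
    obtain ⟨w, hw, rfl⟩ := mem_image.1 ha
    obtain ⟨x, hx, hxe⟩ := hcon w (by simpa using hw)
    exact mem_image.2 ⟨x, by simpa using hx, hxe⟩
  have h1 := (card_le_card hsub).trans card_image_le
  rw [card_image_of_injOn, SimpleGraph.card_neighborFinset_eq_degree,
    SimpleGraph.card_neighborFinset_eq_degree] at h1
  · omega
  · intro w hw w' hw' he
    by_contra hne
    exact hp u w w' (by simpa using hw) (by simpa using hw') hne he
end Transfer

/-! ### Edges between low vertices, and marks for high vertices with few high neighbours -/

section Local
variable {V : Type*} [Fintype V]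

/-- The partial function sending `em t` to `col t` for all `t` satisfying `P`. -/
theorem exists_partial {T Y X : Type*} (P : T → Prop) (em : T → Y) (col : T → X)
    (hinj : ∀ t t', P t → P t' → em t = em t' → t = t') :
    ∃ F : Y → Option X, ∀ e a, F e = some a ↔ ∃ t, P t ∧ em t = e ∧ col t = a := by
  refine ⟨fun e => if h : ∃ t, P t ∧ em t = e then some (col h.choose) else none, fun e a => ?_⟩
  dsimp only
  constructor
  · intro h
    by_cases hex : ∃ t, P t ∧ em t = e
    · rw [dif_pos hex] at h
      exact ⟨hex.choose, hex.choose_spec.1, hex.choose_spec.2, by simpa using h⟩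
    · rw [dif_neg hex] at h
      exact absurd h (by simp)
  · rintro ⟨t, ht, rfl, rfl⟩
    have hex : ∃ t', P t' ∧ em t' = em t := ⟨t, ht, rfl⟩
    rw [dif_pos hex, hinj _ _ hex.choose_spec.1 ht hex.choose_spec.2]

theorem card_incident_edges_le (G : SimpleGraph V) (w : V) :
    (univ.filter fun f => f ∈ G.edgeSet ∧ w ∈ f).card ≤ G.degree w := by
  have hsub : (univ.filter fun f => f ∈ G.edgeSet ∧ w ∈ f) ⊆
      (G.neighborFinset w).image (fun v => s(w, v)) := by
    intro f hf
    obtain ⟨hfe, v, rfl⟩ := (mem_filter.1 hf).2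
    exact mem_image.2 ⟨v, by simpa using hfe, rfl⟩
  refine (card_le_card hsub).trans (card_image_le.trans ?_)
  rw [SimpleGraph.card_neighborFinset_eq_degree]

/-- Only boundedly many edges meet a vertex `u` of degree at most `D`, or a neighbour of `u` of
degree at most `D`, in such a vertex. -/
theorem card_near_edges_le (G : SimpleGraph V) (D : ℕ) (u : V) (hu : G.degree u ≤ D) :
    (univ.filter fun f => f ∈ G.edgeSet ∧
      ∃ u' ∈ f, G.degree u' ≤ D ∧ (u = u' ∨ G.Adj u u')).card ≤ (D + 1) * D := by
  let N := (insert u (G.neighborFinset u)).filter fun u' => G.degree u' ≤ D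
  have hsub : (univ.filter fun f => f ∈ G.edgeSet ∧
      ∃ u' ∈ f, G.degree u' ≤ D ∧ (u = u' ∨ G.Adj u u')) ⊆
      N.biUnion fun u' => univ.filter fun f => f ∈ G.edgeSet ∧ u' ∈ f := by
    intro f hf
    obtain ⟨hfe, u', hu'f, hD, h⟩ := (mem_filter.1 hf).2
    refine mem_biUnion.2 ⟨u', mem_filter.2 ⟨?_, hD⟩, mem_filter.2 ⟨mem_univ _, hfe, hu'f⟩⟩
    rcases h with rfl | h
    · exact mem_insert_self _ _
    · exact mem_insert_of_mem (by simpa using h)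
  have hN : N.card ≤ D + 1 := by
    refine (card_le_card (filter_subset _ _)).trans ((card_insert_le _ _).trans ?_)
    rw [SimpleGraph.card_neighborFinset_eq_degree]
    omega
  refine (card_le_card hsub).trans ((card_biUnion_le_card_mul N _ D ?_).trans
    (Nat.mul_le_mul_right D hN))
  intro u' hu'
  exact (card_incident_edges_le G u').trans (mem_filter.1 hu').2

/-- The colouring `Y` of edges with two low ends: two such edges which share an end, or are joined by
an edge, receive distinct colours. -/
theorem exists_low_colouring {X : Type*} [Fintype X] (G : SimpleGraph V) (D : ℕ)
    (hX : 2 * ((D + 1) * D) + 1 ≤ Fintype.card X) :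
    ∃ y : Sym2 V → X, ∀ u v u' v', G.degree u ≤ D → G.degree v ≤ D → G.degree u' ≤ D →
      G.degree v' ≤ D → G.Adj u v → G.Adj u' v' → (u = u' ∨ G.Adj u u') →
      s(u, v) ≠ s(u', v') → y s(u, v) ≠ y s(u', v') := by
  have : Nonempty X := Fintype.card_pos_iff.1 (by omega)
  let LL : Sym2 V → Prop := fun e => e ∈ G.edgeSet ∧ ∀ v ∈ e, G.degree v ≤ D
  obtain ⟨y, -, hy⟩ := greedy_colouring (X := X)
    (fun e f => LL e ∧ LL f ∧ ∃ u ∈ e, ∃ u' ∈ f, (u = u' ∨ G.Adj u u'))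
    (fun e f ⟨h1, h2, u, hu, u', hu', h⟩ => ⟨h2, h1, u', hu', u, hu, h.imp Eq.symm fun h => h.symm⟩)
    ∅ (fun _ => Classical.arbitrary X) (by
      intro e _
      by_cases he : LL e
      · induction e with | _ a b =>
        have ha : G.degree a ≤ D := he.2 a (by simp)
        have hb : G.degree b ≤ D := he.2 b (by simp)
        have h1 := card_near_edges_le G D a ha
        have h2 := card_near_edges_le G D b hb
        refine ⟨(univ.filter fun f => f ∈ G.edgeSet ∧
          ∃ u' ∈ f, G.degree u' ≤ D ∧ (a = u' ∨ G.Adj a u')) ∪ (univ.filter fun f => f ∈ G.edgeSet ∧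
          ∃ u' ∈ f, G.degree u' ≤ D ∧ (b = u' ∨ G.Adj b u')), ?_,
          (card_union_le _ _).trans_lt (by omega)⟩
        rintro f ⟨-, hf, u, hu, u', hu', h⟩
        rcases Sym2.mem_iff.1 hu with rfl | rfl
        · exact mem_union_left _ (mem_filter.2 ⟨mem_univ _, hf.1, u', hu', hf.2 _ hu', h⟩)
        · exact mem_union_right _ (mem_filter.2 ⟨mem_univ _, hf.1, u', hu', hf.2 _ hu', h⟩)
      · exact ⟨∅, fun f h => absurd h.1 he, by simp only [card_empty]; omega⟩)
  refine ⟨y, fun u v u' v' hu hv hu' hv' huv huv' h hne => hy _ _ hne ?_ (.inl (by simp))⟩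
  refine ⟨⟨huv, ?_⟩, ⟨huv', ?_⟩, u, by simp, u', by simp, h⟩
  · simp [hu, hv]
  · simp [hu', hv']

/-- The number of neighbours of `u` of degree larger than `D`. -/
noncomputable def highDegree (G : SimpleGraph V) (D : ℕ) (u : V) : ℕ :=
  ((G.neighborFinset u).filter fun v => D < G.degree v).card

/-- The marks `R`. Every high vertex `z` with fewer than `D` high neighbours marks one edge to a low
vertex, in a colour that differs from the marks of the adjacent high vertices and of the high
vertices close to the low end of the edge. The conflicts are oriented: `z` is responsible for
boundedly many of them, although it may take part in many more. -/
theorem exists_small_marks {X : Type*} [Fintype X] (G : SimpleGraph V) (D : ℕ)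
    (hX : 2 * (2 * D + D * D) + 1 ≤ Fintype.card X) :
    ∃ rr : Sym2 V → Option X,
      (∀ u v, rr s(u, v) ≠ none → (G.degree u ≤ D ↔ ¬ G.degree v ≤ D)) ∧
      (∀ u v w, ¬ G.degree u ≤ D → rr s(u, v) ≠ none → rr s(u, w) ≠ none → v = w) ∧
      (∀ u w u' w' x a, G.degree u ≤ D → G.Adj u w → G.degree u' ≤ D → (u = u' ∨ G.Adj u u') →
        G.Adj u' w' → ¬ G.degree w' ≤ D → w ≠ w' → rr s(u, w) = some a → rr s(w', x) ≠ some a) ∧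
      (∀ u, ¬ G.degree u ≤ D → highDegree G D u < D →
        ∃ w a, G.Adj u w ∧ rr s(u, w) = some a ∧
          ∀ v, G.Adj u v → ¬ G.degree v ≤ D → ∀ x, rr s(v, x) ≠ some a) := by
  let Z : V → Prop := fun z => ¬ G.degree z ≤ D ∧ highDegree G D z < D
  have hex : ∀ z, ∃ w, Z z → G.Adj z w ∧ G.degree w ≤ D := by
    intro z
    by_cases hz : Z z
    · have h1 : highDegree G D z < (G.neighborFinset z).card := by
        rw [SimpleGraph.card_neighborFinset_eq_degree]
        have := hz.1
        have := hz.2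
        omega
      by_contra hcon
      push Not at hcon
      refine h1.ne (congrArg card (filter_true_of_mem ?_))
      intro v hv
      exact (hcon v).2 (by simpa using hv)
    · exact ⟨z, fun h => absurd h hz⟩
  choose wz hwz using hex
  let r : V → V → Prop := fun z z' => Z z ∧ Z z' ∧
    (G.Adj z z' ∨ G.Adj (wz z) z' ∨ ∃ x, G.degree x ≤ D ∧ G.Adj (wz z) x ∧ G.Adj x z')
  obtain ⟨ρ, hρ⟩ := digraph_colouring (X := X) r (2 * D + D * D) (by
    intro z
    by_cases hz : Z z
    · obtain ⟨hzw, hw⟩ := hwz z hz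
      let A1 := (G.neighborFinset z).filter fun v => D < G.degree v
      let A2 := G.neighborFinset (wz z)
      let A3 := ((G.neighborFinset (wz z)).filter fun x => G.degree x ≤ D).biUnion
        fun x => G.neighborFinset x
      have h1 : A1.card ≤ D := hz.2.le
      have h2 : A2.card ≤ D := by
        rw [SimpleGraph.card_neighborFinset_eq_degree]
        exact hw
      have h3 : A3.card ≤ D * D := by
        refine (card_biUnion_le_card_mul _ _ D ?_).trans (Nat.mul_le_mul_right D ?_)
        · intro x hx
          rw [SimpleGraph.card_neighborFinset_eq_degree]
          exact (mem_filter.1 hx).2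
        · exact (card_le_card (filter_subset _ _)).trans h2
      refine ⟨(A1 ∪ A2) ∪ A3, ?_, (card_union_le _ _).trans ?_⟩
      · rintro z' ⟨-, hZ', h | h | ⟨x, hx, h, h'⟩⟩
        · exact mem_union_left _ (mem_union_left _ (mem_filter.2
            ⟨by simpa using h, not_le.1 hZ'.1⟩))
        · exact mem_union_left _ (mem_union_right _ (by simpa [A2] using h))
        · exact mem_union_right _ (mem_biUnion.2 ⟨x, mem_filter.2 ⟨by simpa using h, hx⟩,
            by simpa using h'⟩)
      · have := card_union_le A1 A2
        omega
    · exact ⟨∅, fun f h => absurd h.1 hz, by simp⟩) hX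
  have hown : ∀ z a b, Z z → s(z, wz z) = s(a, b) → ¬ G.degree a ≤ D → z = a ∧ wz z = b := by
    intro z a b hz he ha
    rcases Sym2.eq_iff.1 he with h | ⟨h1, h2⟩
    · exact h
    · exact absurd (h2 ▸ (hwz z hz).2) ha
  obtain ⟨rr, hrr⟩ := exists_partial Z (fun z => s(z, wz z)) ρ (by
    intro t t' ht ht' h
    exact (hown t t' (wz t') ht h ht'.1).1)
  have hsome : ∀ a b x, rr s(a, b) = some x → ¬ G.degree a ≤ D → Z a ∧ wz a = b ∧ ρ a = x := by
    intro a b x h ha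
    obtain ⟨z, hz, he, hx⟩ := (hrr _ _).1 h
    obtain ⟨rfl, hb⟩ := hown z a b hz he ha
    exact ⟨hz, hb, hx⟩
  have hR0 : ∀ u v, rr s(u, v) ≠ none → (G.degree u ≤ D ↔ ¬ G.degree v ≤ D) := by
    intro u v h
    obtain ⟨a, ha⟩ := Option.ne_none_iff_exists'.1 h
    obtain ⟨z, hz, he, -⟩ := (hrr _ _).1 ha
    have h1 := hz.1
    have h2 := (hwz z hz).2
    rcases Sym2.eq_iff.1 he with ⟨rfl, rfl⟩ | ⟨rfl, rfl⟩ <;> tauto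
  refine ⟨rr, hR0, ?_, ?_, ?_⟩
  · intro u v w hu hv hw
    obtain ⟨a, ha⟩ := Option.ne_none_iff_exists'.1 hv
    obtain ⟨b, hb⟩ := Option.ne_none_iff_exists'.1 hw
    exact (hsome u v a ha hu).2.1.symm.trans (hsome u w b hb hu).2.1
  · intro u w u' w' x a hu huw hu' huu' hu'w' hw' hne ha hb
    have hw : ¬ G.degree w ≤ D := (hR0 u w (by simp [ha])).1 hu
    rw [Sym2.eq_swap] at ha
    obtain ⟨hZ, hz, h1⟩ := hsome w u a ha hw
    obtain ⟨hZ', -, h1'⟩ := hsome w' x a hb hw'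
    refine hρ w w' hne ⟨hZ, hZ', .inr ?_⟩ (h1.trans h1'.symm)
    rw [hz]
    rcases huu' with rfl | h
    · exact .inl hu'w'
    · exact .inr ⟨u', hu', h, hu'w'⟩
  · intro u hu hb
    refine ⟨wz u, ρ u, (hwz u ⟨hu, hb⟩).1, (hrr _ _).2 ⟨u, ⟨hu, hb⟩, rfl, rfl⟩, ?_⟩
    intro v huv hv x hx
    obtain ⟨hZ, -, h⟩ := hsome v x _ hx hv
    exact hρ u v huv.ne ⟨⟨hu, hb⟩, hZ, .inl huv⟩ h.symm
end Local

/-! ### Private edges for high vertices with many high neighbours -/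

section Big
variable {V : Type*} [Fintype V]

theorem card_mem_sym2_le (e : Sym2 V) : (univ.filter fun v => v ∈ e).card ≤ 2 := by
  induction e with | _ a b =>
  refine (card_le_card (t := {a, b}) ?_).trans card_le_two
  intro v hv
  simpa using hv

theorem sum_ite_le_card_mul {ι : Type*} [Fintype ι] (p : ι → Prop) [DecidablePred p] (a : ι → ℝ)
    (b : ℝ) (h : ∀ i, p i → a i ≤ b) :
    ∑ i, (if p i then a i else 0) ≤ (univ.filter p).card * b := by
  rw [← sum_filter, ← nsmul_eq_mul]
  exact sum_le_card_nsmul _ _ _ fun i hi => h i (mem_filter.1 hi).2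

/-- The edge `e` has two high ends, and `u` is one of them and has at least `D` high neighbours. -/
def BigEnd (G : SimpleGraph V) (D : ℕ) (e : Sym2 V) (u : V) : Prop :=
  e ∈ G.edgeSet ∧ (∀ v ∈ e, ¬ G.degree v ≤ D) ∧ u ∈ e ∧ D ≤ highDegree G D u

theorem highDegree_le_card (G : SimpleGraph V) (D : ℕ) (u : V) (hu : ¬ G.degree u ≤ D)
    (hb : D ≤ highDegree G D u) :
    highDegree G D u ≤ (univ.filter fun e => BigEnd G D e u).card := by
  refine card_le_card_of_injOn (fun v => s(u, v)) ?_ ?_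
  · intro v hv
    have hv := mem_filter.1 (mem_coe.1 hv)
    have h1 : G.Adj u v := by simpa using hv.1
    refine mem_coe.2 (mem_filter.2 ⟨mem_univ _, h1, ?_, by simp, hb⟩)
    intro x hx
    rcases Sym2.mem_iff.1 hx with rfl | rfl
    · exact hu
    · exact not_le.2 hv.2
  · intro v _ v' _ h
    exact Sym2.congr_right.1 h

/-- Every high vertex `u` with at least `D` high neighbours gets four private edges to high vertices
`h u s`, called the heads of `u`, in such a way that no vertex is a head more than `m` times. The
edges choose their owners by rounding: `e` belongs to its end `u` as the edge number `s` with
probability `21 / highDegree G D u`. The error is at most `20`, so that each of the four numbers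
occurs at least once at `u`. -/
theorem exists_heads (G : SimpleGraph V) (D Δ m : ℕ) (hD : 168 ≤ D) (hΔ : ∀ v, G.degree v ≤ Δ)
    (hm : 84 * (Δ : ℝ) / D + 20 < m + 1) :
    ∃ h : V → Fin 4 → V,
      (∀ u s, ¬ G.degree u ≤ D → D ≤ highDegree G D u →
        G.Adj u (h u s) ∧ ¬ G.degree (h u s) ≤ D) ∧
      (∀ u s u' s', ¬ G.degree u ≤ D → D ≤ highDegree G D u → ¬ G.degree u' ≤ D →
        D ≤ highDegree G D u' → s(u, h u s) = s(u', h u' s') → u = u' ∧ s = s') ∧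
      ∀ w, ∀ S : Finset (V × Fin 4),
        (∀ p ∈ S, ¬ G.degree p.1 ≤ D ∧ D ≤ highDegree G D p.1 ∧ h p.1 p.2 = w) → S.card ≤ m := by
  have hDpos : (0 : ℝ) < D := by
    have : 0 < D := by omega
    exact_mod_cast this
  have hD' : (168 : ℝ) ≤ D := by exact_mod_cast hD
  let wt : Sym2 V → V → ℝ := fun e u => if BigEnd G D e u then 21 / (highDegree G D u : ℝ) else 0
  have hwt0 : ∀ e u, 0 ≤ wt e u := by
    intro e u
    simp only [wt]
    split_ifs
    · positivity
    · exact le_rfl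
  have hwt1 : ∀ e u, BigEnd G D e u → 21 / (highDegree G D u : ℝ) ≤ 21 / D := by
    intro e u h
    have : (D : ℝ) ≤ highDegree G D u := by exact_mod_cast h.2.2.2
    gcongr
  have hwtD : ∀ e u, wt e u ≤ if u ∈ e then 21 / (D : ℝ) else 0 := by
    intro e u
    simp only [wt]
    split_ifs with h1 h2 h2
    · exact hwt1 e u h1
    · exact absurd h1.2.2.1 h2
    · positivity
    · exact le_rfl
  let y : Sym2 V → Option (V × Fin 4) → ℝ := fun e o =>
    o.elim (1 - ∑ p : V × Fin 4, wt e p.1) fun p => wt e p.1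
  have hsum4 : ∀ g : V → ℝ, ∑ p : V × Fin 4, g p.1 = 4 * ∑ u, g u := by
    intro g
    rw [Fintype.sum_prod_type, mul_sum]
    refine sum_congr rfl fun u _ => ?_
    simp
  have hle1 : ∀ e, ∑ p : V × Fin 4, wt e p.1 ≤ 1 := by
    intro e
    rw [hsum4]
    have h1 : ∑ u, wt e u ≤ (univ.filter fun u => u ∈ e).card * (21 / (D : ℝ)) :=
      (sum_le_sum fun u _ => hwtD e u).trans (sum_ite_le_card_mul _ _ _ fun _ _ => le_rfl)
    have h2 : ((univ.filter fun u => u ∈ e).card : ℝ) ≤ 2 := by exact_mod_cast card_mem_sym2_le e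
    have h3 : 21 / (D : ℝ) ≤ 1 / 8 := by
      rw [div_le_iff₀ hDpos]
      linarith
    have h4 : 0 ≤ 21 / (D : ℝ) := by positivity
    nlinarith
  -- Constraints: edges at `w` owned by their other end; edges at `q.1` not taken as its number `q.2`.
  -- An upper bound for the latter says that the number `q.2` does occur at `q.1`.
  let A : V ⊕ V × Fin 4 → Sym2 V → Option (V × Fin 4) → Prop := fun k e o =>
    Sum.elim (fun w => w ∈ e ∧ ∃ p : V × Fin 4, o = some p ∧ p.1 ≠ w)
      (fun q => BigEnd G D e q.1 ∧ o ≠ some q) k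
  let B : V ⊕ V × Fin 4 → ℝ := Sum.elim (fun _ => Δ * (84 / (D : ℝ)))
    (fun q => (univ.filter fun e => BigEnd G D e q.1).card * (1 - 21 / (highDegree G D q.1 : ℝ)))
  obtain ⟨f, -, hf⟩ := rounding A 10 (by
      intro e o
      refine ⟨disjSum (univ.filter fun v => v ∈ e) ((univ.filter fun v => v ∈ e) ×ˢ univ), ?_, ?_⟩
      · rintro (w | q) h
        · exact inl_mem_disjSum.2 (mem_filter.2 ⟨mem_univ _, h.1⟩)
        · exact inr_mem_disjSum.2 (mem_product.2 ⟨mem_filter.2 ⟨mem_univ _, h.1.2.2.1⟩, mem_univ _⟩)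
      · rw [card_disjSum, card_product, card_univ, Fintype.card_fin]
        have := card_mem_sym2_le e
        omega) y (by
      intro e o
      rcases o with _ | p
      · exact sub_nonneg.2 (hle1 e)
      · exact hwt0 e p.1) (by
      intro e
      rw [Fintype.sum_option]
      simp [y]) B (by
      rintro (w | q)
      · -- expected number of edges at `w` owned by their other end
        have hterm : ∀ e, ∑ o, (if A (.inl w) e o then y e o else 0) ≤
            if e ∈ G.edgeSet ∧ w ∈ e then 84 / (D : ℝ) else 0 := by
          intro e
          rw [Fintype.sum_option]
          have hnone : ¬ A (.inl w) e none := by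
            rintro ⟨_, p, hp, _⟩
            exact absurd hp (by simp)
          rw [if_neg hnone, zero_add]
          split_ifs with he
          · obtain ⟨he, x, rfl⟩ := he
            have h1 : ∀ p : V × Fin 4, (if A (.inl w) s(w, x) (some p) then y s(w, x) (some p) else 0)
                ≤ if p.1 = x then 21 / (D : ℝ) else 0 := by
              intro p
              split_ifs with h1 h2 h2
              · exact (hwtD _ _).trans (by split_ifs <;> first | exact le_rfl | positivity)
              · obtain ⟨_, p', hp', hne⟩ := h1
                obtain rfl : p = p' := by simpa using hp'
                refine (hwtD _ _).trans ?_
                rw [if_neg]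
                intro h
                rcases Sym2.mem_iff.1 h with h | h
                · exact hne h
                · exact h2 h
              · positivity
              · exact le_rfl
            refine (sum_le_sum fun p _ => h1 p).trans ?_
            rw [hsum4 fun u => if u = x then 21 / (D : ℝ) else 0]
            simp only [sum_ite_eq', mem_univ, if_true]
            apply le_of_eq
            ring
          · refine sum_nonpos fun p _ => ?_
            split_ifs with h1
            · simp only [y, Option.elim, wt]
              rw [if_neg]
              intro h
              exact he ⟨h.1, h1.1⟩
            · exact le_rfl
        refine (sum_le_sum fun e _ => hterm e).trans ((sum_ite_le_card_mul _ _ _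
          fun _ _ => le_rfl).trans ?_)
        have h1 : ((univ.filter fun e => e ∈ G.edgeSet ∧ w ∈ e).card : ℝ) ≤ Δ := by
          exact_mod_cast (card_incident_edges_le G w).trans (hΔ w)
        exact mul_le_mul_of_nonneg_right h1 (by positivity)
      · -- expected number of edges at `q.1` not chosen for `q`
        have hterm : ∀ e, ∑ o, (if A (.inr q) e o then y e o else 0) ≤
            if BigEnd G D e q.1 then 1 - 21 / (highDegree G D q.1 : ℝ) else 0 := by
          intro e
          split_ifs with he
          · have h1 : ∑ o, y e o = 1 := by
              rw [Fintype.sum_option]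
              simp [y]
            have h2 : y e (some q) = 21 / (highDegree G D q.1 : ℝ) := by simp [y, wt, he]
            rw [← h1, ← h2, ← add_sum_erase univ (y e) (mem_univ (some q)), add_sub_cancel_left,
              ← sum_filter]
            apply le_of_eq
            refine sum_congr ?_ fun _ _ => rfl
            ext o
            simp [A, he]
          · refine sum_nonpos fun o _ => ?_
            rw [if_neg]
            exact fun h => he h.1
        refine (sum_le_sum fun e _ => hterm e).trans (sum_ite_le_card_mul _ _ _ fun _ _ => le_rfl))
  have hex : ∀ u s, ∃ x, ¬ G.degree u ≤ D → D ≤ highDegree G D u →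
      BigEnd G D s(u, x) u ∧ f s(u, x) = some (u, s) := by
    intro u s
    by_cases hu : ¬ G.degree u ≤ D ∧ D ≤ highDegree G D u
    · by_contra hcon
      have hS := hf (.inr (u, s)) (univ.filter fun e => BigEnd G D e u) (by
        intro e he
        have he := (mem_filter.1 he).2
        refine ⟨he, fun h => ?_⟩
        obtain ⟨x, rfl⟩ := he.2.2.1
        exact hcon ⟨x, fun _ _ => ⟨he, h⟩⟩)
      have h1 := highDegree_le_card G D u hu.1 hu.2
      have h1' : (highDegree G D u : ℝ) ≤ (univ.filter fun e => BigEnd G D e u).card := by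
        exact_mod_cast h1
      have hb : (0 : ℝ) < highDegree G D u := hDpos.trans_le (by exact_mod_cast hu.2)
      have h2 : 21 ≤ ((univ.filter fun e => BigEnd G D e u).card : ℝ) *
          (21 / (highDegree G D u : ℝ)) := by
        rw [mul_div_assoc', le_div_iff₀ hb]
        linarith
      simp only [B, Sum.elim_inr] at hS
      push_cast at hS
      linarith
    · exact ⟨u, fun h1 h2 => absurd ⟨h1, h2⟩ hu⟩
  choose h hh using hex
  refine ⟨h, ?_, ?_, ?_⟩
  · intro u s h1 h2
    obtain ⟨he, -⟩ := hh u s h1 h2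
    exact ⟨he.1, he.2.1 _ (by simp)⟩
  · intro u s u' s' h1 h2 h1' h2' he
    have h3 := (hh u s h1 h2).2
    rw [he, (hh u' s' h1' h2').2] at h3
    simpa [eq_comm] using h3
  · intro w S hS
    have h1 := hf (.inl w) (S.image fun p => s(p.1, w)) (by
      intro e he
      obtain ⟨p, hp, rfl⟩ := mem_image.1 he
      obtain ⟨h1, h2, rfl⟩ := hS p hp
      obtain ⟨h3, h4⟩ := hh p.1 p.2 h1 h2
      refine ⟨by simp, p, h4, ?_⟩
      exact SimpleGraph.Adj.ne h3.1)
    rw [card_image_of_injOn] at h1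
    · have h2 : (S.card : ℝ) < m + 1 := by
        refine lt_of_le_of_lt h1 (lt_of_le_of_lt (le_of_eq ?_) hm)
        simp only [B, Sum.elim_inl]
        push_cast
        ring
      have h3 : S.card < m + 1 := by exact_mod_cast h2
      omega
    · intro p hp p' hp' he
      obtain ⟨h1, h2, h3⟩ := hS p hp
      obtain ⟨h1', h2', h3'⟩ := hS p' hp'
      have h4 := (hh p.1 p.2 h1 h2).2
      have h4' := (hh p'.1 p'.2 h1' h2').2
      rw [h3] at h4
      rw [h3'] at h4'
      have he : s(p.1, w) = s(p'.1, w) := he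
      rw [he, h4'] at h4
      exact (Option.some.inj h4).symm
end Big

/-! ### Marks for high vertices with many high neighbours -/

section BigMarks
variable {V : Type*} [Fintype V]

/-- The marks `Q`. Every high vertex `u` with at least `D` high neighbours gets a pair
`g u ∈ Fin n × Fin n` and marks its four private edges with the first coordinate (edges `0` and `1`)
or the second coordinate (edges `2` and `3`), together with the number of the edge. The coordinates
of vertices sharing a head, or of which one is a head of the other, differ, and adjacent vertices
get distinct pairs; this takes `√Δ + O(m)` values. If a neighbour `v` saw all four marks of `u`,
then one mark in each half would belong to `v` itself, and `g v = g u`. -/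
theorem exists_big_marks (G : SimpleGraph V) (D Δ m n : ℕ) (hD : 168 ≤ D)
    (hΔ : ∀ v, G.degree v ≤ Δ) (hm : 84 * (Δ : ℝ) / D + 20 < m + 1)
    (hn : 5 * m + 4 + Nat.sqrt Δ + 1 ≤ n) :
    ∃ own : Sym2 V → Option (Fin 4 × Fin n),
      (∀ u v, G.degree u ≤ D → own s(u, v) = none) ∧
      (∀ u v w a, v ≠ w → own s(u, v) = some a → own s(u, w) ≠ some a) ∧
      ∀ u v, ¬ G.degree u ≤ D → D ≤ highDegree G D u → G.Adj u v →
        ∃ w a, G.Adj u w ∧ own s(u, w) = some a ∧ ∀ x, own s(v, x) ≠ some a := by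
  obtain ⟨h, hadj, hinj, hload⟩ := exists_heads G D Δ m hD hΔ hm
  let Bg : V → Prop := fun u => ¬ G.degree u ≤ D ∧ D ≤ highDegree G D u
  let M : V → V → Prop := fun u u' =>
    (∃ s s', h u s = h u' s') ∨ (∃ s, h u s = u') ∨ (∃ s, h u' s = u)
  have hMsymm : ∀ u u', M u u' → M u' u := by
    rintro u u' (⟨s, s', h⟩ | h | h)
    · exact .inl ⟨s', s, h.symm⟩
    · exact .inr (.inr h)
    · exact .inr (.inl h)
  have : NeZero n := ⟨by omega⟩
  -- the owners conflicting with `u` number at most `5 * m + 4`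
  let pre : V → Finset V := fun w =>
    ((univ : Finset (V × Fin 4)).filter fun p => Bg p.1 ∧ h p.1 p.2 = w).image Prod.fst
  have hpre : ∀ w, (pre w).card ≤ m := fun w =>
    card_image_le.trans (hload w _ fun p hp => by
      have := (mem_filter.1 hp).2
      exact ⟨this.1.1, this.1.2, this.2⟩)
  have hmem : ∀ w u s, Bg u → h u s = w → u ∈ pre w := fun w u s hu hs =>
    mem_image.2 ⟨(u, s), mem_filter.2 ⟨mem_univ _, hu, hs⟩, rfl⟩
  let N : V → Finset V := fun u =>
    (univ : Finset (Fin 4)).biUnion (fun s => pre (h u s)) ∪ (univ.image (h u) ∪ pre u)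
  have hN : ∀ u, (N u).card ≤ 5 * m + 4 := by
    intro u
    have h1 : ((univ : Finset (Fin 4)).biUnion (fun s => pre (h u s))).card ≤ 4 * m := by
      refine (card_biUnion_le_card_mul _ _ m fun s _ => hpre _).trans ?_
      simp
    have h2 : (univ.image (h u)).card ≤ 4 := card_image_le.trans (by simp)
    have h3 := hpre u
    have h4 := card_union_le ((univ : Finset (Fin 4)).biUnion (fun s => pre (h u s)))
      (univ.image (h u) ∪ pre u)
    have h5 := card_union_le (univ.image (h u)) (pre u)
    simp only [N]
    omega
  have hMN : ∀ u u', Bg u' → M u u' → u' ∈ N u := by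
    rintro u u' hu' (⟨s, s', hs⟩ | ⟨s, hs⟩ | ⟨s, hs⟩)
    · exact mem_union_left _ (mem_biUnion.2 ⟨s, mem_univ _, hmem _ _ s' hu' hs.symm⟩)
    · exact mem_union_right _ (mem_union_left _ (mem_image.2 ⟨s, mem_univ _, hs⟩))
    · exact mem_union_right _ (mem_union_right _ (hmem _ _ s hu' hs))
  obtain ⟨g, -, hg⟩ := greedy_extension
    (fun u u' (x y : Fin n × Fin n) => Bg u → Bg u' →
      (M u u' → x.1 ≠ y.1 ∧ x.2 ≠ y.2) ∧ (G.Adj u u' → x ≠ y))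
    (by
      intro u u' x y hP hu' hu
      obtain ⟨h1, h2⟩ := hP hu hu'
      exact ⟨fun hM => ⟨(h1 (hMsymm _ _ hM)).1.symm, (h1 (hMsymm _ _ hM)).2.symm⟩,
        fun ha => (h2 ha.symm).symm⟩)
    ∅ (fun _ => (0, 0))
    (by
      intro u _ g
      let b1 := (N u).image fun v => (g v).1
      let b2 := (N u).image fun v => (g v).2
      have hb1 : Nat.sqrt Δ + 1 ≤ (univ \ b1).card := by
        have h1 : b1.card ≤ _ := card_image_le
        have h2 := hN u
        have h3 := le_card_sdiff b1 univ
        rw [card_univ, Fintype.card_fin] at h3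
        omega
      have hb2 : Nat.sqrt Δ + 1 ≤ (univ \ b2).card := by
        have h1 : b2.card ≤ _ := card_image_le
        have h2 := hN u
        have h3 := le_card_sdiff b2 univ
        rw [card_univ, Fintype.card_fin] at h3
        omega
      have hlt : ((G.neighborFinset u).image g).card < ((univ \ b1) ×ˢ (univ \ b2)).card := by
        rw [card_product]
        refine (card_image_le.trans ?_).trans_lt
          ((Nat.lt_succ_sqrt Δ).trans_le (Nat.mul_le_mul hb1 hb2))
        rw [SimpleGraph.card_neighborFinset_eq_degree]
        exact hΔ u
      obtain ⟨x, hx, hx'⟩ := exists_mem_notMem_of_card_lt_card hlt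
      obtain ⟨h1, h2⟩ := mem_product.1 hx
      refine ⟨x, fun f _ _ hf => ⟨fun hM => ⟨fun he => ?_, fun he => ?_⟩, fun ha he => ?_⟩⟩
      · exact (mem_sdiff.1 h1).2 (mem_image.2 ⟨f, hMN _ _ hf hM, he.symm⟩)
      · exact (mem_sdiff.1 h2).2 (mem_image.2 ⟨f, hMN _ _ hf hM, he.symm⟩)
      · exact hx' (mem_image.2 ⟨f, by simpa using ha, he.symm⟩))
  let j : Fin 4 → V → Fin n := fun s u => if s < 2 then (g u).1 else (g u).2
  have hj : ∀ s u u', Bg u → Bg u' → u ≠ u' → M u u' → j s u ≠ j s u' := by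
    intro s u u' hu hu' hne hM
    have := (hg u u' hne (.inl (by simp)) hu hu').1 hM
    simp only [j]
    split_ifs
    · exact this.1
    · exact this.2
  obtain ⟨own, hown⟩ := exists_partial (fun p : V × Fin 4 => Bg p.1)
    (fun p => s(p.1, h p.1 p.2)) (fun p => (p.2, j p.2 p.1)) (by
      rintro ⟨u, s⟩ ⟨u', s'⟩ hu hu' he
      obtain ⟨h1, h2⟩ := hinj u s u' s' hu.1 hu.2 hu'.1 hu'.2 he
      exact Prod.ext h1 h2)
  have hsome : ∀ u x s i, own s(u, x) = some (s, i) →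
      ∃ p, Bg p ∧ s(p, h p s) = s(u, x) ∧ j s p = i ∧ (p = u ∨ h p s = u) := by
    intro u x s i he
    obtain ⟨⟨p, s'⟩, hp, h1, h2⟩ := (hown _ _).1 he
    obtain ⟨rfl, h3⟩ := Prod.ext_iff.1 h2
    refine ⟨p, hp, h1, h3, ?_⟩
    rcases Sym2.eq_iff.1 h1 with h | h
    · exact .inl h.1
    · exact .inr h.2
  refine ⟨own, ?_, ?_, ?_⟩
  · intro u v hu
    by_contra hne
    obtain ⟨⟨s, i⟩, ha⟩ := Option.ne_none_iff_exists'.1 hne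
    obtain ⟨p, hp, -, -, rfl | hpu⟩ := hsome u v s i ha
    · exact hp.1 hu
    · exact (hadj p s hp.1 hp.2).2 (hpu ▸ hu)
  · rintro u v w ⟨s, i⟩ hvw h1 h2
    obtain ⟨p, hp, he, hi, hpu⟩ := hsome u v s i h1
    obtain ⟨p', hp', he', hi', hpu'⟩ := hsome u w s i h2
    by_cases hpp : p = p'
    · subst hpp
      exact hvw (Sym2.congr_right.1 (he.symm.trans he'))
    · refine hj s p p' hp hp' hpp ?_ (hi.trans hi'.symm)
      rcases hpu with h3 | h3 <;> rcases hpu' with h4 | h4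
      · exact absurd (h3.trans h4.symm) hpp
      · exact .inr (.inr ⟨s, h4.trans h3.symm⟩)
      · exact .inr (.inl ⟨s, h3.trans h4.symm⟩)
      · exact .inl ⟨s, s, h3.trans h4.symm⟩
  · intro u v hu hb huv
    by_contra hcon
    have hall : ∀ s, ∃ p, Bg p ∧ j s p = j s u ∧ (p = v ∨ h p s = v) := by
      intro s
      by_contra hno
      refine hcon ⟨h u s, (s, j s u), (hadj u s hu hb).1,
        (hown _ _).2 ⟨(u, s), ⟨hu, hb⟩, rfl, rfl⟩, fun x hx => hno ?_⟩
      obtain ⟨p, h1, -, h2, h3⟩ := hsome v x s _ hx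
      exact ⟨p, h1, h2, h3⟩
    -- two marks with the same coordinate of `u` cannot both come to `v` from other owners, since these
    -- would have the head `v` in common
    have hpair : ∀ s s', s ≠ s' → (∀ w, j s w = j s' w) → Bg v ∧ j s v = j s u := by
      intro s s' hss hjj
      obtain ⟨p, hp, h1, rfl | h2⟩ := hall s
      · exact ⟨hp, h1⟩
      obtain ⟨p', hp', h1', rfl | h2'⟩ := hall s'
      · exact ⟨hp', by rw [hjj, hjj]; exact h1'⟩
      exfalso
      by_cases hpp : p = p'
      · subst hpp
        exact hss (hinj p s p s' hp.1 hp.2 hp.1 hp.2 (by rw [h2, h2'])).2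
      · refine hj s p p' hp hp' hpp (.inl ⟨s, s', h2.trans h2'.symm⟩) ?_
        rw [h1, hjj p', h1', hjj u]
    obtain ⟨hv, e1⟩ := hpair 0 1 (by decide) (fun w => rfl)
    obtain ⟨-, e2⟩ := hpair 2 3 (by decide) (fun w => rfl)
    exact (hg u v huv.ne (.inl (by simp)) ⟨hu, hb⟩ hv).2 huv
      (Prod.ext e1.symm e2.symm)
end BigMarks

/-! ### Selecting pairs of edges at isolated low vertices -/

section Selection
variable {V : Type*} [Fintype V]

/-- `u` is a low vertex all of whose neighbours are high. -/
def Isolated (G : SimpleGraph V) (D : ℕ) (u : V) : Prop :=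
  G.degree u ≤ D ∧ ∀ v, G.Adj u v → ¬ G.degree v ≤ D

/-- `e` is an edge of `G` with two high ends. -/
def HighEdge (G : SimpleGraph V) (D : ℕ) (e : Sym2 V) : Prop :=
  e ∈ G.edgeSet ∧ ∀ v ∈ e, ¬ G.degree v ≤ D

/-- The unordered pairs of distinct neighbours of `u`. -/
noncomputable def nbrPairs (G : SimpleGraph V) (u : V) : Finset (Sym2 V) :=
  (G.neighborFinset u).offDiag.image Sym2.mk.uncurry

theorem mem_nbrPairs (G : SimpleGraph V) (u : V) (p : Sym2 V) :
    p ∈ nbrPairs G u ↔ ∃ a b, G.Adj u a ∧ G.Adj u b ∧ a ≠ b ∧ p = s(a, b) := by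
  simp only [nbrPairs, mem_image, mem_offDiag, SimpleGraph.mem_neighborFinset, Prod.exists,
    Function.uncurry_apply_pair]
  constructor
  · rintro ⟨a, b, ⟨h1, h2, h3⟩, h4⟩
    exact ⟨a, b, h1, h2, h3, h4.symm⟩
  · rintro ⟨a, b, h1, h2, h3, h4⟩
    exact ⟨a, b, ⟨h1, h2, h3⟩, h4.symm⟩

theorem card_nbrPairs (G : SimpleGraph V) (u : V) :
    2 * ((nbrPairs G u).card : ℝ) = G.degree u * ((G.degree u : ℝ) - 1) := by
  have h := Sym2.two_mul_card_image_offDiag (G.neighborFinset u)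
  rw [offDiag_card, SimpleGraph.card_neighborFinset_eq_degree] at h
  have h' : 2 * (nbrPairs G u).card + G.degree u = G.degree u * G.degree u := by
    have : G.degree u ≤ G.degree u * G.degree u := Nat.le_mul_self _
    simp only [nbrPairs]
    omega
  have : 2 * ((nbrPairs G u).card : ℝ) + G.degree u = G.degree u * G.degree u := by
    exact_mod_cast h'
  linarith

theorem card_nbrPairs_mem_le (G : SimpleGraph V) (u w : V) (h : G.Adj u w) :
    (((nbrPairs G u).filter fun p => w ∈ p).card : ℝ) ≤ (G.degree u : ℝ) - 1 := by
  have h1 : ((nbrPairs G u).filter fun p => w ∈ p) ⊆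
      ((G.neighborFinset u).erase w).image fun x => s(w, x) := by
    intro p hp
    obtain ⟨hp, hw⟩ := mem_filter.1 hp
    obtain ⟨a, b, ha, hb, hab, rfl⟩ := (mem_nbrPairs G u p).1 hp
    rcases Sym2.mem_iff.1 hw with rfl | rfl
    · exact mem_image.2 ⟨b, mem_erase.2 ⟨hab.symm, by simpa using hb⟩, rfl⟩
    · exact mem_image.2 ⟨a, mem_erase.2 ⟨hab, by simpa using ha⟩, Sym2.eq_swap⟩
  have h2 := (card_le_card h1).trans card_image_le
  rw [card_erase_of_mem (by simpa using h), SimpleGraph.card_neighborFinset_eq_degree] at h2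
  have h3 : 1 ≤ G.degree u := (G.degree_pos_iff_exists_adj u).2 ⟨w, h⟩
  have h4 : ((nbrPairs G u).filter fun p => w ∈ p).card + 1 ≤ G.degree u := by omega
  have h5 : (((nbrPairs G u).filter fun p => w ∈ p).card : ℝ) + 1 ≤ G.degree u := by
    exact_mod_cast h4
  linarith

/-- Every isolated low vertex `u` selects a pair of its neighbours `f (inl u)`, and some of the
edges `e` between high vertices select themselves as `f (inr e)`, the others taking `none`. The
selected pairs form a multigraph on the high vertices of small maximum degree and multiplicity, and
the remaining edges between high vertices have small maximum degree. The uniform choice of a pair,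
and the choice of an edge with probability `2 / δ`, have these properties in expectation. -/
theorem exists_selection (G : SimpleGraph V) (D Δ δ : ℕ) (hδ : 2 ≤ δ)
    (hmin : ∀ v, δ ≤ G.degree v) (hΔ : ∀ v, G.degree v ≤ Δ) :
    ∃ f : V ⊕ Sym2 V → Option (Sym2 V),
      (∀ u, Isolated G D u → ∃ a b, G.Adj u a ∧ G.Adj u b ∧ a ≠ b ∧ f (.inl u) = some s(a, b)) ∧
      (∀ u, ¬ Isolated G D u → f (.inl u) = none) ∧
      (∀ e, HighEdge G D e → f (.inr e) = none ∨ f (.inr e) = some e) ∧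
      (∀ e, ¬ HighEdge G D e → f (.inr e) = none) ∧
      (∀ w, ∀ S : Finset (V ⊕ Sym2 V), (∀ i ∈ S, ∃ p, f i = some p ∧ w ∈ p) →
        (S.card : ℝ) ≤ 2 * Δ / δ + 6) ∧
      (∀ p, ∀ S : Finset (V ⊕ Sym2 V), (∀ i ∈ S, f i = some p) →
        (S.card : ℝ) ≤ 2 * Δ / (δ * ((δ : ℝ) - 1)) + 7) ∧
      (∀ w, ∀ S : Finset (Sym2 V), (∀ e ∈ S, HighEdge G D e ∧ f (.inr e) = none ∧ w ∈ e) →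
        (S.card : ℝ) ≤ (1 - 2 / (δ : ℝ)) * Δ + 6) := by
  have hδ' : (2 : ℝ) ≤ δ := by exact_mod_cast hδ
  have hδ0 : (0 : ℝ) < δ := by linarith
  have hδ1 : (0 : ℝ) < (δ : ℝ) - 1 := by linarith
  have hd : ∀ u, (δ : ℝ) ≤ G.degree u := fun u => by exact_mod_cast hmin u
  have hΔ' : ∀ u, (G.degree u : ℝ) ≤ Δ := fun u => by exact_mod_cast hΔ u
  have h2δ : 2 / (δ : ℝ) ≤ 1 := by
    rw [div_le_one hδ0]
    exact hδ'
  let wt : V → ℝ := fun u => 2 / (G.degree u * ((G.degree u : ℝ) - 1))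
  have hdpos : ∀ u, 0 < (G.degree u : ℝ) * ((G.degree u : ℝ) - 1) := fun u => by
    have := hd u
    apply mul_pos <;> linarith
  have hwt0 : ∀ u, 0 < wt u := fun u => div_pos two_pos (hdpos u)
  have hwt1 : ∀ u, ((nbrPairs G u).card : ℝ) * wt u = 1 := by
    intro u
    have h1 := card_nbrPairs G u
    have h2 := hdpos u
    simp only [wt]
    rw [mul_div_assoc', div_eq_one_iff_eq h2.ne']
    linarith
  have hwt2 : ∀ u, wt u ≤ 2 / (δ * ((δ : ℝ) - 1)) := by
    intro u
    have := hd u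
    simp only [wt]
    gcongr
  have hwt3 : ∀ u, ((G.degree u : ℝ) - 1) * wt u ≤ 2 / δ := by
    intro u
    have h1 := hd u
    have h2 : (0 : ℝ) < (G.degree u : ℝ) - 1 := by linarith
    have h3 : ((G.degree u : ℝ) - 1) * wt u = 2 / G.degree u := by
      simp only [wt]
      field_simp
    rw [h3]
    gcongr
  let y : V ⊕ Sym2 V → Option (Sym2 V) → ℝ := fun i o =>
    Sum.elim
      (fun u => o.elim (if Isolated G D u then 0 else 1)
        fun p => if Isolated G D u ∧ p ∈ nbrPairs G u then wt u else 0)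
      (fun e => o.elim (if HighEdge G D e then 1 - 2 / (δ : ℝ) else 1)
        fun p => if HighEdge G D e ∧ p = e then 2 / (δ : ℝ) else 0) i
  have hy1 : ∀ u, y (.inl u) none = if Isolated G D u then 0 else 1 := fun u => rfl
  have hy2 : ∀ u p, y (.inl u) (some p) =
    if Isolated G D u ∧ p ∈ nbrPairs G u then wt u else 0 := fun u p => rfl
  have hy3 : ∀ e, y (.inr e) none = if HighEdge G D e then 1 - 2 / (δ : ℝ) else 1 := fun e => rfl
  have hy4 : ∀ e p, y (.inr e) (some p) =
    if HighEdge G D e ∧ p = e then 2 / (δ : ℝ) else 0 := fun e p => rfl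
  -- Constraints: the degree of `w` and the multiplicity of `p` among the selected pairs, and the
  -- number of unselected edges between high vertices at `w`.
  let A : V ⊕ Sym2 V ⊕ V → V ⊕ Sym2 V → Option (Sym2 V) → Prop := fun k i o =>
    Sum.elim (fun w => ∃ p, o = some p ∧ w ∈ p)
      (Sum.elim (fun p => o = some p) fun w => o = none ∧ ∃ e, i = .inr e ∧ HighEdge G D e ∧ w ∈ e) k
  have hA1 : ∀ w i p, A (.inl w) i (some p) ↔ w ∈ p := by
    intro w i p
    simp [A]
  have hA1n : ∀ w i, ¬ A (.inl w) i none := by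
    intro w i
    simp [A]
  have hA2 : ∀ q i o, A (.inr (.inl q)) i o ↔ o = some q := fun q i o => Iff.rfl
  have hA3 : ∀ w e, A (.inr (.inr w)) (.inr e) none ↔ HighEdge G D e ∧ w ∈ e := by
    intro w e
    simp [A]
  have hA3s : ∀ w i p, ¬ A (.inr (.inr w)) i (some p) := by
    intro w i p
    simp [A]
  have hA3l : ∀ w u o, ¬ A (.inr (.inr w)) (.inl u) o := by
    intro w u o
    simp [A]
  -- edges from `w` to isolated low vertices and edges from `w` to high vertices are disjoint sets
  have hcount : ∀ w, (univ.filter fun u => Isolated G D u ∧ G.Adj u w).card +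
      (univ.filter fun e => HighEdge G D e ∧ w ∈ e).card ≤ G.degree w := by
    intro w
    refine le_trans ?_ (card_incident_edges_le G w)
    rw [← card_image_of_injective (univ.filter fun u => Isolated G D u ∧ G.Adj u w)
      (f := fun u => s(u, w)) (fun a b h => Sym2.congr_left.1 h), ← card_union_of_disjoint]
    · refine card_le_card fun e he => ?_
      simp only [mem_union, mem_image, mem_filter, mem_univ, true_and] at he ⊢
      rcases he with ⟨u, ⟨-, h⟩, rfl⟩ | ⟨h, h'⟩
      · exact ⟨h, by simp⟩
      · exact ⟨h.1, h'⟩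
    · rw [disjoint_left]
      intro e he he'
      simp only [mem_image, mem_filter, mem_univ, true_and] at he he'
      obtain ⟨u, ⟨h, -⟩, rfl⟩ := he
      exact he'.1.2 u (by simp) h.1
  let B : V ⊕ Sym2 V ⊕ V → ℝ := Sum.elim (fun _ => 2 * Δ / δ)
    (Sum.elim (fun _ => 2 * Δ / (δ * ((δ : ℝ) - 1)) + 1) fun _ => (1 - 2 / (δ : ℝ)) * Δ)
  obtain ⟨f, hf0, hf⟩ := rounding A 3 (by
      intro i o
      rcases o with _ | p
      · rcases i with u | e
        · refine ⟨∅, ?_, by simp⟩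
          rintro (w | q | w) h
          · exact absurd h (hA1n _ _)
          · exact absurd ((hA2 _ _ _).1 h) (by simp)
          · exact absurd h (hA3l _ _ _)
        · refine ⟨disjSum ∅ (disjSum ∅ (univ.filter fun v => v ∈ e)), ?_, ?_⟩
          · rintro (w | q | w) h
            · exact absurd h (hA1n _ _)
            · exact absurd ((hA2 _ _ _).1 h) (by simp)
            · exact inr_mem_disjSum.2 (inr_mem_disjSum.2
                (mem_filter.2 ⟨mem_univ _, ((hA3 _ _).1 h).2⟩))
          · rw [card_disjSum, card_disjSum]
            have := card_mem_sym2_le e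
            simp only [card_empty]
            omega
      · refine ⟨disjSum (univ.filter fun v => v ∈ p) (disjSum {p} ∅), ?_, ?_⟩
        · rintro (w | q | w) h
          · exact inl_mem_disjSum.2 (mem_filter.2 ⟨mem_univ _, (hA1 _ _ _).1 h⟩)
          · have : p = q := by simpa using (hA2 _ _ _).1 h
            exact inr_mem_disjSum.2 (inl_mem_disjSum.2 (by simp [this]))
          · exact absurd h (hA3s _ _ _)
        · rw [card_disjSum, card_disjSum]
          have := card_mem_sym2_le p
          simp only [card_empty, card_singleton]
          omega) y (by
      rintro (u | e) (_ | p)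
      · rw [hy1]
        split_ifs <;> norm_num
      · rw [hy2]
        split_ifs
        · exact (hwt0 u).le
        · exact le_rfl
      · rw [hy3]
        split_ifs
        · linarith
        · norm_num
      · rw [hy4]
        split_ifs
        · positivity
        · exact le_rfl) (by
      rintro (u | e)
      · rw [Fintype.sum_option, hy1]
        simp only [hy2]
        by_cases hu : Isolated G D u
        · simp only [hu, if_true, true_and, zero_add]
          rw [← sum_filter, sum_const, nsmul_eq_mul]
          simpa using hwt1 u
        · simp [hu]
      · rw [Fintype.sum_option, hy3]
        simp only [hy4]
        by_cases he : HighEdge G D e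
        · simp [he]
        · simp [he]) B (by
      rintro (w | q | w)
      · rw [Fintype.sum_sum_type]
        have hV : ∀ u, ∑ o, (if A (.inl w) (.inl u) o then y (.inl u) o else 0) ≤
            if Isolated G D u ∧ G.Adj u w then 2 / (δ : ℝ) else 0 := by
          intro u
          rw [Fintype.sum_option, if_neg (hA1n _ _), zero_add]
          simp only [hA1, hy2, ← ite_and]
          rw [← sum_filter, sum_const, nsmul_eq_mul]
          split_ifs with h
          · refine le_trans ?_ (hwt3 u)
            refine mul_le_mul_of_nonneg_right (le_trans ?_ (card_nbrPairs_mem_le G u w h.2))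
              (hwt0 u).le
            exact_mod_cast card_le_card fun p hp => by
              simp only [mem_filter, mem_univ, true_and] at hp ⊢
              exact ⟨hp.2.2, hp.1⟩
          · rw [filter_false_of_mem]
            · simp
            · rintro p - ⟨hw, hu, hp⟩
              obtain ⟨a, b, ha, hb, -, rfl⟩ := (mem_nbrPairs G u p).1 hp
              rcases Sym2.mem_iff.1 hw with rfl | rfl
              · exact h ⟨hu, ha⟩
              · exact h ⟨hu, hb⟩
        have hE : ∀ e, ∑ o, (if A (.inl w) (.inr e) o then y (.inr e) o else 0) ≤
            if HighEdge G D e ∧ w ∈ e then 2 / (δ : ℝ) else 0 := by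
          intro e
          rw [Fintype.sum_option, if_neg (hA1n _ _), zero_add]
          simp only [hA1, hy4, ← ite_and]
          rw [Fintype.sum_eq_single e]
          · refine le_of_eq (if_congr ?_ rfl rfl)
            tauto
          · intro p hp
            rw [if_neg]
            tauto
        have h1 := (sum_le_sum fun u (_ : u ∈ univ) => hV u).trans
          (sum_ite_le_card_mul _ _ _ fun _ _ => le_rfl)
        have h2 := (sum_le_sum fun e (_ : e ∈ univ) => hE e).trans
          (sum_ite_le_card_mul _ _ _ fun _ _ => le_rfl)
        have h3 : ((univ.filter fun u => Isolated G D u ∧ G.Adj u w).card : ℝ) +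
            (univ.filter fun e => HighEdge G D e ∧ w ∈ e).card ≤ Δ := by
          exact_mod_cast (hcount w).trans (hΔ w)
        have h4 := mul_le_mul_of_nonneg_right h3 (by positivity : 0 ≤ 2 / (δ : ℝ))
        have h5 : B (.inl w) = Δ * (2 / (δ : ℝ)) := by
          simp only [B, Sum.elim_inl]
          ring
        rw [h5]
        linarith
      · rw [Fintype.sum_sum_type]
        have hs : ∀ i, ∑ o, (if A (.inr (.inl q)) i o then y i o else 0) = y i (some q) := by
          intro i
          rw [Fintype.sum_eq_single (some q)]
          · rw [if_pos ((hA2 _ _ _).2 rfl)]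
          · intro o ho
            rw [if_neg fun h => ho ((hA2 _ _ _).1 h)]
        simp only [hs, hy2, hy4]
        have h1 := sum_ite_le_card_mul (fun u => Isolated G D u ∧ q ∈ nbrPairs G u) wt _
          fun u _ => hwt2 u
        have h2 : ∑ e, (if HighEdge G D e ∧ q = e then 2 / (δ : ℝ) else 0) ≤ 1 := by
          rw [Fintype.sum_eq_single q]
          · split_ifs
            · exact h2δ
            · norm_num
          · intro e he
            rw [if_neg fun h => he h.2.symm]
        have h3 : ((univ.filter fun u => Isolated G D u ∧ q ∈ nbrPairs G u).card : ℝ) ≤ Δ := by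
          induction q with | _ a b =>
          have : (univ.filter fun u => Isolated G D u ∧ s(a, b) ∈ nbrPairs G u).card ≤
              G.degree a := by
            rw [← SimpleGraph.card_neighborFinset_eq_degree]
            refine card_le_card fun u hu => ?_
            obtain ⟨-, hu⟩ := (mem_filter.1 hu).2
            obtain ⟨a', b', ha, hb, -, h⟩ := (mem_nbrPairs G u _).1 hu
            rw [SimpleGraph.mem_neighborFinset]
            rcases Sym2.eq_iff.1 h with ⟨rfl, rfl⟩ | ⟨rfl, rfl⟩
            · exact ha.symm
            · exact hb.symm
          exact_mod_cast this.trans (hΔ a)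
        have h4 : (0 : ℝ) ≤ 2 / (δ * ((δ : ℝ) - 1)) := by positivity
        have h5 := mul_le_mul_of_nonneg_right h3 h4
        have h6 : B (.inr (.inl q)) = Δ * (2 / (δ * ((δ : ℝ) - 1))) + 1 := by
          simp only [B, Sum.elim_inl, Sum.elim_inr]
          ring
        rw [h6]
        linarith
      · rw [Fintype.sum_sum_type]
        have h1 : ∀ u, ∑ o, (if A (.inr (.inr w)) (.inl u) o then y (.inl u) o else 0) = 0 := by
          intro u
          exact sum_eq_zero fun o _ => if_neg (hA3l _ _ _)
        have h2 : ∀ e, ∑ o, (if A (.inr (.inr w)) (.inr e) o then y (.inr e) o else 0) =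
            if HighEdge G D e ∧ w ∈ e then 1 - 2 / (δ : ℝ) else 0 := by
          intro e
          rw [Fintype.sum_option]
          simp only [hA3s, if_false, sum_const_zero, add_zero, hA3, hy3]
          split_ifs with h h' <;> first | rfl | exact absurd h.1 h'
        simp only [h1, h2, sum_const_zero, zero_add]
        refine (sum_ite_le_card_mul _ _ _ fun _ _ => le_rfl).trans ?_
        have h3 : ((univ.filter fun e => HighEdge G D e ∧ w ∈ e).card : ℝ) ≤ Δ := by
          exact_mod_cast ((Nat.le_add_left _ _).trans (hcount w)).trans (hΔ w)
        have h4 := mul_le_mul_of_nonneg_right h3 (by linarith : 0 ≤ 1 - 2 / (δ : ℝ))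
        exact h4.trans (le_of_eq (mul_comm _ _)))
  refine ⟨f, ?_, ?_, ?_, ?_, ?_, ?_, ?_⟩
  · intro u hu
    have h1 := hf0 (.inl u)
    rcases h2 : f (.inl u) with _ | p
    · rw [h2, hy1, if_pos hu] at h1
      exact absurd h1 (lt_irrefl _)
    · rw [h2, hy2] at h1
      split_ifs at h1 with h3
      · obtain ⟨a, b, ha, hb, hab, rfl⟩ := (mem_nbrPairs G u p).1 h3.2
        exact ⟨a, b, ha, hb, hab, rfl⟩
      · exact absurd h1 (lt_irrefl _)
  · intro u hu
    have h1 := hf0 (.inl u)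
    rcases h2 : f (.inl u) with _ | p
    · rfl
    · rw [h2, hy2, if_neg fun h => hu h.1] at h1
      exact absurd h1 (lt_irrefl _)
  · intro e _
    have h1 := hf0 (.inr e)
    rcases h2 : f (.inr e) with _ | p
    · exact .inl rfl
    · rw [h2, hy4] at h1
      split_ifs at h1 with h3
      · exact .inr (by rw [h3.2])
      · exact absurd h1 (lt_irrefl _)
  · intro e he
    have h1 := hf0 (.inr e)
    rcases h2 : f (.inr e) with _ | p
    · rfl
    · rw [h2, hy4, if_neg fun h => he h.1] at h1
      exact absurd h1 (lt_irrefl _)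
  · intro w S hS
    have := hf (.inl w) S fun i hi => hS i hi
    have hB : B (.inl w) = 2 * Δ / δ := rfl
    rw [hB] at this
    push_cast at this
    linarith
  · intro p S hS
    have := hf (.inr (.inl p)) S fun i hi => hS i hi
    have hB : B (.inr (.inl p)) = 2 * Δ / (δ * ((δ : ℝ) - 1)) + 1 := rfl
    rw [hB] at this
    push_cast at this
    linarith
  · intro w S hS
    have := hf (.inr (.inr w)) (S.map ⟨Sum.inr, Sum.inr_injective⟩) fun i hi => by
      obtain ⟨e, he, rfl⟩ := mem_map.1 hi
      obtain ⟨h1, h2, h3⟩ := hS e he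
      exact ⟨h2, e, rfl, h1, h3⟩
    have hB : B (.inr (.inr w)) = (1 - 2 / (δ : ℝ)) * Δ := rfl
    rw [hB, card_map] at this
    push_cast at this
    linarith

/-- Slots for the selected pairs and for the edges between high vertices, by Vizing's theorem: the
multigraph of selected pairs and selected edges uses the paired slots `Fin q`, and the other edges
between high vertices use the single slots `Fin O`. The isolated low vertex `u` selects the
neighbours `w₁ u` and `w₂ u`, and the edges to both receive the slot `idx u`. -/
theorem exists_core_slots (G : SimpleGraph V) (D Δ δ dM μM dO q O : ℕ) (hδ : 2 ≤ δ)
    (hmin : ∀ v, δ ≤ G.degree v) (hΔ : ∀ v, G.degree v ≤ Δ)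
    (hdM : 2 * (Δ : ℝ) / δ + 6 < dM + 1)
    (hμM : 2 * (Δ : ℝ) / (δ * ((δ : ℝ) - 1)) + 7 < μM + 1)
    (hdO : (1 - 2 / (δ : ℝ)) * Δ + 6 < dO + 1) (hq : dM + μM ≤ q) (hq0 : 0 < q)
    (hO : dO + 1 ≤ O) :
    ∃ (w₁ w₂ : V → V) (idx : V → Fin q) (σ : Sym2 V → Fin O ⊕ Fin q),
      (∀ u, Isolated G D u → G.Adj u (w₁ u) ∧ G.Adj u (w₂ u) ∧ w₁ u ≠ w₂ u) ∧
      (∀ e f v, HighEdge G D e → HighEdge G D f → e ≠ f → v ∈ e → v ∈ f → σ e ≠ σ f) ∧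
      (∀ u e v, Isolated G D u → HighEdge G D e → (v = w₁ u ∨ v = w₂ u) → v ∈ e →
        σ e ≠ .inr (idx u)) ∧
      (∀ u u' v, Isolated G D u → Isolated G D u' → u ≠ u' → (v = w₁ u ∨ v = w₂ u) →
        (v = w₁ u' ∨ v = w₂ u') → idx u ≠ idx u') := by
  obtain ⟨f, hf1, hf2, hf3, hf4, hload, hmult, hout⟩ := exists_selection G D Δ δ hδ hmin hΔ
  have hw : ∀ u, ∃ p : V × V, Isolated G D u →
      G.Adj u p.1 ∧ G.Adj u p.2 ∧ p.1 ≠ p.2 ∧ f (.inl u) = some s(p.1, p.2) := by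
    intro u
    by_cases hu : Isolated G D u
    · obtain ⟨a, b, h⟩ := hf1 u hu
      exact ⟨(a, b), fun _ => h⟩
    · exact ⟨(u, u), fun h => absurd h hu⟩
  choose w hw using hw
  have : Nonempty (Fin q) := ⟨⟨0, hq0⟩⟩
  have : Nonempty (Fin O) := ⟨⟨0, by omega⟩⟩
  have hnat : ∀ (S n : ℕ) (x : ℝ), (S : ℝ) ≤ x → x < n + 1 → S ≤ n := by
    intro S n x h1 h2
    have : (S : ℝ) < ((n + 1 : ℕ) : ℝ) := by
      push_cast
      linarith
    have := Nat.cast_lt.1 this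
    omega
  obtain hV | hV := isEmpty_or_nonempty V
  · exact ⟨id, id, fun u => isEmptyElim u, fun _ => .inr (Classical.arbitrary _),
      fun u => isEmptyElim u, fun _ _ v => isEmptyElim v, fun u => isEmptyElim u,
      fun u => isEmptyElim u⟩
  let v₀ : V := Classical.arbitrary V
  let ends : V ⊕ Sym2 V → Sym2 V := fun i => (f i).getD s(v₀, v₀)
  have hends : ∀ i p, f i = some p → ends i = p := by
    intro i p h
    simp [ends, h]
  have hget : ∀ i, f i ≠ none → f i = some (ends i) := by
    intro i h
    obtain ⟨p, hp⟩ := Option.ne_none_iff_exists'.1 h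
    rw [hends i p hp, hp]
  obtain ⟨c, hc⟩ := vizing (κ := Fin q) ends dM μM (by simpa using hq)
    (univ.filter fun i => f i ≠ none) (by
      intro i hi
      have hi := (mem_filter.1 hi).2
      rcases i with u | e
      · by_cases hu : Isolated G D u
        · obtain ⟨-, -, h3, h4⟩ := hw u hu
          rw [hends _ _ h4]
          simpa using h3
        · exact absurd (hf2 u hu) hi
      · by_cases he : HighEdge G D e
        · rw [hends _ _ ((hf3 e he).resolve_left hi)]
          exact G.not_isDiag_of_mem_edgeSet he.1
        · exact absurd (hf4 e he) hi) (by
      intro v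
      refine hnat _ _ _ (hload v _ fun i hi => ?_) hdM
      simp only [mem_filter, mem_univ, true_and] at hi
      exact ⟨_, hget i hi.1, hi.2⟩) (by
      intro p
      refine hnat _ _ _ (hmult p _ fun i hi => ?_) hμM
      simp only [mem_filter, mem_univ, true_and] at hi
      rw [hget i hi.1, hi.2])
  obtain ⟨c', hc'⟩ := vizing (κ := Fin O) (id : Sym2 V → Sym2 V) dO 1 (by simpa using hO)
    (univ.filter fun e => HighEdge G D e ∧ f (.inr e) = none) (by
      intro e he
      exact G.not_isDiag_of_mem_edgeSet (mem_filter.1 he).2.1.1) (by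
      intro v
      refine hnat _ _ _ (hout v _ fun e he => ?_) hdO
      simp only [mem_filter, mem_univ, true_and] at he
      exact ⟨he.1.1, he.1.2, he.2⟩) (by
      intro p
      refine card_le_one.2 fun a ha b hb => ?_
      simp only [mem_filter, id] at ha hb
      exact ha.2.trans hb.2.symm)
  have hmemT : ∀ i p, f i = some p → i ∈ univ.filter fun i => f i ≠ none := by
    intro i p h
    simp [h]
  have hiso : ∀ u v, Isolated G D u → (v = (w u).1 ∨ v = (w u).2) →
      (Sum.inl u : V ⊕ Sym2 V) ∈ (univ.filter fun i => f i ≠ none) ∧ v ∈ ends (.inl u) := by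
    intro u v hu hv
    obtain ⟨-, -, -, h⟩ := hw u hu
    refine ⟨hmemT _ _ h, ?_⟩
    rw [hends _ _ h]
    exact Sym2.mem_iff.2 hv
  refine ⟨fun u => (w u).1, fun u => (w u).2, fun u => c (.inl u),
    fun e => if f (.inr e) = none then .inl (c' e) else .inr (c (.inr e)), ?_, ?_, ?_, ?_⟩
  · intro u hu
    obtain ⟨h1, h2, h3, -⟩ := hw u hu
    exact ⟨h1, h2, h3⟩
  · intro e g v he hg hne hve hvg
    dsimp only
    split_ifs with h1 h2 h2
    · exact fun h => hc' e (mem_filter.2 ⟨mem_univ _, he, h1⟩) g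
        (mem_filter.2 ⟨mem_univ _, hg, h2⟩) hne v hve hvg (Sum.inl_injective h)
    · exact Sum.inl_ne_inr
    · exact Sum.inr_ne_inl
    · have h1' := (hf3 e he).resolve_left h1
      have h2' := (hf3 g hg).resolve_left h2
      exact fun h => hc _ (hmemT _ _ h1') _ (hmemT _ _ h2') (fun h => hne (Sum.inr_injective h)) v
        (by rwa [hends _ _ h1']) (by rwa [hends _ _ h2']) (Sum.inr_injective h)
  · intro u e v hu he hv hve
    obtain ⟨h2, h3⟩ := hiso u v hu hv
    dsimp only
    split_ifs with h1
    · exact Sum.inl_ne_inr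
    · have h1' := (hf3 e he).resolve_left h1
      exact fun h => hc _ (hmemT _ _ h1') _ h2 Sum.inr_ne_inl v
        (by rwa [hends _ _ h1']) h3 (Sum.inr_injective h)
  · intro u u' v hu hu' hne hv hv'
    obtain ⟨h2, h3⟩ := hiso u v hu hv
    obtain ⟨h2', h3'⟩ := hiso u' v hu' hv'
    exact hc _ h2 _ h2' (fun h => hne (Sum.inl_injective h)) v h3 h3'
end Selection

/-! ### Slots for all edges with a high end -/

section Slots
variable {V : Type*} [Fintype V]

/-- Greedy extension of the slots of `exists_core_slots` to all edges with a high end. Slots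
at a high vertex are distinct; slots at low vertices which are equal or adjacent are distinct,
except for the two selected edges at an isolated low vertex. -/
theorem exists_slots (G : SimpleGraph V) (D Δ δ dM μM dO q O : ℕ) (hδ : 2 ≤ δ)
    (hmin : ∀ v, δ ≤ G.degree v) (hΔ : ∀ v, G.degree v ≤ Δ)
    (hdM : 2 * (Δ : ℝ) / δ + 6 < dM + 1)
    (hμM : 2 * (Δ : ℝ) / (δ * ((δ : ℝ) - 1)) + 7 < μM + 1)
    (hdO : (1 - 2 / (δ : ℝ)) * Δ + 6 < dO + 1) (hq : dM + μM ≤ q) (hq0 : 0 < q)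
    (hO : dO + 1 ≤ O) (hOq : Δ + (D + 1) * D < O + q) :
    ∃ (w₁ w₂ : V → V) (σ : Sym2 V → Fin O ⊕ Fin q),
      (∀ u, G.degree u ≤ D → (∀ v, G.Adj u v → ¬ G.degree v ≤ D) →
        G.Adj u (w₁ u) ∧ G.Adj u (w₂ u) ∧ w₁ u ≠ w₂ u ∧
          ∃ i, σ s(u, w₁ u) = .inr i ∧ σ s(u, w₂ u) = .inr i) ∧
      (∀ w a b, ¬ G.degree w ≤ D → G.Adj w a → G.Adj w b → a ≠ b → σ s(w, a) ≠ σ s(w, b)) ∧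
      (∀ u w u' w', G.degree u ≤ D → G.degree u' ≤ D → ¬ G.degree w ≤ D → ¬ G.degree w' ≤ D →
        G.Adj u w → G.Adj u' w' → G.Adj u u' → σ s(u, w) ≠ σ s(u', w')) ∧
      (∀ u w w', G.degree u ≤ D → ¬ G.degree w ≤ D → ¬ G.degree w' ≤ D → G.Adj u w → G.Adj u w' →
        w ≠ w' → σ s(u, w) = σ s(u, w') → (∀ v, G.Adj u v → ¬ G.degree v ≤ D) ∧
          ((w = w₁ u ∧ w' = w₂ u) ∨ (w = w₂ u ∧ w' = w₁ u))) := by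
  obtain ⟨w₁, w₂, idx, σB, h1, h2, h3, h4⟩ :=
    exists_core_slots G D Δ δ dM μM dO q O hδ hmin hΔ hdM hμM hdO hq hq0 hO
  let L : V → Prop := fun v => G.degree v ≤ D
  let Sel : Sym2 V → V → Prop := fun e u =>
    Isolated G D u ∧ (e = s(u, w₁ u) ∨ e = s(u, w₂ u))
  -- a selected edge determines its low end, and its other end is one of the chosen neighbours
  have hSel : ∀ u a b, Sel s(a, b) u → ¬ L b → u = a ∧ (b = w₁ u ∨ b = w₂ u) := by
    rintro u a b ⟨hu, he⟩ hb
    have key : ∀ x, s(a, b) = s(u, x) → u = a ∧ b = x := by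
      intro x hx
      rcases Sym2.eq_iff.1 hx with ⟨h, h'⟩ | ⟨h, h'⟩
      · exact ⟨h.symm, h'⟩
      · exact absurd (h' ▸ hu.1) hb
    rcases he with he | he
    · exact ⟨(key _ he).1, .inl (key _ he).2⟩
    · exact ⟨(key _ he).1, .inr (key _ he).2⟩
  have hSelHigh : ∀ e u, Sel e u → ¬ HighEdge G D e := by
    rintro e u ⟨hu, he⟩ hH
    refine hH.2 u ?_ hu.1
    rcases he with rfl | rfl <;> simp
  have hSelUniq : ∀ e u u', Sel e u → Sel e u' → u = u' := by
    rintro e u u' hu hu'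
    obtain ⟨ha, hb, -⟩ := h1 u hu.1
    rcases hu.2 with rfl | rfl
    · exact (hSel u' _ _ hu' (hu.1.2 _ ha)).1.symm
    · exact (hSel u' _ _ hu' (hu.1.2 _ hb)).1.symm
  let σ₀ : Sym2 V → Fin O ⊕ Fin q := fun e =>
    if h : ∃ u, Sel e u then .inr (idx h.choose) else σB e
  have hσSel : ∀ e u, Sel e u → σ₀ e = .inr (idx u) := by
    intro e u hu
    have hex : ∃ u, Sel e u := ⟨u, hu⟩
    simp only [σ₀, dif_pos hex]
    rw [hSelUniq e _ u hex.choose_spec hu]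
  have hσHigh : ∀ e, HighEdge G D e → σ₀ e = σB e := by
    intro e he
    have hex : ¬ ∃ u, Sel e u := fun ⟨u, hu⟩ => hSelHigh e u hu he
    simp only [σ₀, dif_neg hex]
  let A : Set (Sym2 V) := {e | HighEdge G D e ∨ ∃ u, Sel e u}
  let conf : Sym2 V → Sym2 V → Prop := fun e f =>
    (e ∈ G.edgeSet ∧ ∃ v ∈ e, ¬ L v) ∧ (f ∈ G.edgeSet ∧ ∃ v ∈ f, ¬ L v) ∧
      ((∃ v, ¬ L v ∧ v ∈ e ∧ v ∈ f) ∨ ∃ u u', L u ∧ L u' ∧ u ∈ e ∧ u' ∈ f ∧ (u = u' ∨ G.Adj u u'))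
  obtain ⟨σ, hσA, hσ⟩ := greedy_colouring conf
    (by
      rintro e f ⟨he, hf, h⟩
      refine ⟨hf, he, ?_⟩
      rcases h with ⟨v, hv, h, h'⟩ | ⟨u, u', hu, hu', h, h', hh⟩
      · exact .inl ⟨v, hv, h', h⟩
      · refine .inr ⟨u', u, hu', hu, h', h, ?_⟩
        rcases hh with rfl | hh
        · exact .inl rfl
        · exact .inr hh.symm)
    A σ₀
    (by
      intro e he
      by_cases hc : e ∈ G.edgeSet ∧ ∃ v ∈ e, ¬ L v
      · obtain ⟨hee, w, hwe, hw⟩ := hc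
        obtain ⟨u, rfl⟩ := hwe
        have hu : L u := by
          by_contra hu
          refine he (.inl ⟨hee, fun v hv => ?_⟩)
          rcases Sym2.mem_iff.1 hv with rfl | rfl
          · exact hw
          · exact hu
        refine ⟨(univ.filter fun f => f ∈ G.edgeSet ∧ w ∈ f) ∪ (univ.filter fun f =>
          f ∈ G.edgeSet ∧ ∃ u' ∈ f, G.degree u' ≤ D ∧ (u = u' ∨ G.Adj u u')), ?_, ?_⟩
        · rintro f ⟨-, hf, ⟨v, hv, hve, hvf⟩ | ⟨a, a', ha, ha', hae, haf, hh⟩⟩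
          · rcases Sym2.mem_iff.1 hve with rfl | rfl
            · exact mem_union_left _ (mem_filter.2 ⟨mem_univ _, hf.1, hvf⟩)
            · exact absurd hu hv
          · rcases Sym2.mem_iff.1 hae with rfl | rfl
            · exact absurd ha hw
            · exact mem_union_right _ (mem_filter.2 ⟨mem_univ _, hf.1, a', haf, ha', hh⟩)
        · have e1 := card_incident_edges_le G w
          have e2 := card_near_edges_le G D u hu
          have e3 := hΔ w
          refine (card_union_le _ _).trans_lt ?_
          rw [Fintype.card_sum, Fintype.card_fin, Fintype.card_fin]
          omega
      · exact ⟨∅, fun f hf => absurd hf.1 hc, by simp; omega⟩)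
  have hin : ∀ e f, e ≠ f → conf e f → σ e = σ f → e ∈ A ∧ f ∈ A := by
    intro e f hne hcf heq
    by_contra hno
    exact hσ e f hne hcf (by tauto) heq
  have hAlow : ∀ a b, L a → ¬ L b → s(a, b) ∈ A → Isolated G D a ∧ (b = w₁ a ∨ b = w₂ a) := by
    rintro a b ha hb (h | ⟨u, hu⟩)
    · exact absurd ha (h.2 a (by simp))
    · obtain ⟨rfl, h⟩ := hSel u a b hu hb
      exact ⟨hu.1, h⟩
  refine ⟨w₁, w₂, σ, ?_, ?_, ?_, ?_⟩
  · intro u hu hu'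
    obtain ⟨ha, hb, hab⟩ := h1 u ⟨hu, hu'⟩
    have s1 : Sel s(u, w₁ u) u := ⟨⟨hu, hu'⟩, .inl rfl⟩
    have s2 : Sel s(u, w₂ u) u := ⟨⟨hu, hu'⟩, .inr rfl⟩
    refine ⟨ha, hb, hab, idx u, ?_, ?_⟩
    · rw [hσA _ (.inr ⟨u, s1⟩), hσSel _ u s1]
    · rw [hσA _ (.inr ⟨u, s2⟩), hσSel _ u s2]
  · intro w a b hw ha hb hab heq
    have hne : s(w, a) ≠ s(w, b) := fun h => hab (Sym2.congr_right.1 h)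
    obtain ⟨hA1, hA2⟩ := hin _ _ hne ⟨⟨ha, w, by simp, hw⟩, ⟨hb, w, by simp, hw⟩,
      .inl ⟨w, hw, by simp, by simp⟩⟩ heq
    rw [hσA _ hA1, hσA _ hA2] at heq
    have hwSel : ∀ x u, Sel s(w, x) u → u = x ∧ (w = w₁ u ∨ w = w₂ u) := by
      intro x u hu
      rw [Sym2.eq_swap] at hu
      exact hSel u x w hu hw
    rcases hA1 with hA1 | ⟨u, hu⟩ <;> rcases hA2 with hA2 | ⟨u', hu'⟩
    · rw [hσHigh _ hA1, hσHigh _ hA2] at heq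
      exact h2 _ _ w hA1 hA2 hne (by simp) (by simp) heq
    · rw [hσHigh _ hA1, hσSel _ _ hu'] at heq
      exact h3 u' _ w hu'.1 hA1 (hwSel _ _ hu').2 (by simp) heq
    · rw [hσHigh _ hA2, hσSel _ _ hu] at heq
      exact h3 u _ w hu.1 hA2 (hwSel _ _ hu).2 (by simp) heq.symm
    · rw [hσSel _ _ hu, hσSel _ _ hu'] at heq
      obtain ⟨rfl, hx⟩ := hwSel _ _ hu
      obtain ⟨rfl, hx'⟩ := hwSel _ _ hu'
      exact h4 u u' w hu.1 hu'.1 hab hx hx' (Sum.inr_injective heq)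
  · intro u w u' w' hu hu' hw hw' huw huw' huu heq
    have hne : s(u, w) ≠ s(u', w') := by
      intro h
      rcases Sym2.eq_iff.1 h with ⟨h, -⟩ | ⟨h, -⟩
      · exact huu.ne h
      · exact hw' (h ▸ hu)
    obtain ⟨hA1, -⟩ := hin _ _ hne ⟨⟨huw, w, by simp, hw⟩, ⟨huw', w', by simp, hw'⟩,
      .inr ⟨u, u', hu, hu', by simp, by simp, .inr huu⟩⟩ heq
    exact (hAlow u w hu hw hA1).1.2 u' huu hu'
  · intro u w w' hu hw hw' huw huw' hww heq
    have hne : s(u, w) ≠ s(u, w') := fun h => hww (Sym2.congr_right.1 h)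
    obtain ⟨hA1, hA2⟩ := hin _ _ hne ⟨⟨huw, w, by simp, hw⟩, ⟨huw', w', by simp, hw'⟩,
      .inr ⟨u, u, hu, hu, by simp, by simp, .inl rfl⟩⟩ heq
    obtain ⟨hi, h5⟩ := hAlow u w hu hw hA1
    obtain ⟨-, h6⟩ := hAlow u w' hu hw' hA2
    refine ⟨hi.2, ?_⟩
    rcases h5 with h5 | h5 <;> rcases h6 with h6 | h6
    · exact absurd (h5.trans h6.symm) hww
    · exact .inl ⟨h5, h6⟩
    · exact .inr ⟨h5, h6⟩
    · exact absurd (h5.trans h6.symm) hww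
end Slots

/-! ### Combining the colour groups -/

section Combine
variable {V : Type*} [Fintype V] {ιY ιR ιQ ιO ιP : Type*}

/-- The combined colouring: an edge with two low ends takes its colour in `Y`, any other edge its mark
in `Q` if it has one, else its mark in `R` if it has one, else the colour of its slot, where a bit
selects the colour of a paired slot. -/
noncomputable def combine (L : V → Prop) (y : Sym2 V → ιY) (own : Sym2 V → Option ιQ)
    (rr : Sym2 V → Option ιR) (σ : Sym2 V → ιO ⊕ ιP) (bit : Sym2 V → Bool) (e : Sym2 V) :
    ιY ⊕ ιQ ⊕ ιR ⊕ ιO ⊕ ιP × Bool :=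
  if ∀ v ∈ e, L v then .inl (y e) else
    match own e with
    | some a => .inr (.inl a)
    | none => match rr e with
      | some b => .inr (.inr (.inl b))
      | none => match σ e with
        | .inl o => .inr (.inr (.inr (.inl o)))
        | .inr i => .inr (.inr (.inr (.inr (i, bit e))))

theorem combine_cases (L : V → Prop) (y : Sym2 V → ιY) (own : Sym2 V → Option ιQ)
    (rr : Sym2 V → Option ιR) (σ : Sym2 V → ιO ⊕ ιP) (bit : Sym2 V → Bool) {e f : Sym2 V}
    (h : combine L y own rr σ bit e = combine L y own rr σ bit f) :
    ((∀ v ∈ e, L v) ∧ (∀ v ∈ f, L v) ∧ y e = y f) ∨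
    ((¬ ∀ v ∈ e, L v) ∧ (¬ ∀ v ∈ f, L v) ∧
      ((∃ a, own e = some a ∧ own f = some a) ∨
      (own e = none ∧ own f = none ∧ ((∃ b, rr e = some b ∧ rr f = some b) ∨
        (rr e = none ∧ rr f = none ∧ σ e = σ f ∧ (∀ i, σ e = .inr i → bit e = bit f)))))) := by
  unfold combine at h
  split_ifs at h with h1 h2 h2
  · exact .inl ⟨h1, h2, by simpa using h⟩
  · exfalso
    revert h
    rcases own f with _ | a <;> rcases rr f with _ | b <;> rcases σ f with o | i <;> simp
  · exfalso
    revert h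
    rcases own e with _ | a <;> rcases rr e with _ | b <;> rcases σ e with o | i <;> simp
  · refine .inr ⟨h1, h2, ?_⟩
    revert h
    rcases own e with _ | a <;> rcases own f with _ | a' <;> rcases rr e with _ | b <;>
      rcases rr f with _ | b' <;> rcases σ e with o | i <;> rcases σ f with o' | i' <;>
      simp <;> tauto

/-- The combined colouring is inclusion-free, as soon as the colour groups do what they are made
for. The predicate `L` stands for the low vertices. -/
theorem combine_inclusion_free (G : SimpleGraph V) (L : V → Prop)
    (hdeg : ∀ u v, ¬ L u → L v → G.degree v < G.degree u) (hmin : ∀ u, 2 ≤ G.degree u)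
    (y : Sym2 V → ιY) (own : Sym2 V → Option ιQ)
    (rr : Sym2 V → Option ιR) (σ : Sym2 V → ιO ⊕ ιP) (w₁ w₂ : V → V)
    (hY : ∀ u v u' v', L u → L v → L u' → L v' → G.Adj u v → G.Adj u' v' → (u = u' ∨ G.Adj u u') →
      s(u, v) ≠ s(u', v') → y s(u, v) ≠ y s(u', v'))
    (hQ0 : ∀ u v, L u → own s(u, v) = none)
    (hQ1 : ∀ u v w a, v ≠ w → own s(u, v) = some a → own s(u, w) ≠ some a)
    (hR0 : ∀ u v, rr s(u, v) ≠ none → (L u ↔ ¬ L v))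
    (hR1 : ∀ u v w, ¬ L u → rr s(u, v) ≠ none → rr s(u, w) ≠ none → v = w)
    (hR2 : ∀ u w u' w' x a, L u → G.Adj u w → L u' → (u = u' ∨ G.Adj u u') → G.Adj u' w' →
      ¬ L w' → w ≠ w' → rr s(u, w) = some a → rr s(w', x) ≠ some a)
    (hQR : ∀ u v, ¬ L u → ¬ L v → G.Adj u v →
      (∃ w a, G.Adj u w ∧ own s(u, w) = some a ∧ ∀ x, own s(v, x) ≠ some a) ∨
      (∃ w a, G.Adj u w ∧ rr s(u, w) = some a ∧ ∀ x, rr s(v, x) ≠ some a))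
    (hS0 : ∀ u, L u → (∀ v, G.Adj u v → ¬ L v) → G.Adj u (w₁ u) ∧ G.Adj u (w₂ u) ∧ w₁ u ≠ w₂ u ∧
      ∃ i, σ s(u, w₁ u) = .inr i ∧ σ s(u, w₂ u) = .inr i)
    (hS1 : ∀ w a b, ¬ L w → G.Adj w a → G.Adj w b → a ≠ b → σ s(w, a) ≠ σ s(w, b))
    (hS2 : ∀ u w u' w', L u → L u' → ¬ L w → ¬ L w' → G.Adj u w → G.Adj u' w' → G.Adj u u' →
      σ s(u, w) ≠ σ s(u', w'))
    (hS3 : ∀ u w w', L u → ¬ L w → ¬ L w' → G.Adj u w → G.Adj u w' → w ≠ w' →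
      σ s(u, w) = σ s(u, w') → (∀ v, G.Adj u v → ¬ L v) ∧
        ((w = w₁ u ∧ w' = w₂ u) ∨ (w = w₂ u ∧ w' = w₁ u))) :
    ∃ c : Sym2 V → ιY ⊕ ιQ ⊕ ιR ⊕ ιO ⊕ ιP × Bool,
      (∀ u v w, G.Adj u v → G.Adj u w → v ≠ w → c s(u, v) ≠ c s(u, w)) ∧
      (∀ u v, G.Adj u v → ∃ w, G.Adj u w ∧ ∀ x, G.Adj v x → c s(v, x) ≠ c s(u, w)) := by
  let bit : Sym2 V → Bool := fun e =>
    decide (∃ u, L u ∧ (∀ v, G.Adj u v → ¬ L v) ∧ e = s(u, w₂ u))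
  have hbit2 : ∀ u, L u → (∀ v, G.Adj u v → ¬ L v) → bit s(u, w₂ u) = true := fun u h h' => by
    simp only [bit, decide_eq_true_eq]
    exact ⟨u, h, h', rfl⟩
  have hbit1 : ∀ u, L u → (∀ v, G.Adj u v → ¬ L v) → bit s(u, w₁ u) = false := fun u h h' => by
    simp only [bit, decide_eq_false_iff_not]
    rintro ⟨u', hu', hu'', he⟩
    obtain ⟨h1, h2, h3, _⟩ := hS0 u h h'
    have h2' := (hS0 u' hu' hu'').2.1
    rcases Sym2.eq_iff.1 he with ⟨rfl, h4⟩ | ⟨h4, h5⟩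
    · exact h3 h4
    · exact hu'' _ h2' (h4 ▸ h)
  let c := combine L y own rr σ bit
  have hLL : ∀ u v, (∀ a ∈ s(u, v), L a) ↔ L u ∧ L v := by
    intro u v
    simp
  have hproper : ∀ u v w, G.Adj u v → G.Adj u w → v ≠ w → c s(u, v) ≠ c s(u, w) := by
    intro u v w huv huw hvw h
    have hne : s(u, v) ≠ s(u, w) := fun h => hvw (Sym2.congr_right.1 h)
    rcases combine_cases L y own rr σ bit h with ⟨h1, h2, h3⟩ | ⟨h1, h2, h3⟩
    · rw [hLL] at h1 h2
      exact hY u v u w h1.1 h1.2 h2.1 h2.2 huv huw (.inl rfl) hne h3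
    · rw [hLL] at h1 h2
      rcases h3 with ⟨a, ha, hb⟩ | ⟨-, -, ⟨a, ha, hb⟩ | ⟨-, -, hs, hb⟩⟩
      · exact hQ1 u v w a hvw ha hb
      · by_cases hu : L u
        · exact hR2 u v u w u a hu huv hu (.inl rfl) huw (fun h => h2 ⟨hu, h⟩) hvw ha
            (by rw [Sym2.eq_swap]; exact hb)
        · exact hvw (hR1 u v w hu (by simp [ha]) (by simp [hb]))
      · by_cases hu : L u
        · obtain ⟨hz, hw⟩ := hS3 u v w hu (fun h => h1 ⟨hu, h⟩) (fun h => h2 ⟨hu, h⟩) huv huw hvw hs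
          obtain ⟨_, _, _, i, hi1, hi2⟩ := hS0 u hu hz
          rcases hw with ⟨rfl, rfl⟩ | ⟨rfl, rfl⟩
          · have := hb i hi1
            rw [hbit1 u hu hz, hbit2 u hu hz] at this
            exact absurd this (by simp)
          · have := hb i hi2
            rw [hbit1 u hu hz, hbit2 u hu hz] at this
            exact absurd this (by simp)
        · exact hS1 u v w hu huv huw hvw hs
  refine ⟨c, hproper, ?_⟩
  intro u v huv
  by_cases hu : L u
  · by_cases hz : ∀ v, G.Adj u v → ¬ L v
    · -- all neighbours of `u` have large degree: use the two selected edges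
      obtain ⟨hw1, hw2, hw, i, hi1, hi2⟩ := hS0 u hu hz
      have hv : ¬ L v := hz v huv
      have hRcase : ∀ w, G.Adj u w → w ≠ v → rr s(u, w) ≠ none →
          ∃ w, G.Adj u w ∧ ∀ x, G.Adj v x → c s(v, x) ≠ c s(u, w) := by
        intro w huw hwv hrr
        refine ⟨w, huw, fun x hvx h => ?_⟩
        rcases combine_cases L y own rr σ bit h with ⟨h1, h2, h3⟩ | ⟨h1, h2, h3⟩
        · exact hv ((hLL _ _).1 h1).1
        · rcases h3 with ⟨a, ha, hb⟩ | ⟨-, -, ⟨a, ha, hb⟩ | ⟨-, h4, -, -⟩⟩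
          · rw [hQ0 u w hu] at hb
            exact absurd hb (by simp)
          · exact hR2 u w u v x a hu huw hu (.inl rfl) huv hv hwv hb ha
          · exact hrr h4
      have hPcase : ∀ w, G.Adj u w → σ s(u, w) = .inr i → rr s(u, w) = none →
          ∀ x, G.Adj v x → c s(v, x) = c s(u, w) →
          rr s(v, x) = none ∧ σ s(v, x) = .inr i ∧ bit s(v, x) = bit s(u, w) := by
        intro w huw hσ hrr x hvx h
        rcases combine_cases L y own rr σ bit h with ⟨h1, h2, h3⟩ | ⟨h1, h2, h3⟩
        · exact absurd ((hLL _ _).1 h1).1 hv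
        · rcases h3 with ⟨a, ha, hb⟩ | ⟨-, -, ⟨a, ha, hb⟩ | ⟨h3, -, h4, h5⟩⟩
          · rw [hQ0 u w hu] at hb
            exact absurd hb (by simp)
          · rw [hrr] at hb
            exact absurd hb (by simp)
          · exact ⟨h3, h4.trans hσ, h5 i (h4.trans hσ)⟩
      have huniq : ∀ x x', G.Adj v x → G.Adj v x' → σ s(v, x) = .inr i → σ s(v, x') = .inr i →
          x = x' := by
        intro x x' hx hx' h h'
        by_contra hne
        exact hS1 v x x' hv hx hx' hne (h.trans h'.symm)
      by_cases h1 : w₁ u ≠ v ∧ rr s(u, w₁ u) ≠ none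
      · exact hRcase _ hw1 h1.1 h1.2
      by_cases h2 : w₂ u ≠ v ∧ rr s(u, w₂ u) ≠ none
      · exact hRcase _ hw2 h2.1 h2.2
      have hmix : ∀ w w', G.Adj u w → G.Adj u w' → w ≠ w' → σ s(u, w) = .inr i →
          σ s(u, w') = .inr i → rr s(u, w) ≠ none → w = v → ¬ (w' ≠ v ∧ rr s(u, w') ≠ none) →
          ∃ w, G.Adj u w ∧ ∀ x, G.Adj v x → c s(v, x) ≠ c s(u, w) := by
        rintro w w' huw huw' hww' hσ hσ' hrr rfl hcon
        have hrr' : rr s(u, w') = none := by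
          by_contra hne
          exact hcon ⟨hww'.symm, hne⟩
        refine ⟨w', huw', fun x hvx h => ?_⟩
        obtain ⟨h3, h4, -⟩ := hPcase w' huw' hσ' hrr' x hvx h
        have : x = u := huniq x u hvx huw.symm h4 (by rw [Sym2.eq_swap]; exact hσ)
        subst this
        rw [Sym2.eq_swap] at h3
        exact hrr h3
      by_cases h3 : rr s(u, w₁ u) = none
      · by_cases h4 : rr s(u, w₂ u) = none
        · by_contra hcon
          push Not at hcon
          obtain ⟨x, hx, hxe⟩ := hcon _ hw1
          obtain ⟨x', hx', hxe'⟩ := hcon _ hw2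
          obtain ⟨-, h5, h6⟩ := hPcase _ hw1 hi1 h3 x hx hxe
          obtain ⟨-, h5', h6'⟩ := hPcase _ hw2 hi2 h4 x' hx' hxe'
          have := huniq x x' hx hx' h5 h5'
          rw [this, h6', hbit1 u hu hz, hbit2 u hu hz] at h6
          exact absurd h6 (by simp)
        · exact hmix _ _ hw2 hw1 hw.symm hi2 hi1 h4 (by by_contra h; exact h2 ⟨h, h4⟩) h1
      · exact hmix _ _ hw1 hw2 hw hi1 hi2 h3 (by by_contra h; exact h1 ⟨h, h3⟩) h2
    · push Not at hz
      obtain ⟨v₁, huv1, hv1⟩ := hz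
      by_cases hex : ∃ v₁, G.Adj u v₁ ∧ L v₁ ∧ v₁ ≠ v
      · obtain ⟨v₁, huv1, hv1, hne⟩ := hex
        refine ⟨v₁, huv1, fun x hvx h => ?_⟩
        rcases combine_cases L y own rr σ bit h with ⟨h1, h2, h3⟩ | ⟨h1, h2, h3⟩
        · rw [hLL] at h1 h2
          refine hY v x u v₁ h1.1 h1.2 h2.1 h2.2 hvx huv1 (.inr huv.symm) ?_ h3
          intro he
          rcases Sym2.eq_iff.1 he with ⟨h4, h5⟩ | ⟨h4, h5⟩
          · exact huv.ne h4.symm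
          · exact hne h4.symm
        · exact h2 ((hLL _ _).2 ⟨hu, hv1⟩)
      · -- the only neighbour of small degree is `v`
        have hv : L v := by
          by_contra hv
          exact hex ⟨v₁, huv1, hv1, fun h => hv (h ▸ hv1)⟩
        obtain ⟨w, hw, hwv⟩ : ∃ w, G.Adj u w ∧ w ≠ v := by
          have h1 : 1 < (G.neighborFinset u).card := by
            rw [SimpleGraph.card_neighborFinset_eq_degree]
            exact hmin u
          obtain ⟨w, hw, hwv⟩ := exists_mem_ne h1 v
          exact ⟨w, by simpa using hw, hwv⟩
        have hwL : ¬ L w := fun h => hex ⟨w, hw, h, hwv⟩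
        refine ⟨w, hw, fun x hvx h => ?_⟩
        rcases combine_cases L y own rr σ bit h with ⟨h1, h2, h3⟩ | ⟨h1, h2, h3⟩
        · exact hwL ((hLL _ _).1 h2).2
        · have hxL : ¬ L x := fun h => h1 ((hLL _ _).2 ⟨hv, h⟩)
          rcases h3 with ⟨a, ha, hb⟩ | ⟨-, -, ⟨a, ha, hb⟩ | ⟨h3, -, h4, h5⟩⟩
          · rw [hQ0 u w hu] at hb
            exact absurd hb (by simp)
          · by_cases hxw : x = w
            · subst hxw
              rw [Sym2.eq_swap] at ha hb
              exact huv.ne (hR1 x u v hwL (by simp [hb]) (by simp [ha]))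
            · exact hR2 u w v x v a hu hw hv (.inr huv) hvx hxL (fun h => hxw h.symm) hb
                (by rw [Sym2.eq_swap]; exact ha)
          · exact hS2 u w v x hu hv hwL hxL hw hvx huv h4.symm
  · by_cases hv : L v
    · exact exists_new_colour_of_degree_lt G c hproper (hdeg u v hu hv)
    · rcases hQR u v hu hv huv with ⟨w, a, huw, ha, hx⟩ | ⟨w, a, huw, ha, hx⟩
      · refine ⟨w, huw, fun x hvx h => ?_⟩
        rcases combine_cases L y own rr σ bit h with ⟨h1, h2, h3⟩ | ⟨h1, h2, h3⟩
        · exact hu ((hLL _ _).1 h2).1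
        · rcases h3 with ⟨b, hb, hc⟩ | ⟨-, h4, -⟩
          · rw [ha] at hc
            exact hx x (hb.trans hc.symm)
          · rw [ha] at h4
            exact absurd h4 (by simp)
      · refine ⟨w, huw, fun x hvx h => ?_⟩
        have hwL : L w := by
          by_contra hw
          exact hu ((hR0 u w (by simp [ha])).2 hw)
        rcases combine_cases L y own rr σ bit h with ⟨h1, h2, h3⟩ | ⟨h1, h2, h3⟩
        · exact hu ((hLL _ _).1 h2).1
        · rcases h3 with ⟨b, hb, hc⟩ | ⟨-, -, ⟨b, hb, hc⟩ | ⟨-, h4, -⟩⟩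
          · rw [Sym2.eq_swap, hQ0 w u hwL] at hc
            exact absurd hc (by simp)
          · rw [ha] at hc
            exact hx x (hb.trans hc.symm)
          · rw [ha] at h4
            exact absurd h4 (by simp)
end Combine

/-! ### The numerical bound -/

section Assembly
open scoped Classical

/-- The bound with an explicit constant. It depends on `δ` only, since `D = 1680 δ`. -/
theorem index_le {V : Type*} [Fintype V] (G : SimpleGraph V) (δ Δ : ℕ) (hδ : 2 ≤ δ)
    (hmin : ∀ v, δ ≤ G.degree v) (hΔ : ∀ v, G.degree v ≤ Δ) :
    (inclusionChromaticIndex G : ℝ) ≤ (1 + 4 / ((δ : ℝ) - 1)) * Δ +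
      (3 * ((1680 * (δ : ℝ) + 1) * (1680 * δ)) +
        2 * (2 * (1680 * (δ : ℝ)) + 1680 * δ * (1680 * δ)) + 4 * δ + 455) := by
  obtain ⟨D, hD⟩ : ∃ D, D = 1680 * δ := ⟨_, rfl⟩
  have hδ' : (2 : ℝ) ≤ δ := by exact_mod_cast hδ
  have hδ0 : (0 : ℝ) < δ := by linarith
  have hδ1 : (0 : ℝ) < (δ : ℝ) - 1 := by linarith
  have hDr : (D : ℝ) = 1680 * δ := by
    rw [hD]
    push_cast
    ring
  -- integer parts of the real bounds
  have hfl : ∀ x : ℝ, 0 ≤ x → ∃ k : ℕ, (k : ℝ) ≤ x ∧ x < k + 1 := fun x hx =>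
    ⟨⌊x⌋₊, Nat.floor_le hx, Nat.lt_floor_add_one x⟩
  have h2δ : 2 / (δ : ℝ) ≤ 1 := (div_le_one hδ0).2 hδ'
  obtain ⟨m, hm, hm'⟩ := hfl (84 * (Δ : ℝ) / D + 20) (by positivity)
  obtain ⟨dM, hdM, hdM'⟩ := hfl (2 * (Δ : ℝ) / δ + 6) (by positivity)
  obtain ⟨μM, hμM, hμM'⟩ := hfl (2 * (Δ : ℝ) / (δ * ((δ : ℝ) - 1)) + 7) (by positivity)
  obtain ⟨dO, hdO, hdO'⟩ := hfl ((1 - 2 / (δ : ℝ)) * Δ + 6) (by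
    have := mul_nonneg (sub_nonneg.2 h2δ) (Nat.cast_nonneg (α := ℝ) Δ)
    linarith)
  have hsplit : (1 - 2 / (δ : ℝ)) * Δ = Δ - 2 * (Δ : ℝ) / δ := by ring
  have hOq : Δ + (D + 1) * D < (dO + 1 + (D + 1) * D) + (dM + μM) := by
    have : (Δ : ℝ) < ((dO + 1 + (dM + μM) : ℕ) : ℝ) := by
      push_cast
      have : (0 : ℝ) ≤ μM := Nat.cast_nonneg _
      linarith
    have := Nat.cast_lt.1 this
    omega
  have hq0 : 0 < dM + μM := by
    have : (0 : ℝ) < dM := by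
      have : (0 : ℝ) ≤ 2 * (Δ : ℝ) / δ := by positivity
      linarith
    have : 0 < dM := by exact_mod_cast this
    omega
  obtain ⟨y, hY⟩ := exists_low_colouring (X := Fin (2 * ((D + 1) * D) + 1)) G D (by simp)
  obtain ⟨own, hQ0, hQ1, hQ2⟩ := exists_big_marks G D Δ m (5 * m + 4 + Nat.sqrt Δ + 1) (by omega) hΔ
    hm' le_rfl
  obtain ⟨rr, hR0, hR1, hR2, hR3⟩ := exists_small_marks (X := Fin (2 * (2 * D + D * D) + 1)) G D
    (by simp)
  obtain ⟨w₁, w₂, σ, hS0, hS1, hS2, hS3⟩ := exists_slots G D Δ δ dM μM dO (dM + μM)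
    (dO + 1 + (D + 1) * D) hδ hmin hΔ hdM' hμM' hdO' le_rfl hq0 (by omega) hOq
  obtain ⟨c, hp, hi⟩ := combine_inclusion_free G (fun v => G.degree v ≤ D)
    (fun u v hu hv => lt_of_le_of_lt hv (not_le.1 hu)) (fun u => hδ.trans (hmin u))
    y own rr σ w₁ w₂ hY hQ0 hQ1 hR0 hR1 hR2
    (by
      intro u v hu hv huv
      rcases lt_or_ge (highDegree G D u) D with h | h
      · obtain ⟨w, a, h1, h2, h3⟩ := hR3 u hu h
        exact .inr ⟨w, a, h1, h2, h3 v huv hv⟩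
      · exact .inl (hQ2 u v hu h huv))
    hS0 hS1 hS2 hS3
  have hcard := inclusionChromaticIndex_le_card G c hp hi
  simp only [Fintype.card_sum, Fintype.card_prod, Fintype.card_fin, Fintype.card_bool] at hcard
  have hcard' : (inclusionChromaticIndex G : ℝ) ≤ _ := Nat.cast_le.2 hcard
  push_cast at hcard'
  -- `D = 1680 δ` and `4 * 5 * 84 = 1680` make the part of `Q` linear in `Δ` equal to `Δ / δ`
  have e1 : 84 * (Δ : ℝ) / D = Δ / δ / 20 := by
    rw [hDr]
    field_simp
    ring
  -- the part `4 √Δ` of `Q` is absorbed by the other `Δ / δ`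
  have e2 : 4 * (Nat.sqrt Δ : ℝ) ≤ Δ / δ + 4 * δ := by
    have h1 : (Nat.sqrt Δ : ℝ) * Nat.sqrt Δ ≤ Δ := by exact_mod_cast Nat.sqrt_le Δ
    have h2 := sq_nonneg ((Nat.sqrt Δ : ℝ) - 2 * δ)
    have h3 : 4 * (Nat.sqrt Δ : ℝ) - 4 * δ ≤ Δ / δ := by
      rw [le_div_iff₀ hδ0]
      nlinarith
    linarith
  have e3 : 4 / ((δ : ℝ) - 1) * Δ =
      2 * (2 * (Δ : ℝ) / δ) + 2 * (2 * (Δ : ℝ) / (δ * ((δ : ℝ) - 1))) := by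
    field_simp
    ring
  have e4 : 2 * (Δ : ℝ) / δ = 2 * (Δ / δ) := by ring
  rw [e1] at hm
  rw [hDr] at hcard'
  rw [add_mul, one_mul, e3]
  linarith
end Assembly

end InclusionColouring

theorem corollary_additive_constant (δ : ℕ) (h2 : 2 ≤ δ) :
    ∃ C : ℝ, ∀ (V : Type) [Fintype V] (G : SimpleGraph V) [DecidableRel G.Adj] (Δ : ℕ),
      G.minDegree = δ → G.maxDegree = Δ →
      (inclusionChromaticIndex G : ℝ) ≤ (1 + 4 / ((δ : ℝ) - 1)) * Δ + C := by
  refine ⟨_, fun V _ G _ Δ hmin hmax => index_le G δ Δ h2 (fun v => ?_) fun v => ?_⟩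
  · rw [← hmin]
    convert G.minDegree_le_degree v
  · rw [← hmax]
    convert G.degree_le_maxDegree v
end

section
/- Fix an integer δ ≥ 3. There exists Δ₀ such that the following holds for every graph G of minimum degree δ and maximum degree Δ ≥ Δ₀. Define S = {v ∈ V(G) : d(v) ≤ Δ^{2/3}(log Δ)^4} and B = {v ∈ V(G) : d(v) > Δ^{2/3}(log Δ)^4} (log denoting the natural logarithm), let S₀ = {v ∈ S : v has no neighbour in S} and S₁ = {v ∈ S : v has exactly one neighbour in S}, and let H be the bipartite subgraph of G induced by all edges between S₀ ∪ S₁ and B. Then there exist a subgraph G' of G minus the edges of G[S], and a subgraph H' which is both a subgraph of G' and of H, such that: (i) every v ∈ S₀ has degree exactly 2 in H'; (ii) every v ∈ S₁ has degree exactly 1 in H'; (iii) every v ∈ B has degree at least (2/δ)·d(v) − 2·√Δ·log Δ in G'; (iv) every v ∈ B has degree at most d(v)·(2/δ)·(1 + δ/Δ^{1/3}) in G', where d(v) denotes the degree of v in G. -/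
/-! ### Rounding edge weights of bipartite graphs -/

open Finset in
/-- Fewer homogeneous linear equations than variables: there is a nonzero solution supported
on `P`. -/
theorem exists_kernel_vector {ι κ : Type*} [Fintype ι] [DecidableEq ι] [Fintype κ]
    (P : Finset ι) (s : Finset κ) (M : κ → ι → ℝ) (h : #s < #P) :
    ∃ k : ι → ℝ, (∃ i, k i ≠ 0) ∧ (∀ i, k i ≠ 0 → i ∈ P) ∧ ∀ c ∈ s, ∑ i, M c i * k i = 0 := by
  classical
  let f : (P → ℝ) →ₗ[ℝ] (s → ℝ) := Matrix.mulVecLin (Matrix.of fun c i => M c.1 i.1)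
  have hf : Module.finrank ℝ (s → ℝ) < Module.finrank ℝ (P → ℝ) := by simpa using h
  obtain ⟨v, hv, hv0⟩ := Submodule.exists_mem_ne_zero_of_ne_bot (f.ker_ne_bot_of_finrank_lt hf)
  obtain ⟨i, hi⟩ := Function.ne_iff.1 hv0
  refine ⟨fun j => if hj : j ∈ P then v ⟨j, hj⟩ else 0, ⟨i, by simpa using hi⟩, ?_, ?_⟩
  · intro j hj
    by_contra h'
    simp [h'] at hj
  · intro c hc
    have := congrFun (LinearMap.mem_ker.1 hv) ⟨c, hc⟩
    simp only [f, Matrix.mulVecLin_apply, Matrix.mulVec, dotProduct, Matrix.of_apply,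
      Pi.zero_apply] at this
    refine Eq.trans ?_ this
    rw [← Finset.sum_subset (Finset.subset_univ P), ← Finset.sum_coe_sort]
    · simp
    · intro j _ hj
      simp [hj]

/-- Moving a point of the cube `[0, 1]^ι` along a direction supported on its fractional
coordinates, one can stay in the cube until a fractional coordinate becomes integral. -/
theorem exists_boundary_move {ι : Type*} [Fintype ι] (x k : ι → ℝ)
    (hx : ∀ i, 0 ≤ x i ∧ x i ≤ 1) (hk : ∃ i, k i ≠ 0)
    (hfloat : ∀ i, k i ≠ 0 → 0 < x i ∧ x i < 1) :
    ∃ t : ℝ, (∀ i, 0 ≤ x i + t * k i ∧ x i + t * k i ≤ 1) ∧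
      ∃ i, (0 < x i ∧ x i < 1) ∧ ¬ (0 < x i + t * k i ∧ x i + t * k i < 1) := by
  classical
  let g : ι → ℝ := fun i => if 0 < k i then (1 - x i) / k i else x i / (- k i)
  obtain ⟨i₀, hi₀⟩ := hk
  obtain ⟨i, hi, hmin⟩ := Finset.exists_min_image (Finset.univ.filter fun i => k i ≠ 0) g
    ⟨i₀, by simpa using hi₀⟩
  have hki : k i ≠ 0 := by simpa using hi
  have hgi : 0 ≤ g i := by
    have := hx i
    simp only [g]
    split_ifs with h
    · exact div_nonneg (by linarith) h.le
    · exact div_nonneg this.1 (by linarith)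
  refine ⟨g i, ?_, i, hfloat i hki, ?_⟩
  · intro j
    have hxj := hx j
    rcases lt_trichotomy (k j) 0 with hj | hj | hj
    · have h1 := hmin j (by simp [hj.ne])
      simp only [g, not_lt.2 hj.le, if_false] at h1
      rw [le_div_iff₀ (by linarith)] at h1
      change g i * _ ≤ _ at h1
      constructor <;> nlinarith
    · simpa [hj] using hxj
    · have h1 := hmin j (by simp [hj.ne'])
      simp only [g, hj, if_true] at h1
      rw [le_div_iff₀ hj] at h1
      change g i * _ ≤ _ at h1
      constructor <;> nlinarith
  · simp only [g]
    split_ifs with h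
    · rw [div_mul_cancel₀ _ hki]
      intro h'
      linarith [h'.2]
    · have : x i / (-k i) * k i = - x i := by field_simp
      rw [this]
      intro h'
      linarith [h'.1]

open Finset in
/-- The Beck–Fiala induction on the number `n` of fractional coordinates, for the bipartite
(multi)graph with edge set `ι` in which `i` joins `l i` to `r i`. Requiring that integral coordinates
keep their value is what bounds the error at a constraint once it has been dropped. -/
theorem rounding_aux_s9 {ι A C : Type*} [Fintype ι] [Fintype A] [Fintype C] [DecidableEq ι]
    [DecidableEq A] [DecidableEq C] (l : ι → A) (r : ι → C) (n : ℕ) :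
    ∀ x : ι → ℝ, (∀ i, 0 ≤ x i ∧ x i ≤ 1) → #{i | 0 < x i ∧ x i < 1} = n →
    ∃ z : ι → ℝ, (∀ i, z i = 0 ∨ z i = 1) ∧ (∀ i, ¬ (0 < x i ∧ x i < 1) → z i = x i) ∧
      (∀ a, |∑ i with l i = a, (z i - x i)| < 1) ∧
      (∀ c, |∑ i with r i = c, (z i - x i)| < 2) := by
  induction n using Nat.strong_induction_on with
  | _ n ih =>
  intro x hx hn
  rcases Nat.eq_zero_or_pos n with rfl | hpos
  · rw [Finset.card_eq_zero] at hn
    have hnf : ∀ i, ¬ (0 < x i ∧ x i < 1) := by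
      intro i hi
      have : i ∈ (∅ : Finset ι) := by rw [← hn]; simpa using hi
      simp at this
    refine ⟨x, ?_, fun _ _ => rfl, by simp, by simp⟩
    intro i
    by_contra! h
    exact hnf i ⟨lt_of_le_of_ne (hx i).1 (Ne.symm h.1), lt_of_le_of_ne (hx i).2 h.2⟩
  set P : Finset ι := {i | 0 < x i ∧ x i < 1} with hP
  -- The active constraints: left vertices with at least two fractional entries, right vertices
  -- with at least three.
  let sA : Finset A := {a | 2 ≤ #{i ∈ P | l i = a}}
  let sC : Finset C := {c | 3 ≤ #{i ∈ P | r i = c}}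
  have hA : #sA * 2 ≤ #P := by
    rw [← smul_eq_mul]
    calc #sA • 2 ≤ ∑ a ∈ sA, #{i ∈ P | l i = a} :=
          Finset.card_nsmul_le_sum _ _ _ fun a ha => by simpa [sA] using ha
      _ ≤ ∑ a, #{i ∈ P | l i = a} := Finset.sum_le_sum_of_subset (Finset.subset_univ _)
      _ = #P := (Finset.card_eq_sum_card_fiberwise fun _ _ => by simp).symm
  have hC : #sC * 3 ≤ #P := by
    rw [← smul_eq_mul]
    calc #sC • 3 ≤ ∑ a ∈ sC, #{i ∈ P | r i = a} :=
          Finset.card_nsmul_le_sum _ _ _ fun a ha => by simpa [sC] using ha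
      _ ≤ ∑ a, #{i ∈ P | r i = a} := Finset.sum_le_sum_of_subset (Finset.subset_univ _)
      _ = #P := (Finset.card_eq_sum_card_fiberwise fun _ _ => by simp).symm
  let M : A ⊕ C → ι → ℝ := Sum.elim (fun a i => if l i = a then 1 else 0)
    (fun c i => if r i = c then 1 else 0)
  obtain ⟨k, hk0, hkP, hker⟩ := exists_kernel_vector P (sA.disjSum sC) M (by
    rw [Finset.card_disjSum]; omega)
  have hkP' : ∀ i, k i ≠ 0 → 0 < x i ∧ x i < 1 := fun i hi => by simpa [hP] using hkP i hi
  obtain ⟨t, ht, i₁, hi₁, hi₁'⟩ := exists_boundary_move x k hx hk0 hkP'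
  have hstay : ∀ i, ¬ (0 < x i ∧ x i < 1) → x i + t * k i = x i := by
    intro i hi
    have : k i = 0 := by
      by_contra h
      exact hi (hkP' i h)
    simp [this]
  obtain ⟨z, hz01, hzx, hzA, hzC⟩ := ih #{i | 0 < x i + t * k i ∧ x i + t * k i < 1} (by
    rw [← hn]
    apply Finset.card_lt_card
    rw [Finset.ssubset_iff_of_subset]
    · exact ⟨i₁, by simpa [hP] using hi₁, by simpa using hi₁'⟩
    · intro i hi
      by_contra h
      have h' : ¬ (0 < x i ∧ x i < 1) := by simpa [hP] using h
      have h2 := hstay i h'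
      simp only [mem_filter, mem_univ, true_and, h2] at hi
      exact h' hi) (fun i => x i + t * k i) ht rfl
  have hzx' : ∀ i, ¬ (0 < x i ∧ x i < 1) → z i = x i := fun i hi => by
    have := hzx i (by rw [hstay i hi]; exact hi)
    rw [this, hstay i hi]
  have hdiff : ∀ i, i ∈ P → |z i - x i| < 1 := by
    intro i hi
    have hi' : 0 < x i ∧ x i < 1 := by simpa [hP] using hi
    rcases hz01 i with h | h <;> rw [h, abs_lt] <;> constructor <;> linarith [hi'.1, hi'.2]
  -- A family of entries is off by less than the number of its fractional members.
  have hsmall : ∀ (Q : Finset ι) (m : ℕ), 0 < m → #{i ∈ P | i ∈ Q} ≤ m →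
      |∑ i ∈ Q, (z i - x i)| < m := by
    intro Q m hm hQ
    have h1 : ∑ i ∈ Q, (z i - x i) = ∑ i ∈ P with i ∈ Q, (z i - x i) := by
      symm
      apply Finset.sum_subset
      · intro i hi
        exact (Finset.mem_filter.1 hi).2
      · intro i hi hi'
        have : ¬ (0 < x i ∧ x i < 1) := by
          intro h
          exact hi' (by simp [hP, h, hi])
        rw [hzx' i this, sub_self]
    rw [h1]
    refine (Finset.abs_sum_le_sum_abs _ _).trans_lt ?_
    rcases Finset.eq_empty_or_nonempty {i ∈ P | i ∈ Q} with h0 | h0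
    · rw [h0]
      simpa using hm
    · calc ∑ i ∈ P with i ∈ Q, |z i - x i| < ∑ i ∈ P with i ∈ Q, (1 : ℝ) :=
            Finset.sum_lt_sum_of_nonempty h0 fun i hi => hdiff i (Finset.mem_filter.1 hi).1
        _ ≤ m := by simpa using hQ
  refine ⟨z, hz01, hzx', ?_, ?_⟩
  · intro a
    by_cases ha : a ∈ sA
    · have h1 := hker (Sum.inl a) (by simpa using ha)
      have h2 : ∑ i with l i = a, k i = 0 := by
        simpa [M, Finset.sum_filter] using h1
      have h3 := hzA a
      have h4 : ∑ i with l i = a, (z i - (x i + t * k i)) = ∑ i with l i = a, (z i - x i) := by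
        simp_rw [← sub_sub]
        rw [Finset.sum_sub_distrib, ← Finset.mul_sum, h2, mul_zero, sub_zero]
      rwa [h4] at h3
    · have := hsmall {i | l i = a} 1 one_pos (by
        have : ¬ 2 ≤ #{i ∈ P | l i = a} := by simpa [sA] using ha
        simp only [mem_filter, mem_univ, true_and]
        omega)
      simpa using this
  · intro a
    by_cases ha : a ∈ sC
    · have h1 := hker (Sum.inr a) (by simpa using ha)
      have h2 : ∑ i with r i = a, k i = 0 := by
        simpa [M, Finset.sum_filter] using h1
      have h3 := hzC a
      have h4 : ∑ i with r i = a, (z i - (x i + t * k i)) = ∑ i with r i = a, (z i - x i) := by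
        simp_rw [← sub_sub]
        rw [Finset.sum_sub_distrib, ← Finset.mul_sum, h2, mul_zero, sub_zero]
      rwa [h4] at h3
    · have := hsmall {i | r i = a} 2 two_pos (by
        have : ¬ 3 ≤ #{i ∈ P | r i = a} := by simpa [sC] using ha
        simp only [mem_filter, mem_univ, true_and]
        omega)
      simpa using this

open Finset in
/-- Rounding for a bipartite graph between two copies of `V`, given by its edge relation `R`:
`F` consists of the edges whose weight is rounded up to `1`. -/
theorem exists_rounding {V : Type*} [Fintype V] [DecidableEq V] (R : V → V → Prop)
    [DecidableRel R] (w : V → V → ℝ) (hw : ∀ a b, R a b → 0 ≤ w a b ∧ w a b ≤ 1) :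
    ∃ F : V → V → Prop, (∀ a b, F a b → R a b) ∧
      (∀ a, |(({b | F a b}.ncard : ℕ) : ℝ) - ∑ b with R a b, w a b| < 1) ∧
      (∀ b, |(({a | F a b}.ncard : ℕ) : ℝ) - ∑ a with R a b, w a b| < 2) := by
  classical
  let x : V × V → ℝ := fun e => if R e.1 e.2 then w e.1 e.2 else 0
  obtain ⟨z, h01, hzx, h1, h2⟩ := rounding_aux_s9 (Prod.fst : V × V → V) (Prod.snd : V × V → V) _ x
    (fun e => by
      simp only [x]
      split_ifs with h
      · exact hw _ _ h
      · simp) rfl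
  have hz : ∀ e, z e = if z e = 1 then 1 else 0 := fun e => by
    rcases h01 e with h | h <;> simp [h]
  refine ⟨fun a b => z (a, b) = 1, ?_, ?_, ?_⟩
  · intro a b hab
    by_contra h
    have := hzx (a, b) (by simp [x, h])
    rw [hab] at this
    simp [x, h] at this
  · intro a
    have := h1 a
    rw [Finset.sum_filter, Fintype.sum_prod_type, Finset.sum_eq_single a (by simp +contextual)
      (by simp)] at this
    simp only [if_true, Finset.sum_sub_distrib] at this
    rw [Finset.sum_congr rfl fun b _ => hz (a, b), Finset.sum_boole] at this
    rw [Set.ncard_eq_toFinset_card']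
    simpa [x, Finset.sum_filter] using this
  · intro b
    have := h2 b
    rw [Finset.sum_filter, Fintype.sum_prod_type_right, Finset.sum_eq_single b
      (by simp +contextual) (by simp)] at this
    simp only [if_true, Finset.sum_sub_distrib] at this
    rw [Finset.sum_congr rfl fun a _ => hz (a, b), Finset.sum_boole] at this
    rw [Set.ncard_eq_toFinset_card']
    simpa [x, Finset.sum_filter] using this

/-! ### The subgraphs, with constant error -/

open Finset in
/-- The combinatorial core, valid for an arbitrary vertex set `B` with complement in the role
of `S`: the degrees in `G'` at vertices of `B` are within a constant of `(2/δ) d(v)`. -/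
theorem exists_subgraphs_bounded_error {V : Type*} [Fintype V] (G : SimpleGraph V)
    [DecidableRel G.Adj] (δ : ℕ) (hδ : 3 ≤ δ) (hmin : ∀ v, δ ≤ G.degree v) (B S₀ S₁ : Set V)
    (hS₀ : ∀ v ∈ S₀, v ∉ B ∧ ∀ u, G.Adj v u → u ∈ B)
    (hS₁ : ∀ v ∈ S₁, v ∉ B ∧ (G.neighborSet v ∩ Bᶜ).ncard = 1) :
    ∃ G' H' : SimpleGraph V,
      G' ≤ G ∧ (∀ u v : V, u ∉ B → v ∉ B → ¬ G'.Adj u v) ∧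
      H' ≤ G' ∧ H' ≤ SimpleGraph.fromRel (fun u v => G.Adj u v ∧ u ∈ S₀ ∪ S₁ ∧ v ∈ B) ∧
      (∀ v ∈ S₀, (H'.neighborSet v).ncard = 2) ∧
      (∀ v ∈ S₁, (H'.neighborSet v).ncard = 1) ∧
      (∀ v ∈ B, 2 / (δ : ℝ) * G.degree v - 4 ≤ ((G'.neighborSet v).ncard : ℝ)) ∧
      (∀ v ∈ B, ((G'.neighborSet v).ncard : ℝ) ≤ 2 / (δ : ℝ) * G.degree v + 5) := by
  classical
  have hδ' : (3 : ℝ) ≤ δ := by exact_mod_cast hδ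
  have hp0 : 0 ≤ 2 / (δ : ℝ) := by positivity
  have hp1 : 2 / (δ : ℝ) ≤ 1 := by rw [div_le_one (by linarith)]; linarith
  let dB : V → ℕ := fun v => #{u | G.Adj v u ∧ u ∈ B}
  let dS : V → ℕ := fun v => #{u | G.Adj v u ∧ u ∉ B}
  have hdeg : ∀ v, G.degree v = dS v + dB v := by
    intro v
    rw [← G.card_neighborFinset_eq_degree, SimpleGraph.neighborFinset_eq_filter,
      ← Finset.card_filter_add_card_filter_not (fun u => u ∉ B)]
    simp [dS, dB, Finset.filter_filter]
  have hdS₀ : ∀ v ∈ S₀, dS v = 0 := by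
    intro v hv
    simp only [dS, Finset.card_eq_zero, Finset.filter_eq_empty_iff]
    intro u _ hu
    exact hu.2 ((hS₀ v hv).2 u hu.1)
  have hdS₁ : ∀ v ∈ S₁, dS v = 1 := by
    intro v hv
    rw [← (hS₁ v hv).2, Set.ncard_eq_toFinset_card']
    simp only [dS]
    congr 1
    ext u
    simp
  -- The required degree in `H'`, spread evenly over the edges to `B`.
  let t : V → ℝ := fun v => if v ∈ S₀ then 2 else 1
  have ht0 : ∀ v, 0 < t v := by
    intro v
    simp only [t]
    split_ifs <;> norm_num
  have ht : ∀ v ∈ S₀ ∪ S₁, 0 < (dB v : ℝ) ∧ t v / dB v ≤ 2 / δ := by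
    intro v hv
    have h1 := hdeg v
    have h2 := hmin v
    by_cases hv0 : v ∈ S₀
    · have h3 := hdS₀ v hv0
      have h4 : (δ : ℝ) ≤ dB v := by exact_mod_cast (by omega : δ ≤ dB v)
      simp only [t, hv0, if_true]
      refine ⟨by linarith, ?_⟩
      rw [div_le_div_iff₀ (by linarith) (by linarith)]
      linarith
    · have h3 := hdS₁ v (hv.resolve_left hv0)
      have h4 : (δ : ℝ) ≤ dB v + 1 := by exact_mod_cast (by omega : δ ≤ dB v + 1)
      simp only [t, hv0, if_false]
      refine ⟨by linarith, ?_⟩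
      rw [div_le_div_iff₀ (by linarith) (by linarith)]
      linarith
  obtain ⟨F, hFR, hFl, hFr⟩ := exists_rounding
    (fun u b => G.Adj u b ∧ u ∈ S₀ ∪ S₁ ∧ b ∈ B) (fun u _ => t u / dB u) (by
      rintro a b ⟨-, ha, -⟩
      have := ht a ha
      exact ⟨div_nonneg (ht0 a).le this.1.le, this.2.trans hp1⟩)
  have hSB : ∀ v ∈ S₀ ∪ S₁, v ∉ B := fun v hv => hv.elim (fun h => (hS₀ v h).1) fun h => (hS₁ v h).1
  have hFdeg : ∀ v ∈ S₀ ∪ S₁, |(({b | F v b}.ncard : ℕ) : ℝ) - t v| < 1 := by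
    intro v hv
    have h1 := hFl v
    have h2 : ∑ b with (G.Adj v b ∧ v ∈ S₀ ∪ S₁ ∧ b ∈ B), t v / dB v = t v := by
      rw [Finset.sum_const, nsmul_eq_mul]
      simp only [hv, true_and]
      exact mul_div_cancel₀ _ (ht v hv).1.ne'
    rwa [h2] at h1
  -- Orient the edges inside `B` along an arbitrary linear order.
  let e := Fintype.equivFin V
  obtain ⟨K, hKR, hKl, hKr⟩ := exists_rounding
    (fun a b => G.Adj a b ∧ a ∈ B ∧ b ∈ B ∧ e a < e b) (fun _ _ => 2 / (δ : ℝ))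
    (fun _ _ _ => ⟨hp0, hp1⟩)
  have hKdeg : ∀ v ∈ B, |((({b | K v b}.ncard : ℕ) : ℝ) + ({a | K a v}.ncard : ℕ))
      - 2 / δ * dB v| < 3 := by
    intro v hv
    have h1 := hKl v
    have h2 := hKr v
    rw [Finset.sum_const, nsmul_eq_mul] at h1 h2
    have h3 : dB v = #{b | G.Adj v b ∧ v ∈ B ∧ b ∈ B ∧ e v < e b}
        + #{a | G.Adj a v ∧ a ∈ B ∧ v ∈ B ∧ e a < e v} := by
      rw [← Finset.card_union_of_disjoint]
      · simp only [dB]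
        congr 1
        ext u
        simp only [mem_filter, mem_univ, true_and, mem_union, hv, G.adj_comm u v]
        constructor
        · rintro ⟨h, hu⟩
          have : e v ≠ e u := fun h' => h.ne (e.injective h')
          rcases lt_or_gt_of_ne this with h' | h' <;> tauto
        · tauto
      · rw [Finset.disjoint_filter]
        intro u _ h h'
        exact lt_asymm h.2.2.2 h'.2.2.2
    rw [h3]
    push_cast
    rw [abs_lt] at h1 h2 ⊢
    constructor <;> linarith [h1.1, h1.2, h2.1, h2.2]
  -- At each vertex of `B`, enlarge the `H'`-neighbourhood inside `S` to the right size.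
  have hT : ∀ v, ∃ T : Finset V, (∀ u, F u v → u ∈ T) ∧ (∀ u ∈ T, G.Adj v u ∧ u ∉ B) ∧
      2 / δ * (dS v : ℝ) - 1 ≤ #T ∧ (#T : ℝ) ≤ 2 / δ * (dS v : ℝ) + 2 := by
    intro v
    have hsub : ({u | F u v} : Finset V) ⊆
        ({u | G.Adj v u ∧ u ∉ B} : Finset V) := by
      intro u hu
      simp only [mem_filter, mem_univ, true_and] at hu ⊢
      have := hFR u v hu
      exact ⟨this.1.symm, hSB u this.2.1⟩
    have hpos : 0 ≤ 2 / (δ : ℝ) * dS v := by positivity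
    have hfl : ⌊2 / (δ : ℝ) * dS v⌋₊ ≤ dS v := by
      apply Nat.floor_le_of_le
      have : (0 : ℝ) ≤ dS v := by positivity
      nlinarith
    obtain ⟨T, hT1, hT2, hT3⟩ := Finset.exists_subsuperset_card_eq hsub
      (le_max_left _ ⌊2 / (δ : ℝ) * dS v⌋₊) (max_le (Finset.card_le_card hsub) hfl)
    refine ⟨T, fun u hu => hT1 (by simpa using hu), fun u hu => by simpa using hT2 hu, ?_, ?_⟩
    · have h1 := Nat.lt_floor_add_one (2 / (δ : ℝ) * dS v)
      have h2 : (⌊2 / (δ : ℝ) * dS v⌋₊ : ℝ) ≤ #T := by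
        rw [hT3]
        exact_mod_cast le_max_right _ _
      linarith
    · rw [hT3, Nat.cast_max]
      apply max_le
      · have h1 := hFr v
        rw [Set.ncard_eq_toFinset_card', Set.toFinset_ofPred] at h1
        have h2 : ∑ a with (G.Adj a v ∧ a ∈ S₀ ∪ S₁ ∧ v ∈ B), t a / dB a ≤ 2 / δ * dS v := by
          calc ∑ a with (G.Adj a v ∧ a ∈ S₀ ∪ S₁ ∧ v ∈ B), t a / dB a
              ≤ ∑ a with (G.Adj a v ∧ a ∈ S₀ ∪ S₁ ∧ v ∈ B), 2 / (δ : ℝ) := by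
                apply Finset.sum_le_sum
                intro a ha
                exact (ht a (Finset.mem_filter.1 ha).2.2.1).2
            _ ≤ ∑ a with (G.Adj v a ∧ a ∉ B), 2 / (δ : ℝ) := by
                apply Finset.sum_le_sum_of_subset_of_nonneg
                · intro a ha
                  simp only [mem_filter, mem_univ, true_and] at ha ⊢
                  exact ⟨ha.1.symm, hSB a ha.2.1⟩
                · intros
                  exact hp0
            _ = 2 / δ * dS v := by
                rw [Finset.sum_const, nsmul_eq_mul, mul_comm]
        linarith [(abs_lt.1 h1).2]
      · linarith [Nat.floor_le hpos]
  choose T hTF hTS hTl hTu using hT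
  let Q : V → V → Prop := fun u v => (v ∈ B ∧ u ∈ T v) ∨ K u v
  have hQG : ∀ u v, Q u v → G.Adj u v := by
    rintro u v (h | h)
    · exact (hTS v u h.2).1.symm
    · exact (hKR u v h).1
  have hnbr : ∀ v ∈ B, (((SimpleGraph.fromRel Q).neighborSet v).ncard : ℝ)
      = #(T v) + (({b | K v b}.ncard : ℕ) + ({a | K a v}.ncard : ℕ)) := by
    intro v hv
    have h1 : (SimpleGraph.fromRel Q).neighborSet v
        = (T v : Set V) ∪ ({b | K v b} ∪ {a | K a v}) := by
      ext u
      simp only [SimpleGraph.mem_neighborSet, SimpleGraph.fromRel_adj, Set.mem_union,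
        Set.mem_ofPred_eq, Finset.mem_coe]
      constructor
      · rintro ⟨-, (h | h) | (h | h)⟩
        · exact absurd hv (hTS u v h.2).2
        · exact Or.inr (Or.inl h)
        · exact Or.inl h.2
        · exact Or.inr (Or.inr h)
      · rintro (h | h | h)
        · exact ⟨(hTS v u h).1.ne, Or.inr (Or.inl ⟨hv, h⟩)⟩
        · exact ⟨(hKR _ _ h).1.ne, Or.inl (Or.inr h)⟩
        · exact ⟨(hKR _ _ h).1.ne', Or.inr (Or.inr h)⟩
    rw [h1, Set.ncard_union_eq, Set.ncard_union_eq, Set.ncard_coe_finset]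
    · push_cast
      rfl
    · rw [Set.disjoint_left]
      intro u h h'
      exact lt_asymm (hKR _ _ h).2.2.2 (hKR _ _ h').2.2.2
    · rw [Set.disjoint_left]
      rintro u h (h' | h')
      · exact (hTS v u h).2 (hKR _ _ h').2.2.1
      · exact (hTS v u h).2 (hKR _ _ h').2.1
  have hHnbr : ∀ v ∈ S₀ ∪ S₁, (SimpleGraph.fromRel F).neighborSet v = {b | F v b} := by
    intro v hv
    ext u
    simp only [SimpleGraph.mem_neighborSet, SimpleGraph.fromRel_adj, Set.mem_ofPred_eq]
    constructor
    · rintro ⟨-, h | h⟩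
      · exact h
      · exact absurd (hFR _ _ h).2.2 (hSB v hv)
    · intro h
      exact ⟨(hFR _ _ h).1.ne, Or.inl h⟩
  refine ⟨SimpleGraph.fromRel Q, SimpleGraph.fromRel F, ?_, ?_, ?_, ?_, ?_, ?_, ?_, ?_⟩
  · rintro u v ⟨-, h | h⟩
    · exact hQG _ _ h
    · exact (hQG _ _ h).symm
  · rintro u v hu hv ⟨-, (h | h) | (h | h)⟩
    · exact hv h.1
    · exact hu (hKR _ _ h).2.1
    · exact hu h.1
    · exact hu (hKR _ _ h).2.2.1
  · rintro u v ⟨hne, h | h⟩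
    · exact ⟨hne, Or.inl (Or.inl ⟨(hFR _ _ h).2.2, hTF _ _ h⟩)⟩
    · exact ⟨hne, Or.inr (Or.inl ⟨(hFR _ _ h).2.2, hTF _ _ h⟩)⟩
  · rintro u v ⟨hne, h | h⟩
    · exact ⟨hne, Or.inl (hFR _ _ h)⟩
    · exact ⟨hne, Or.inr (hFR _ _ h)⟩
  · intro v hv
    have h := hFdeg v (Or.inl hv)
    rw [hHnbr v (Or.inl hv)]
    simp only [t, hv, if_true] at h
    -- Two integers at distance less than one agree.
    have h' : |((({b | F v b}.ncard : ℕ) : ℤ) - 2 : ℤ)| < 1 := by exact_mod_cast h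
    rw [Int.abs_lt_one_iff] at h'
    omega
  · intro v hv
    have hv0 : v ∉ S₀ := fun h0 => by
      have h1 := hdS₀ v h0
      have h2 := hdS₁ v hv
      omega
    have h := hFdeg v (Or.inr hv)
    rw [hHnbr v (Or.inr hv)]
    simp only [t, hv0, if_false] at h
    have h' : |((({b | F v b}.ncard : ℕ) : ℤ) - 1 : ℤ)| < 1 := by exact_mod_cast h
    rw [Int.abs_lt_one_iff] at h'
    omega
  · intro v hv
    rw [hnbr v hv, hdeg v]
    push_cast
    have h1 := (abs_lt.1 (hKdeg v hv)).1
    linarith [hTl v]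
  · intro v hv
    rw [hnbr v hv, hdeg v]
    push_cast
    have h1 := (abs_lt.1 (hKdeg v hv)).2
    linarith [hTu v]

/-! ### Absorbing the constant error for large maximum degree -/

theorem claim_subgraph_G' (δ : ℕ) (hδ : 3 ≤ δ) :
    ∃ Δ₀ : ℕ, ∀ (V : Type) [Fintype V] (G : SimpleGraph V) [DecidableRel G.Adj] (Δ : ℕ),
      G.minDegree = δ → G.maxDegree = Δ → Δ₀ ≤ Δ →
      ∀ (S B S₀ S₁ : Set V) (H : SimpleGraph V),
        S = {v : V | (G.degree v : ℝ) ≤ (Δ : ℝ) ^ ((2 : ℝ) / 3) * Real.log Δ ^ 4} →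
        B = {v : V | (Δ : ℝ) ^ ((2 : ℝ) / 3) * Real.log Δ ^ 4 < (G.degree v : ℝ)} →
        S₀ = {v ∈ S | ∀ u : V, G.Adj v u → u ∉ S} →
        S₁ = {v ∈ S | (G.neighborSet v ∩ S).ncard = 1} →
        H = SimpleGraph.fromRel (fun u v => G.Adj u v ∧ u ∈ S₀ ∪ S₁ ∧ v ∈ B) →
        ∃ G' H' : SimpleGraph V,
          G' ≤ G ∧ (∀ u v : V, u ∈ S → v ∈ S → ¬ G'.Adj u v) ∧
          H' ≤ G' ∧ H' ≤ H ∧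
          (∀ v ∈ S₀, (H'.neighborSet v).ncard = 2) ∧
          (∀ v ∈ S₁, (H'.neighborSet v).ncard = 1) ∧
          (∀ v ∈ B, 2 / (δ : ℝ) * G.degree v - 2 * Real.sqrt Δ * Real.log Δ ≤
            ((G'.neighborSet v).ncard : ℝ)) ∧
          (∀ v ∈ B, ((G'.neighborSet v).ncard : ℝ) ≤
            (G.degree v : ℝ) * (2 / (δ : ℝ)) * (1 + (δ : ℝ) / (Δ : ℝ) ^ ((1 : ℝ) / 3))) := by
  refine ⟨1000, ?_⟩
  intro V _ G _ Δ hmin hmax hΔ S B S₀ S₁ H hS hB hS₀ hS₁ hH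
  have hSB : ∀ v, v ∈ S ↔ v ∉ B := by
    intro v
    rw [hS, hB]
    simp
  have hSc : S = Bᶜ := by
    ext v
    exact hSB v
  obtain ⟨G', H', h1, h2, h3, h4, h5, h6, h7, h8⟩ := exists_subgraphs_bounded_error G δ hδ
    (fun v => hmin ▸ G.minDegree_le_degree v) B S₀ S₁
    (by
      rw [hS₀]
      rintro v ⟨hv, hv'⟩
      refine ⟨(hSB v).1 hv, fun u hu => ?_⟩
      by_contra hb
      exact hv' u hu ((hSB u).2 hb))
    (by
      rw [hS₁]
      rintro v ⟨hv, hv'⟩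
      exact ⟨(hSB v).1 hv, hSc ▸ hv'⟩)
  have hΔ' : (1000 : ℝ) ≤ Δ := by exact_mod_cast hΔ
  have hΔ0 : (0 : ℝ) < Δ := by linarith
  have hlog : 1 ≤ Real.log Δ := by
    rw [Real.le_log_iff_exp_le hΔ0]
    linarith [Real.exp_one_lt_d9]
  have hsqrt : (2 : ℝ) ≤ Real.sqrt Δ := by
    apply Real.le_sqrt_of_sq_le
    linarith
  have hcbrt : (10 : ℝ) ≤ (Δ : ℝ) ^ ((1 : ℝ) / 3) := by
    have h : ((1000 : ℝ)) ^ ((1 : ℝ) / 3) = 10 := by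
      rw [show (1000 : ℝ) = 10 ^ (3 : ℝ) by norm_num, ← Real.rpow_mul (by norm_num)]
      norm_num
    rw [← h]
    exact Real.rpow_le_rpow (by norm_num) hΔ' (by norm_num)
  refine ⟨G', H', h1, ?_, h3, hH ▸ h4, h5, h6, ?_, ?_⟩
  · intro u v hu hv
    exact h2 u v ((hSB u).1 hu) ((hSB v).1 hv)
  · intro v hv
    have := h7 v hv
    nlinarith
  · intro v hv
    have h := h8 v hv
    have hd : (Δ : ℝ) ^ ((2 : ℝ) / 3) * Real.log Δ ^ 4 < (G.degree v : ℝ) := by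
      rw [hB] at hv
      exact hv
    have hsq : (Δ : ℝ) ^ ((2 : ℝ) / 3) = (Δ : ℝ) ^ ((1 : ℝ) / 3) * (Δ : ℝ) ^ ((1 : ℝ) / 3) := by
      rw [← Real.rpow_add hΔ0]
      norm_num
    set c := (Δ : ℝ) ^ ((1 : ℝ) / 3) with hc
    have hlog4 : 1 ≤ Real.log Δ ^ 4 := one_le_pow₀ hlog
    have hd' : c * c ≤ G.degree v := by
      rw [hsq] at hd
      nlinarith [mul_self_nonneg c]
    have hδ0 : (0 : ℝ) < δ := by exact_mod_cast (by omega : 0 < δ)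
    have hexp : (G.degree v : ℝ) * (2 / (δ : ℝ)) * (1 + (δ : ℝ) / c)
        = 2 / (δ : ℝ) * G.degree v + 2 * (G.degree v / c) := by
      field_simp
    have hdc : 10 ≤ (G.degree v : ℝ) / c := by
      rw [le_div_iff₀ (by linarith)]
      nlinarith
    rw [hexp]
    linarith
end
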